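/- For N ≥ 2 and 1 < q ≤ N/(N-1), every maximizer of E_q := sup over nonzero u in BV(ℝ^N) of ‖u‖_q^q / (‖u‖_1^{q-(q-1)N} ‖u‖_{TV}^{(q-1)N}) is of the form u = λ χ_B for some λ ∈ ℝ\{0} and some ball B ⊂ ℝ^N, and conversely every such function is a maximizer. -/

import Mathlib

open MeasureTheory Real Filter Topology

noncomputable section

abbrev Euc (N : ℕ) := EuclideanSpace ℝ (Fin N)

/-- The set of values `∫ u div ψ` over admissible test vector fields. -/
def TVSet (N : ℕ) (u : Euc N → ℝ) : Set ℝ :=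
  { r | ∃ ψ : Euc N → Euc N, ContDiff ℝ 1 ψ ∧ HasCompactSupport ψ ∧
      (∀ x, ‖ψ x‖ ≤ 1) ∧
      r = ∫ x, u x * (∑ i, fderiv ℝ (fun y => ψ y i) x (EuclideanSpace.single i 1)) }

/-- Total variation of `u`. -/
def tv (N : ℕ) (u : Euc N → ℝ) : ℝ := sSup (TVSet N u)

/-- `u` is a function of bounded variation on `ℝ^N`. -/
def MemBV (N : ℕ) (u : Euc N → ℝ) : Prop :=
  Integrable u ∧ BddAbove (TVSet N u)

/-- The `L¹` norm. -/
def nrm1 (N : ℕ) (u : Euc N → ℝ) : ℝ := (eLpNorm u 1 volume).toReal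

/-- The `L^q` norm, `q` a real exponent. -/
def nrmq (N : ℕ) (q : ℝ) (u : Euc N → ℝ) : ℝ :=
  (eLpNorm u (ENNReal.ofReal q) volume).toReal

/-- Surface area `ω_{N-1}` of the unit sphere in `ℝ^N`, as `N` times the
volume of the unit ball. -/
def omegaS (N : ℕ) : ℝ := N * (volume (Metric.ball (0 : Euc N) 1)).toReal

/-- The Gagliardo–Nirenberg ratio `‖u‖_q^q / (‖u‖_1^{q-(q-1)N} ‖u‖_{TV}^{(q-1)N})`. -/
def ratioQ (N : ℕ) (q : ℝ) (u : Euc N → ℝ) : ℝ :=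
  nrmq N q u ^ q / (nrm1 N u ^ (q - (q-1)*N) * tv N u ^ ((q-1)*(N:ℝ)))

/-- The best constant `E_q` on `BV(ℝ^N)`. -/
def EqSup (N : ℕ) (q : ℝ) : ℝ :=
  sSup { r | ∃ u : Euc N → ℝ, MemBV N u ∧ u ≠ 0 ∧ r = ratioQ N q u }

/-- divergence of a vector field -/
def dv (N : ℕ) (ψ : Euc N → Euc N) (x : Euc N) : ℝ :=
  ∑ i, fderiv ℝ (fun y => ψ y i) x (EuclideanSpace.single i 1)

/-- admissible test fields -/
def Adm (N : ℕ) (ψ : Euc N → Euc N) : Prop :=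
  ContDiff ℝ 1 ψ ∧ HasCompactSupport ψ ∧ ∀ x, ‖ψ x‖ ≤ 1

lemma coord_contDiff {N : ℕ} {ψ : Euc N → Euc N} (h : ContDiff ℝ 1 ψ) (i : Fin N) :
    ContDiff ℝ 1 (fun y => ψ y i) :=
  (contDiff_euclidean.1 h) i

lemma coord_compact {N : ℕ} {ψ : Euc N → Euc N} (h : HasCompactSupport ψ) (i : Fin N) :
    HasCompactSupport (fun y => ψ y i) :=
  h.comp_left (g := fun v : Euc N => v i) rfl

lemma dv_continuous {N : ℕ} {ψ : Euc N → Euc N} (h : ContDiff ℝ 1 ψ) : Continuous (dv N ψ) := by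
  unfold dv
  refine continuous_finsetSum _ fun i _ => ?_
  exact ((coord_contDiff h i).continuous_fderiv one_ne_zero).clm_apply continuous_const

lemma dv_hcs {N : ℕ} {ψ : Euc N → Euc N} (h : HasCompactSupport ψ) :
    HasCompactSupport (dv N ψ) := by
  refine HasCompactSupport.intro h fun x hx => ?_
  unfold dv
  refine Finset.sum_eq_zero fun i _ => ?_
  have : (fun y => ψ y i) =ᶠ[𝓝 x] fun _ => (0:ℝ) := by
    have h0 := notMem_tsupport_iff_eventuallyEq.1 hx
    filter_upwards [h0] with y hy
    simp [hy]
  rw [this.fderiv_eq]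
  simp

lemma dv_bdd {N : ℕ} {ψ : Euc N → Euc N} (h : ContDiff ℝ 1 ψ) (h' : HasCompactSupport ψ) :
    ∃ C, 0 ≤ C ∧ ∀ x, |dv N ψ x| ≤ C := by
  obtain ⟨C, hC⟩ := (dv_continuous h).bounded_above_of_compact_support (dv_hcs h')
  exact ⟨max C 0, le_max_right _ _, fun x => (hC x).trans (le_max_left _ _)⟩

lemma int_mul_dv {N : ℕ} {ψ : Euc N → Euc N} (h : ContDiff ℝ 1 ψ) (h' : HasCompactSupport ψ)
    {u : Euc N → ℝ} (hu : Integrable u) : Integrable (fun x => u x * dv N ψ x) := by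
  obtain ⟨C, hC, hb⟩ := dv_bdd h h'
  exact hu.mul_bdd (c := C) (dv_continuous h).aestronglyMeasurable (ae_of_all _ hb)

lemma tv_ge {N : ℕ} {u : Euc N → ℝ} (hu : MemBV N u) {ψ : Euc N → Euc N} (h : Adm N ψ) :
    ∫ x, u x * dv N ψ x ≤ tv N u :=
  le_csSup hu.2 ⟨ψ, h.1, h.2.1, h.2.2, rfl⟩

lemma adm_zero (N : ℕ) : Adm N (fun _ => 0) :=
  ⟨contDiff_const, HasCompactSupport.zero, by simp⟩

lemma adm_neg {N : ℕ} {ψ : Euc N → Euc N} (h : Adm N ψ) : Adm N (fun x => - ψ x) :=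
  ⟨h.1.neg, h.2.1.neg, fun x => by simpa using h.2.2 x⟩

lemma dv_zero (N : ℕ) : dv N (fun _ => 0) = 0 := by
  funext x
  simp [dv]

lemma tvset_nonempty (N : ℕ) (u : Euc N → ℝ) : (TVSet N u).Nonempty :=
  ⟨_, _, (adm_zero N).1, (adm_zero N).2.1, (adm_zero N).2.2, rfl⟩

lemma memBV_of {N : ℕ} {u : Euc N → ℝ} (hu : Integrable u) {B : ℝ}
    (h : ∀ ψ, Adm N ψ → ∫ x, u x * dv N ψ x ≤ B) : MemBV N u ∧ tv N u ≤ B := by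
  have : ∀ r ∈ TVSet N u, r ≤ B := by
    rintro r ⟨ψ, h1, h2, h3, rfl⟩
    exact h ψ ⟨h1, h2, h3⟩
  exact ⟨⟨hu, B, this⟩, csSup_le (tvset_nonempty N u) this⟩

lemma tv_nonneg {N : ℕ} {u : Euc N → ℝ} (hu : MemBV N u) : 0 ≤ tv N u := by
  have := tv_ge hu (adm_zero N)
  simpa [dv_zero] using this

lemma tv_pair {N : ℕ} {a b : Euc N → ℝ} (ha : Integrable a) (hb : Integrable b) {B : ℝ}
    (h : ∀ ψ φ, Adm N ψ → Adm N φ → (∫ x, a x * dv N ψ x) + (∫ x, b x * dv N φ x) ≤ B) :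
    MemBV N a ∧ MemBV N b ∧ tv N a + tv N b ≤ B := by
  have h1 : MemBV N a := (memBV_of ha (B := B) fun ψ hψ => by
    have := h ψ _ hψ (adm_zero N)
    simpa [dv_zero] using this).1
  have h2 : MemBV N b := (memBV_of hb (B := B) fun ψ hψ => by
    have := h _ ψ (adm_zero N) hψ
    simpa [dv_zero] using this).1
  refine ⟨h1, h2, ?_⟩
  have h3 : ∀ φ, Adm N φ → tv N a ≤ B - ∫ x, b x * dv N φ x := fun φ hφ =>
    (memBV_of ha fun ψ hψ => by linarith [h ψ φ hψ hφ]).2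
  have h4 : tv N b ≤ B - tv N a := (memBV_of hb fun ψ hψ => by linarith [h3 ψ hψ]).2
  linarith

lemma dv_add {N : ℕ} {ψ φ : Euc N → Euc N} (h : ContDiff ℝ 1 ψ) (h' : ContDiff ℝ 1 φ) (x : Euc N) :
    dv N (fun y => ψ y + φ y) x = dv N ψ x + dv N φ x := by
  unfold dv
  rw [← Finset.sum_add_distrib]
  refine Finset.sum_congr rfl fun i _ => ?_
  have h1 := ((coord_contDiff h i).differentiable one_ne_zero) x
  have h2 := ((coord_contDiff h' i).differentiable one_ne_zero) x
  have : (fun y => (ψ y + φ y) i) = fun y => ψ y i + φ y i := by funext y; simp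
  rw [this, fderiv_fun_add h1 h2]
  simp

lemma clm_sum_single {N : ℕ} (L : Euc N →L[ℝ] ℝ) (v : Euc N) :
    ∑ i, v i * L (EuclideanSpace.single i 1) = L v := by
  conv_rhs => rw [← (EuclideanSpace.basisFun (Fin N) ℝ).sum_repr v]
  simp

lemma dv_smul {N : ℕ} {ψ : Euc N → Euc N} {g : Euc N → ℝ} (h : ContDiff ℝ 1 ψ)
    (hg : ContDiff ℝ 1 g) (x : Euc N) :
    dv N (fun y => g y • ψ y) x = g x * dv N ψ x + fderiv ℝ g x (ψ x) := by
  rw [← clm_sum_single]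
  unfold dv
  rw [Finset.mul_sum, ← Finset.sum_add_distrib]
  refine Finset.sum_congr rfl fun i _ => ?_
  have h1 := ((coord_contDiff h i).differentiable one_ne_zero) x
  have h2 := (hg.differentiable one_ne_zero) x
  have : (fun y => (g y • ψ y) i) = fun y => g y * ψ y i := by funext y; simp
  rw [this, fderiv_fun_mul h2 h1]
  simp

lemma integral_dv {N : ℕ} {ψ : Euc N → Euc N} (h : ContDiff ℝ 1 ψ) (h' : HasCompactSupport ψ) :
    ∫ x, dv N ψ x = 0 := by
  unfold dv
  have hi : ∀ i, Integrable (fun x => fderiv ℝ (fun y => ψ y i) x (EuclideanSpace.single i 1)) := by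
    intro i
    refine Continuous.integrable_of_hasCompactSupport ?_ ?_
    · exact ((coord_contDiff h i).continuous_fderiv one_ne_zero).clm_apply continuous_const
    · exact (coord_compact h' i).fderiv_apply ℝ _
  rw [integral_finsetSum _ fun i _ => hi i]
  refine Finset.sum_eq_zero fun i _ => ?_
  have := integral_mul_fderiv_eq_neg_fderiv_mul_of_integrable (μ := (volume : Measure (Euc N)))
    (f := fun _ => (1:ℝ)) (g := fun y => ψ y i) (v := EuclideanSpace.single i 1)
    (by simp) (by simpa using hi i)
    (by simpa using ((coord_contDiff h i).continuous.integrable_of_hasCompactSupport (coord_compact h' i)))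
    (by simp) (fun x _ => ((coord_contDiff h i).differentiable one_ne_zero) x)
  simpa using this

lemma dv_ibp {N : ℕ} {ψ : Euc N → Euc N} {g : Euc N → ℝ} (h : ContDiff ℝ 1 ψ)
    (h' : HasCompactSupport ψ) (hg : ContDiff ℝ 1 g) :
    ∫ x, g x * dv N ψ x = - ∫ x, fderiv ℝ g x (ψ x) := by
  have h0 : ∫ x, dv N (fun y => g y • ψ y) x = 0 := by
    have hs : HasCompactSupport (fun y => g y • ψ y) := by
      refine HasCompactSupport.intro h' fun x hx => ?_
      simp [image_eq_zero_of_notMem_tsupport hx]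
    exact integral_dv (hg.smul h) hs
  rw [integral_congr_ae (ae_of_all _ (dv_smul h hg))] at h0
  have i1 : Integrable (fun x => g x * dv N ψ x) :=
    (hg.continuous.mul (dv_continuous h)).integrable_of_hasCompactSupport (dv_hcs h').mul_left
  have i2 : Integrable (fun x => fderiv ℝ g x (ψ x)) := by
    refine ((hg.continuous_fderiv one_ne_zero).clm_apply h.continuous).integrable_of_hasCompactSupport ?_
    refine HasCompactSupport.intro h' fun x hx => ?_
    rw [image_eq_zero_of_notMem_tsupport hx, map_zero]
  rw [integral_add i1 i2] at h0
  linarith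


lemma l1_conv {α : Type*} [MeasurableSpace α] {μ : Measure α} {f : ℕ → α → ℝ} {g : α → ℝ}
    (hf : ∀ n, Integrable (f n) μ) (hg : Integrable g μ)
    (hae : ∀ᵐ x ∂μ, Tendsto (fun n => f n x) atTop (𝓝 (g x)))
    (hle : ∀ n, ∫ x, |f n x| ∂μ ≤ ∫ x, |g x| ∂μ) :
    Tendsto (fun n => ∫ x, |f n x - g x| ∂μ) atTop (𝓝 0) := by
  have h1 : Tendsto (fun n => ∫ x, (|g x| - |f n x| + |f n x - g x|) ∂μ) atTop
      (𝓝 (∫ x, (0:ℝ) ∂μ)) := by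
    refine tendsto_integral_of_dominated_convergence (fun x => 2 * |g x|) ?_ ?_ ?_ ?_
    · intro n
      exact ((hg.abs.sub (hf n).abs).add ((hf n).sub hg).abs).aestronglyMeasurable
    · exact hg.abs.const_mul 2
    · intro n
      refine ae_of_all _ fun x => ?_
      rw [Real.norm_eq_abs, abs_le]
      have h1 := abs_sub_abs_le_abs_sub (f n x) (g x)
      have h2 := abs_sub (f n x) (g x)
      have h3 := abs_nonneg (g x)
      constructor <;> linarith
    · filter_upwards [hae] with x hx
      have h2 : Tendsto (fun n => |g x| - |f n x| + |f n x - g x|) atTop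
          (𝓝 (|g x| - |g x| + |g x - g x|)) :=
        (tendsto_const_nhds.sub hx.abs).add (hx.sub tendsto_const_nhds).abs
      simpa using h2
  simp only [integral_zero] at h1
  refine squeeze_zero (fun n => integral_nonneg fun x => abs_nonneg _) (fun n => ?_) h1
  have h3 : Integrable (fun x => |g x| - |f n x|) μ := hg.abs.sub (hf n).abs
  have h4 : Integrable (fun x => |f n x - g x|) μ := ((hf n).sub hg).abs
  rw [integral_add h3 h4, integral_sub hg.abs (hf n).abs]
  linarith [hle n]

/-- standard bump -/
def bmp (N n : ℕ) : ContDiffBump (0 : Euc N) :=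
  ⟨1 / ((n:ℝ) + 1), 2 / ((n:ℝ) + 1), by positivity, by gcongr; norm_num⟩

/-- mollification -/
def moll (N n : ℕ) (u : Euc N → ℝ) : Euc N → ℝ :=
  convolution ((bmp N n).normed volume) u (ContinuousLinearMap.lsmul ℝ ℝ) volume

lemma moll_ae {N : ℕ} {u : Euc N → ℝ} (hu : Integrable u) :
    ∀ᵐ x, Tendsto (fun n => moll N n u x) atTop (𝓝 (u x)) := by
  refine ContDiffBump.ae_convolution_tendsto_right_of_locallyIntegrable (K := 2) ?_ ?_
    hu.locallyIntegrable
  · have : Tendsto (fun n : ℕ => 2 * (1 / ((n:ℝ) + 1))) atTop (𝓝 (2 * 0)) :=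
      tendsto_one_div_add_atTop_nhds_zero_nat.const_mul 2
    simp only [mul_zero] at this
    refine this.congr fun n => ?_
    simp only [bmp]; ring
  · refine Eventually.of_forall fun n => ?_
    simp only [bmp]
    apply le_of_eq; ring

lemma bmp_int (N n : ℕ) : Integrable ((bmp N n).normed volume) :=
  ((bmp N n).contDiff_normed (n := 0)).continuous.integrable_of_hasCompactSupport
    (bmp N n).hasCompactSupport_normed

lemma moll_integrable {N : ℕ} (n : ℕ) {u : Euc N → ℝ} (hu : Integrable u) :
    Integrable (moll N n u) := (bmp_int N n).integrable_convolution _ hu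

lemma moll_contDiff {N : ℕ} (n : ℕ) {u : Euc N → ℝ} (hu : Integrable u) :
    ContDiff ℝ 1 (moll N n u) :=
  HasCompactSupport.contDiff_convolution_left (n := 1) _ (bmp N n).hasCompactSupport_normed
    (bmp N n).contDiff_normed hu.locallyIntegrable

lemma moll_norm {N : ℕ} (n : ℕ) {u : Euc N → ℝ} (hu : Integrable u) :
    ∫ x, |moll N n u x| ≤ ∫ x, |u x| := by
  have h1 : ∫ x, moll N n (fun x => |u x|) x = ∫ x, |u x| := by
    unfold moll
    rw [integral_convolution _ (bmp_int N n) hu.abs, (bmp N n).integral_normed]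
    simp
  rw [← h1]
  refine integral_mono (moll_integrable n hu).abs (moll_integrable n hu.abs) fun x => ?_
  unfold moll
  simp only [convolution_def, ContinuousLinearMap.lsmul_apply, smul_eq_mul]
  refine (abs_integral_le_integral_abs).trans (le_of_eq ?_)
  congr 1
  funext t
  rw [abs_mul, abs_of_nonneg ((bmp N n).nonneg_normed t)]

lemma moll_tendsto {N : ℕ} {u : Euc N → ℝ} (hu : Integrable u) :
    Tendsto (fun n => ∫ x, |moll N n u x - u x|) atTop (𝓝 0) :=
  l1_conv (fun n => moll_integrable n hu) hu (moll_ae hu) (fun n => moll_norm n hu)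

lemma dv_shift {N : ℕ} (ψ : Euc N → Euc N) (t x : Euc N) :
    dv N (fun y => ψ (y + t)) x = dv N ψ (x + t) := by
  unfold dv
  refine Finset.sum_congr rfl fun i _ => ?_
  rw [fderiv_comp_add_right (f := fun y => ψ y i)]

lemma moll_tv {N : ℕ} (n : ℕ) {u : Euc N → ℝ} (hu : MemBV N u) {ψ : Euc N → Euc N}
    (h : Adm N ψ) : ∫ x, moll N n u x * dv N ψ x ≤ tv N u := by
  set ρ := (bmp N n).normed (volume : Measure (Euc N)) with hρ
  obtain ⟨C, hC, hb⟩ := dv_bdd h.1 h.2.1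
  have hi := (bmp_int N n).convolution_integrand (ContinuousLinearMap.lsmul ℝ ℝ) hu.1
  have hi2 : Integrable (fun p : Euc N × Euc N => (ρ p.2 * u (p.1 - p.2)) * dv N ψ p.1)
      (volume.prod volume) := by
    refine Integrable.mul_bdd (c := C) hi ?_ (ae_of_all _ fun p => hb p.1)
    exact ((dv_continuous h.1).comp continuous_fst).aestronglyMeasurable
  have e1 : ∫ x, moll N n u x * dv N ψ x = ∫ x, ∫ t, (ρ t * u (x - t)) * dv N ψ x := by
    congr 1
    funext x
    rw [integral_mul_const]
    rfl
  rw [e1, integral_integral_swap hi2]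
  have e2 : ∀ t, ∫ x, (ρ t * u (x - t)) * dv N ψ x ≤ ρ t * tv N u := by
    intro t
    simp_rw [mul_assoc]
    rw [integral_const_mul]
    refine mul_le_mul_of_nonneg_left ?_ ((bmp N n).nonneg_normed t)
    have : ∫ x, u (x - t) * dv N ψ x = ∫ x, u x * dv N (fun y => ψ (y + t)) x := by
      rw [← integral_add_right_eq_self _ t]
      simp [dv_shift]
    rw [this]
    refine tv_ge hu ⟨h.1.comp (by fun_prop), ?_, fun x => h.2.2 _⟩
    exact h.2.1.comp_homeomorph (Homeomorph.addRight t)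
  have e3 : ∫ t, ρ t * tv N u = tv N u := by
    rw [integral_mul_const, (bmp N n).integral_normed, one_mul]
  rw [← e3]
  exact integral_mono hi2.integral_prod_right ((bmp_int N n).mul_const _) e2

lemma comp_integrable {α : Type*} [MeasurableSpace α] {μ : Measure α} {G : ℝ → ℝ}
    (hG : Continuous G) (hb : ∀ s t, |G s - G t| ≤ |s - t|) (h0 : G 0 = 0) {u : α → ℝ}
    (hu : Integrable u μ) : Integrable (fun x => G (u x)) μ := by
  refine hu.mono (hG.comp_aestronglyMeasurable hu.1) (ae_of_all _ fun x => ?_)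
  have := hb (u x) 0
  simpa [h0] using this

/-- chain rule inequality for pairs -/
lemma comp_pair {N : ℕ} {u : Euc N → ℝ} (hu : MemBV N u) {G H : ℝ → ℝ}
    (hG : ContDiff ℝ 2 G) (hH : ContDiff ℝ 2 H)
    (hd : ∀ s, |deriv G s| + |deriv H s| ≤ 1) (hG0 : G 0 = 0) (hH0 : H 0 = 0) :
    MemBV N (fun x => G (u x)) ∧ MemBV N (fun x => H (u x)) ∧
      tv N (fun x => G (u x)) + tv N (fun x => H (u x)) ≤ tv N u := by
  have lip : ∀ {F : ℝ → ℝ}, ContDiff ℝ 2 F → (∀ s, |deriv F s| ≤ 1) →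
      ∀ s t, |F s - F t| ≤ |s - t| := by
    intro F hF hF1 s t
    have := Convex.norm_image_sub_le_of_norm_deriv_le (f := F) (s := Set.univ) (C := 1) (x := t)
      (y := s) (fun x _ => (hF.differentiable two_ne_zero) x) (fun x _ => hF1 x) convex_univ
      (Set.mem_univ _) (Set.mem_univ _)
    simpa using this
  have lG := lip hG fun s => by linarith [hd s, abs_nonneg (deriv H s)]
  have lH := lip hH fun s => by linarith [hd s, abs_nonneg (deriv G s)]
  refine tv_pair (comp_integrable hG.continuous lG hG0 hu.1)
    (comp_integrable hH.continuous lH hH0 hu.1) fun ψ φ hψ hφ => ?_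
  have conv : ∀ {F : ℝ → ℝ} {ψ : Euc N → Euc N}, ContDiff ℝ 2 F →
      (∀ s t, |F s - F t| ≤ |s - t|) → F 0 = 0 → Adm N ψ →
      Tendsto (fun n => ∫ x, F (moll N n u x) * dv N ψ x) atTop
        (𝓝 (∫ x, F (u x) * dv N ψ x)) := by
    intro F ψ hF hl h0 hψ
    obtain ⟨C, hC, hb⟩ := dv_bdd hψ.1 hψ.2.1
    rw [tendsto_iff_norm_sub_tendsto_zero]
    have := (moll_tendsto hu.1).const_mul C
    rw [mul_zero] at this
    refine squeeze_zero (fun n => norm_nonneg _) (fun n => ?_) this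
    have i1 := int_mul_dv hψ.1 hψ.2.1 (comp_integrable hF.continuous hl h0 (moll_integrable n hu.1))
    have i2 := int_mul_dv hψ.1 hψ.2.1 (comp_integrable hF.continuous hl h0 hu.1)
    rw [← integral_sub i1 i2, ← integral_const_mul, Real.norm_eq_abs]
    refine (abs_integral_le_integral_abs).trans ?_
    refine integral_mono (i1.sub i2).abs (((moll_integrable n hu.1).sub hu.1).abs.const_mul C)
      fun x => ?_
    simp only
    rw [← sub_mul, abs_mul, mul_comm]
    exact mul_le_mul (hb x) (hl _ _) (abs_nonneg _) hC
  refine le_of_tendsto ((conv hG lG hG0 hψ).add (conv hH lH hH0 hφ)) (Eventually.of_forall fun n => ?_)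
  set v := moll N n u with hv
  have hvC : ContDiff ℝ 1 v := moll_contDiff n hu.1
  have dG : ContDiff ℝ 1 (deriv G) := hG.deriv' 
  have dH : ContDiff ℝ 1 (deriv H) := hH.deriv' 
  have gC : ContDiff ℝ 1 (fun x => G (v x)) := (hG.of_le one_le_two).comp hvC
  have hC : ContDiff ℝ 1 (fun x => H (v x)) := (hH.of_le one_le_two).comp hvC
  rw [dv_ibp hψ.1 hψ.2.1 gC, dv_ibp hφ.1 hφ.2.1 hC]
  set Ψ : Euc N → Euc N := fun x => deriv G (v x) • ψ x + deriv H (v x) • φ x with hΨ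
  have admΨ : Adm N Ψ := by
    refine ⟨((dG.comp hvC).smul hψ.1).add ((dH.comp hvC).smul hφ.1), ?_, fun x => ?_⟩
    · refine HasCompactSupport.intro (hψ.2.1.isCompact.union hφ.2.1.isCompact) fun x hx => ?_
      simp only [Set.mem_union, not_or] at hx
      simp [hΨ, image_eq_zero_of_notMem_tsupport hx.1, image_eq_zero_of_notMem_tsupport hx.2]
    · refine (norm_add_le _ _).trans ?_
      rw [norm_smul, norm_smul, Real.norm_eq_abs, Real.norm_eq_abs]
      refine le_trans ?_ (hd (v x))
      exact add_le_add (mul_le_of_le_one_right (abs_nonneg _) (hψ.2.2 x))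
        (mul_le_of_le_one_right (abs_nonneg _) (hφ.2.2 x))
  have key := moll_tv n hu admΨ
  rw [← hv, dv_ibp admΨ.1 admΨ.2.1 hvC] at key
  refine le_trans (le_of_eq ?_) key
  have fd : ∀ {F : ℝ → ℝ}, ContDiff ℝ 2 F → ∀ x w, fderiv ℝ (fun x => F (v x)) x w
      = deriv F (v x) * fderiv ℝ v x w := by
    intro F hF x w
    have h1 : HasDerivAt F (deriv F (v x)) (v x) :=
      ((hF.differentiable two_ne_zero) _).hasDerivAt
    have h2 : HasFDerivAt v (fderiv ℝ v x) x := ((hvC.differentiable one_ne_zero) x).hasFDerivAt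
    have h3 := h1.comp_hasFDerivAt x h2
    have h4 : fderiv ℝ (fun x => F (v x)) x = deriv F (v x) • fderiv ℝ v x := h3.fderiv
    rw [h4]; simp
  have ii : ∀ {g : Euc N → ℝ} {ψ : Euc N → Euc N}, ContDiff ℝ 1 g → Adm N ψ →
      Integrable (fun x => fderiv ℝ g x (ψ x)) := by
    intro g ψ hg hψ
    refine ((hg.continuous_fderiv one_ne_zero).clm_apply
      hψ.1.continuous).integrable_of_hasCompactSupport ?_
    refine HasCompactSupport.intro hψ.2.1 fun x hx => ?_
    rw [image_eq_zero_of_notMem_tsupport hx, map_zero]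
  rw [← neg_add, ← integral_add (ii gC hψ) (ii hC hφ)]
  congr 2
  funext x
  rw [fd hG, fd hH, hΨ, map_add, map_smul, map_smul]
  simp


/-- Wallis integral -/
def wal (k : ℕ) : ℝ := ∫ x in (0:ℝ)..π, sin x ^ k

lemma wal_pos (k : ℕ) : 0 < wal k := integral_sin_pow_pos k

lemma wal_rec (n : ℕ) : ((n:ℝ) + 1) * (wal n * wal (n+1)) = 2 * π := by
  induction n with
  | zero => simp [wal]; norm_num; ring
  | succ n ih =>
    have h : wal (n+2) = (n + 1) / (n + 2) * wal n := by
      unfold wal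
      rw [integral_sin_pow]
      simp
    rw [show n + 1 + 1 = n + 2 from rfl, h, ← ih]
    push_cast
    field_simp
    ring

/-- volume of the unit ball -/
def om (N : ℕ) : ℝ := (volume (Metric.ball (0 : Euc N) 1)).toReal

lemma om_eq (N : ℕ) : om N = √π ^ N / Gamma ((N:ℝ) / 2 + 1) := by
  unfold om
  rcases Nat.eq_zero_or_pos N with h | h
  · subst h
    have : Metric.ball (0 : Euc 0) 1 = Set.univ := by
      ext x; simp [Subsingleton.elim x 0]
    rw [this]
    simp [volume_euclideanSpace_eq_dirac]
  · have : Nonempty (Fin N) := ⟨⟨0, h⟩⟩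
    rw [EuclideanSpace.volume_ball]
    have hg : 0 ≤ √π ^ N / Gamma ((N:ℝ) / 2 + 1) :=
      div_nonneg (by positivity) (Gamma_pos_of_pos (by positivity)).le
    simp only [ENNReal.ofReal_one, one_pow, one_mul, Fintype.card_fin]
    exact ENNReal.toReal_ofReal hg

lemma om_prod (N : ℕ) : om N = ∏ k ∈ Finset.range N, wal (k+1) := by
  induction N using Nat.twoStepInduction with
  | zero => simp [om_eq]
  | one =>
    have h := Real.Gamma_add_one (s := 1/2) (by norm_num)
    rw [Real.Gamma_one_half_eq] at h
    rw [om_eq]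
    simp only [Nat.cast_one, h, Finset.range_one, Finset.prod_singleton, zero_add, wal]
    have : √π ≠ 0 := by positivity
    simp only [pow_one, integral_sin]
    field_simp
    norm_num
  | more n ih _ =>
    rw [Finset.prod_range_succ, Finset.prod_range_succ, ← ih, mul_assoc]
    have h := wal_rec (n+1)
    have h2 : wal (n+1) * wal (n+1+1) = 2 * π / (n + 2) := by
      rw [← h]; push_cast; field_simp; ring
    rw [h2, om_eq, om_eq]
    have h3 := Real.Gamma_add_one (s := (n:ℝ)/2 + 1) (by positivity)
    have h4 : (((n + 2 : ℕ) : ℝ) / 2 + 1) = (n:ℝ)/2 + 1 + 1 := by push_cast; ring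
    rw [h4, h3, pow_add, Real.sq_sqrt pi_pos.le]
    have : Gamma ((n:ℝ)/2+1) ≠ 0 := (Gamma_pos_of_pos (by positivity)).ne'
    field_simp

lemma om_pos (N : ℕ) : 0 < om N := by
  rw [om_prod]; exact Finset.prod_pos fun k _ => wal_pos _

/-- normalized angular distribution function -/
def angH (k : ℕ) (θ : ℝ) : ℝ := (∫ x in (0:ℝ)..θ, sin x ^ k) / wal k

lemma angH_hasDeriv (k : ℕ) (θ : ℝ) : HasDerivAt (angH k) (sin θ ^ k / wal k) θ := by
  unfold angH
  refine HasDerivAt.div_const ?_ _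
  have hc : Continuous fun x : ℝ => sin x ^ k := by fun_prop
  exact intervalIntegral.integral_hasDerivAt_right (hc.intervalIntegrable _ _)
    (hc.stronglyMeasurableAtFilter _ _) hc.continuousAt

lemma angH_cont (k : ℕ) : Continuous (angH k) :=
  continuous_iff_continuousAt.2 fun θ => (angH_hasDeriv k θ).continuousAt

lemma angH_zero (k : ℕ) : angH k 0 = 0 := by simp [angH]

lemma angH_pi (k : ℕ) : angH k π = 1 := by
  unfold angH
  exact div_self (wal_pos k).ne'

lemma angH_mono (k : ℕ) : StrictMonoOn (angH k) (Set.Icc 0 π) := by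
  refine strictMonoOn_of_deriv_pos (convex_Icc _ _) (angH_cont k).continuousOn fun x hx => ?_
  rw [interior_Icc] at hx
  rw [(angH_hasDeriv k x).deriv]
  exact div_pos (pow_pos (sin_pos_of_pos_of_lt_pi hx.1 hx.2) _) (wal_pos k)

lemma ang_exists (k : ℕ) (y : Set.Icc (0:ℝ) 1) : ∃ θ : Set.Icc 0 π, angH k θ = y := by
  have := intermediate_value_Icc (pi_pos.le) (angH_cont k).continuousOn
  rw [angH_zero, angH_pi] at this
  obtain ⟨θ, hθ, h⟩ := this y.2
  exact ⟨⟨θ, hθ⟩, h⟩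

/-- inverse of `angH` -/
def ang (k : ℕ) (y : ℝ) : ℝ :=
  (ang_exists k (Set.projIcc 0 1 zero_le_one y)).choose

lemma ang_mem (k : ℕ) (y : ℝ) : ang k y ∈ Set.Icc 0 π :=
  (ang_exists k (Set.projIcc 0 1 zero_le_one y)).choose.2

lemma angH_ang {k : ℕ} {y : ℝ} (hy : y ∈ Set.Icc (0:ℝ) 1) : angH k (ang k y) = y := by
  have := (ang_exists k (Set.projIcc 0 1 zero_le_one y)).choose_spec
  refine this.trans ?_
  rw [Set.projIcc_of_mem _ hy]

lemma ang_continuous (k : ℕ) : Continuous (ang k) := by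
  have hf : Topology.IsClosedEmbedding (fun θ : Set.Icc (0:ℝ) π => angH k θ) := by
    refine Continuous.isClosedEmbedding ((angH_cont k).comp continuous_subtype_val) ?_
    intro a b h
    exact Subtype.ext ((angH_mono k).injOn a.2 b.2 h)
  let a : ℝ → Set.Icc (0:ℝ) π := fun y =>
    (ang_exists k (Set.projIcc 0 1 zero_le_one y)).choose
  have ha : Continuous a := by
    rw [hf.isInducing.continuous_iff]
    have : (fun θ : Set.Icc (0:ℝ) π => angH k θ) ∘ a
        = fun y => ((Set.projIcc (0:ℝ) 1 zero_le_one y : Set.Icc (0:ℝ) 1) : ℝ) := by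
      funext y
      exact (ang_exists k (Set.projIcc 0 1 zero_le_one y)).choose_spec
    rw [this]
    exact continuous_subtype_val.comp continuous_projIcc
  exact continuous_subtype_val.comp ha

lemma ang_mem_Ioo {k : ℕ} {y : ℝ} (hy : y ∈ Set.Ioo (0:ℝ) 1) : ang k y ∈ Set.Ioo 0 π := by
  have h1 := ang_mem k y
  have h2 := angH_ang (k := k) (Set.Ioo_subset_Icc_self hy)
  refine ⟨lt_of_le_of_ne h1.1 ?_, lt_of_le_of_ne h1.2 ?_⟩
  · intro h
    rw [← h, angH_zero] at h2
    exact hy.1.ne h2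
  · intro h
    rw [h, angH_pi] at h2
    exact hy.2.ne h2.symm

lemma sin_ang_pos {k : ℕ} {y : ℝ} (hy : y ∈ Set.Ioo (0:ℝ) 1) : 0 < sin (ang k y) :=
  sin_pos_of_pos_of_lt_pi (ang_mem_Ioo hy).1 (ang_mem_Ioo hy).2

lemma ang_hasDeriv {k : ℕ} {y : ℝ} (hy : y ∈ Set.Ioo (0:ℝ) 1) :
    HasDerivAt (ang k) (wal k / sin (ang k y) ^ k) y := by
  have h := HasDerivAt.of_local_left_inverse (ang_continuous k).continuousAt
    (angH_hasDeriv k (ang k y))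
    (div_pos (pow_pos (sin_ang_pos hy) _) (wal_pos k)).ne'
    (by
      filter_upwards [isOpen_Ioo.mem_nhds hy] with z hz
      exact angH_ang (Set.Ioo_subset_Icc_self hz))
  rwa [inv_div] at h

lemma ang_contDiffAt {k : ℕ} {y : ℝ} (hy : y ∈ Set.Ioo (0:ℝ) 1) : ContDiffAt ℝ 1 (ang k) y := by
  have : ContDiffOn ℝ 1 (ang k) (Set.Ioo 0 1) := by
    rw [show (1 : WithTop ℕ∞) = 0 + 1 from rfl, contDiffOn_succ_iff_deriv_of_isOpen isOpen_Ioo]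
    refine ⟨fun z hz => (ang_hasDeriv hz).differentiableAt.differentiableWithinAt, by simp, ?_⟩
    rw [contDiffOn_zero]
    have h : ContinuousOn (fun z => wal k / sin (ang k z) ^ k) (Set.Ioo 0 1) := by
      refine continuousOn_const.div ?_ fun z hz => (pow_pos (sin_ang_pos hz) _).ne'
      exact ((continuous_sin.comp (ang_continuous k)).pow k).continuousOn
    exact h.congr fun z hz => (ang_hasDeriv hz).deriv
  exact this.contDiffAt (isOpen_Ioo.mem_nhds hy)


/-- product over initial coordinates -/
def pf {N : ℕ} (g : Fin N → ℝ) (n : ℕ) : ℝ := ∏ l ∈ Finset.univ.filter (fun l : Fin N => l.val < n), g l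

lemma pf_zero {N : ℕ} (g : Fin N → ℝ) : pf g 0 = 1 := by simp [pf]

lemma pf_succ {N : ℕ} (g : Fin N → ℝ) (j : Fin N) : pf g (j.val + 1) = pf g j.val * g j := by
  unfold pf
  have : Finset.univ.filter (fun l : Fin N => l.val < j.val + 1)
      = insert j (Finset.univ.filter (fun l : Fin N => l.val < j.val)) := by
    ext l
    simp only [Finset.mem_filter, Finset.mem_univ, true_and, Finset.mem_insert, Fin.ext_iff]
    omega
  rw [this, Finset.prod_insert (by simp), mul_comm]

lemma pf_top {N : ℕ} (g : Fin N → ℝ) : pf g N = ∏ l, g l := by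
  unfold pf
  congr 1
  ext l
  simp

lemma pf_congr {N : ℕ} {g h : Fin N → ℝ} {n : ℕ} (H : ∀ l : Fin N, l.val < n → g l = h l) :
    pf g n = pf h n := by
  unfold pf
  refine Finset.prod_congr rfl fun l hl => H l ?_
  simpa using hl

lemma pf_pos {N : ℕ} {g : Fin N → ℝ} (hg : ∀ l, 0 < g l) (n : ℕ) : 0 < pf g n :=
  Finset.prod_pos fun l _ => hg l

lemma pf_double {N : ℕ} (s : Fin N → ℝ) : ∏ j : Fin N, pf s j.val = ∏ l : Fin N, s l ^ (N - 1 - l.val) := by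
  unfold pf
  simp_rw [Finset.prod_filter]
  rw [Finset.prod_comm]
  refine Finset.prod_congr rfl fun l _ => ?_
  rw [← Finset.prod_filter, Finset.prod_const]
  congr 1
  have : (Finset.univ.filter fun x : Fin N => l.val < x.val) = Finset.Ioi l := by
    ext x; simp
  rw [this, Fin.card_Ioi]

lemma sphere_sum {N : ℕ} (c s : Fin N → ℝ) (h : ∀ j, c j ^ 2 + s j ^ 2 = 1) :
    ∑ j, (- c j * pf s j.val) ^ 2 ≤ 1 := by
  have h1 : ∀ j : Fin N, (- c j * pf s j.val) ^ 2
      = (fun n => pf s n ^ 2) j.val - (fun n => pf s n ^ 2) (j.val + 1) := by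
    intro j
    simp only [pf_succ]
    have : c j ^ 2 = 1 - s j ^ 2 := by linarith [h j]
    rw [mul_pow, neg_sq, this]
    ring
  simp_rw [h1]
  rw [Fin.sum_univ_eq_sum_range (fun n => (fun n => pf s n ^ 2) n - (fun n => pf s n ^ 2) (n + 1)),
    Finset.sum_range_sub']
  simp only [pf_zero]
  nlinarith [sq_nonneg (pf s N)]

/-- Finite mixtures of product densities -/
structure Mix (N : ℕ) where
  ι : Type
  fin : Fintype ι
  a : ι → ℝ
  P : ι → Fin N → ℝ → ℝ
  ha : ∀ i, 0 ≤ a i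
  hP : ∀ i j, ContDiff ℝ 2 (P i j)
  hp : ∀ i j x, 0 < deriv (P i j) x
  h0 : ∀ i j, Tendsto (P i j) atBot (𝓝 0)
  h1 : ∀ i j, Tendsto (P i j) atTop (𝓝 1)

attribute [instance] Mix.fin

namespace Mix

variable {N : ℕ} (m : Mix N)

/-- density -/
def dens (x : Euc N) : ℝ := ∑ i, m.a i * ∏ j, deriv (m.P i j) (x j)

/-- total mass -/
def mass : ℝ := ∑ i, m.a i

/-- partial densities -/
def S (n : ℕ) (x : Euc N) : ℝ := ∑ i, m.a i * pf (fun l => deriv (m.P i l) (x l)) n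

/-- conditional distribution functions -/
def F (j : Fin N) (x : Euc N) : ℝ :=
  (∑ i, m.a i * pf (fun l => deriv (m.P i l) (x l)) j.val * m.P i j (x j)) / m.S j.val x

/-- angles -/
def th (j : Fin N) (x : Euc N) : ℝ := ang (N - j.val) (m.F j x)

/-- Knothe map -/
def T (x : Euc N) : Euc N :=
  WithLp.toLp 2 fun j => - cos (m.th j x) * pf (fun l => sin (m.th l x)) j.val

/-- diagonal derivatives -/
def d (j : Fin N) (x : Euc N) : ℝ :=
  sin (m.th j x) * (wal (N - j.val) / sin (m.th j x) ^ (N - j.val) *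
    (m.S (j.val + 1) x / m.S j.val x)) * pf (fun l => sin (m.th l x)) j.val

lemma P_mono (i : m.ι) (j : Fin N) : StrictMono (m.P i j) :=
  strictMono_of_deriv_pos (m.hp i j)

lemma P_mem (i : m.ι) (j : Fin N) (x : ℝ) : m.P i j x ∈ Set.Ioo (0:ℝ) 1 := by
  constructor
  · have h1 : m.P i j (x - 1) < m.P i j x := m.P_mono i j (by linarith)
    have h2 : 0 ≤ m.P i j (x - 1) := (m.P_mono i j).monotone.le_of_tendsto (m.h0 i j) _
    linarith
  · have h1 : m.P i j x < m.P i j (x + 1) := m.P_mono i j (by linarith)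
    have h2 : m.P i j (x + 1) ≤ 1 := (m.P_mono i j).monotone.ge_of_tendsto (m.h1 i j) _
    linarith

lemma exists_pos (hm : m.mass = 1) : ∃ i, 0 < m.a i := by
  by_contra! h
  have : m.mass ≤ 0 := Finset.sum_nonpos fun i _ => h i
  linarith

lemma wsum_pos (hm : m.mass = 1) {b : m.ι → ℝ} (hb : ∀ i, 0 < b i) : 0 < ∑ i, m.a i * b i := by
  obtain ⟨i, hi⟩ := m.exists_pos hm
  exact Finset.sum_pos' (fun i _ => mul_nonneg (m.ha i) (hb i).le)
    ⟨i, Finset.mem_univ _, mul_pos hi (hb i)⟩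

lemma S_pos (hm : m.mass = 1) (n : ℕ) (x : Euc N) : 0 < m.S n x :=
  m.wsum_pos hm fun i => pf_pos (fun l => m.hp i l _) n

lemma S_zero (x : Euc N) : m.S 0 x = m.mass := by simp [S, pf_zero, mass]

lemma S_top (x : Euc N) : m.S N x = m.dens x := by simp [S, pf_top, dens]

lemma F_mem (hm : m.mass = 1) (j : Fin N) (x : Euc N) : m.F j x ∈ Set.Ioo (0:ℝ) 1 := by
  have hS := m.S_pos hm j.val x
  have hpf : ∀ i, 0 < pf (fun l => deriv (m.P i l) (x l)) j.val := fun i =>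
    pf_pos (fun l => m.hp i l _) _
  constructor
  · refine div_pos ?_ hS
    simp_rw [mul_assoc]
    exact m.wsum_pos hm fun i => mul_pos (hpf i) (m.P_mem i j _).1
  · unfold F
    rw [div_lt_one hS]
    unfold S
    rw [← sub_pos, ← Finset.sum_sub_distrib]
    have : ∀ i, m.a i * pf (fun l => deriv (m.P i l) (x l)) j.val -
        m.a i * pf (fun l => deriv (m.P i l) (x l)) j.val * m.P i j (x j)
        = m.a i * (pf (fun l => deriv (m.P i l) (x l)) j.val * (1 - m.P i j (x j))) := by
      intro i; ring
    simp_rw [this]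
    exact m.wsum_pos hm fun i => mul_pos (hpf i) (by linarith [(m.P_mem i j (x j)).2])

lemma coordC (j : Fin N) : ContDiff ℝ 1 (fun x : Euc N => x j) := by fun_prop

lemma pderivC (i : m.ι) (l : Fin N) : ContDiff ℝ 1 (fun x : Euc N => deriv (m.P i l) (x l)) :=
  ((m.hP i l).deriv').comp (coordC l)

lemma pfC {f : Fin N → Euc N → ℝ} (hf : ∀ l, ContDiff ℝ 1 (f l)) (n : ℕ) :
    ContDiff ℝ 1 (fun x => pf (fun l => f l x) n) := by
  unfold pf
  exact contDiff_prod fun l _ => hf l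

lemma S_C (n : ℕ) : ContDiff ℝ 1 (m.S n) := by
  unfold S
  exact ContDiff.sum fun i _ => contDiff_const.mul (pfC (fun l => m.pderivC i l) n)

lemma F_C (hm : m.mass = 1) (j : Fin N) : ContDiff ℝ 1 (m.F j) := by
  unfold F
  refine ContDiff.div ?_ (m.S_C _) fun x => (m.S_pos hm _ x).ne'
  exact ContDiff.sum fun i _ => (contDiff_const.mul (pfC (fun l => m.pderivC i l) _)).mul
    (((m.hP i j).of_le one_le_two).comp (coordC j))

lemma th_C (hm : m.mass = 1) (j : Fin N) : ContDiff ℝ 1 (m.th j) := by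
  rw [contDiff_iff_contDiffAt]
  intro x
  exact (ang_contDiffAt (m.F_mem hm j x)).comp x (m.F_C hm j).contDiffAt

lemma T_apply (x : Euc N) (j : Fin N) :
    m.T x j = - cos (m.th j x) * pf (fun l => sin (m.th l x)) j.val := rfl

lemma T_C (hm : m.mass = 1) : ContDiff ℝ 1 m.T := by
  rw [contDiff_euclidean]
  intro j
  simp only [T_apply]
  exact ((contDiff_cos.comp (m.th_C hm j)).neg).mul
    (pfC (fun l => contDiff_sin.comp (m.th_C hm l)) _)

lemma T_norm (x : Euc N) : ‖m.T x‖ ≤ 1 := by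
  rw [EuclideanSpace.norm_eq, Real.sqrt_le_one]
  have := sphere_sum (fun j => cos (m.th j x)) (fun j => sin (m.th j x)) fun j => by
    simp
  simpa [T_apply, mul_pow] using this

lemma sin_pos (hm : m.mass = 1) (j : Fin N) (x : Euc N) : 0 < sin (m.th j x) :=
  sin_ang_pos (m.F_mem hm j x)

lemma d_pos (hm : m.mass = 1) (j : Fin N) (x : Euc N) : 0 < m.d j x := by
  unfold d
  have h1 := m.sin_pos hm j x
  have h2 := m.S_pos hm j.val x
  have h3 := m.S_pos hm (j.val + 1) x
  have h4 := wal_pos (N - j.val)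
  have h5 := pf_pos (fun l => m.sin_pos hm l x) j.val
  positivity

lemma d_prod (hm : m.mass = 1) (x : Euc N) : ∏ j, m.d j x = om N * m.dens x := by
  have e : ∀ j : Fin N, m.d j x = wal (N - j.val) * (m.S (j.val + 1) x / m.S j.val x) *
      (pf (fun l => sin (m.th l x)) j.val / sin (m.th j x) ^ (N - 1 - j.val)) := by
    intro j
    unfold d
    have h1 := (m.sin_pos hm j x).ne'
    have : N - j.val = (N - 1 - j.val) + 1 := by have := j.2; omega
    nth_rewrite 2 [this]
    rw [pow_succ]
    field_simp
  simp_rw [e]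
  have e2 : ∏ j : Fin N, (pf (fun l => sin (m.th l x)) j.val / sin (m.th j x) ^ (N - 1 - j.val))
      = 1 := by
    rw [Finset.prod_div_distrib, pf_double, div_self]
    exact Finset.prod_ne_zero_iff.2 fun l _ => pow_ne_zero _ (m.sin_pos hm l x).ne'
  rw [Finset.prod_mul_distrib, Finset.prod_mul_distrib, e2, mul_one]
  · congr 1
    · rw [om_prod, ← Fin.prod_univ_eq_prod_range (fun k => wal (k+1))]
      rw [← Equiv.prod_comp Fin.revPerm]
      refine Finset.prod_congr rfl fun j _ => ?_
      congr 1
      simp only [Fin.revPerm_apply, Fin.val_rev]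
      have := j.2
      omega
    · have tele : ∀ n, ∏ k ∈ Finset.range n, (m.S (k+1) x / m.S k x) = m.S n x / m.S 0 x := by
        intro n
        induction n with
        | zero => simp [(m.S_pos hm 0 x).ne']
        | succ n ih =>
          rw [Finset.prod_range_succ, ih]
          have := (m.S_pos hm n x).ne'
          field_simp
      rw [Fin.prod_univ_eq_prod_range (fun n => m.S (n+1) x / m.S n x), tele, S_top, S_zero, hm,
        div_one]

lemma shift_ne (x : Euc N) (t : ℝ) {j l : Fin N} (h : l.val < j.val) :
    (x + t • EuclideanSpace.single j (1:ℝ)) l = x l := by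
  have : l ≠ j := by intro h'; subst h'; omega
  simp [this]

lemma shift_eq (x : Euc N) (t : ℝ) (j : Fin N) :
    (x + t • EuclideanSpace.single j (1:ℝ)) j = x j + t := by simp

lemma S_shift (x : Euc N) (t : ℝ) {j : Fin N} {n : ℕ} (hn : n ≤ j.val) :
    m.S n (x + t • EuclideanSpace.single j (1:ℝ)) = m.S n x := by
  unfold S
  refine Finset.sum_congr rfl fun i _ => ?_
  congr 1
  refine pf_congr fun l hl => ?_
  rw [shift_ne x t (lt_of_lt_of_le hl hn)]

lemma F_shift (x : Euc N) (t : ℝ) {j l : Fin N} (hl : l.val < j.val) :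
    m.F l (x + t • EuclideanSpace.single j (1:ℝ)) = m.F l x := by
  unfold F
  rw [m.S_shift x t hl.le, shift_ne x t hl]
  congr 1
  refine Finset.sum_congr rfl fun i _ => ?_
  congr 2
  refine pf_congr fun l' hl' => ?_
  rw [shift_ne x t (hl'.trans hl)]

lemma F_shift_self (x : Euc N) (t : ℝ) (j : Fin N) :
    m.F j (x + t • EuclideanSpace.single j (1:ℝ)) =
      (∑ i, m.a i * pf (fun l => deriv (m.P i l) (x l)) j.val * m.P i j (x j + t)) / m.S j.val x := by
  unfold F
  rw [m.S_shift x t le_rfl, shift_eq x t]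
  congr 1
  refine Finset.sum_congr rfl fun i _ => ?_
  congr 2
  refine pf_congr fun l' hl' => ?_
  rw [shift_ne x t hl']

lemma T_partial (hm : m.mass = 1) (j : Fin N) (x : Euc N) :
    fderiv ℝ (fun y => m.T y j) x (EuclideanSpace.single j 1) = m.d j x := by
  have hd : DifferentiableAt ℝ (fun y => m.T y j) x :=
    (coord_contDiff (m.T_C hm) j).differentiable one_ne_zero x
  have h1 := hd.hasFDerivAt.hasLineDerivAt (EuclideanSpace.single j 1)
  refine h1.unique ?_
  unfold HasLineDerivAt
  have e : (fun t : ℝ => m.T (x + t • EuclideanSpace.single j (1:ℝ)) j)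
      = fun t => - cos (ang (N - j.val)
        ((∑ i, m.a i * pf (fun l => deriv (m.P i l) (x l)) j.val * m.P i j (x j + t)) / m.S j.val x))
        * pf (fun l => sin (m.th l x)) j.val := by
    funext t
    rw [T_apply]
    congr 1
    · unfold th
      rw [F_shift_self]
    · refine pf_congr fun l hl => ?_
      unfold th
      rw [m.F_shift x t hl]
  rw [e]
  have hP : ∀ i, HasDerivAt (fun t : ℝ => m.P i j (x j + t)) (deriv (m.P i j) (x j)) 0 := by
    intro i
    have h2 : HasDerivAt (m.P i j) (deriv (m.P i j) (x j + 0)) (x j + 0) :=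
      (((m.hP i j).differentiable two_ne_zero) _).hasDerivAt
    have h3 := h2.comp_const_add (x j) 0
    simpa using h3
  have hS : HasDerivAt (fun t : ℝ => (∑ i, m.a i * pf (fun l => deriv (m.P i l) (x l)) j.val *
      m.P i j (x j + t)) / m.S j.val x) (m.S (j.val+1) x / m.S j.val x) 0 := by
    refine HasDerivAt.div_const ?_ _
    have : m.S (j.val+1) x = ∑ i, m.a i * pf (fun l => deriv (m.P i l) (x l)) j.val *
        deriv (m.P i j) (x j) := by
      unfold S
      refine Finset.sum_congr rfl fun i _ => ?_
      rw [pf_succ, mul_assoc]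
    rw [this]
    exact HasDerivAt.fun_sum fun i _ => (hP i).const_mul _
  have e0 : (∑ i, m.a i * pf (fun l => deriv (m.P i l) (x l)) j.val *
      m.P i j (x j + 0)) / m.S j.val x = m.F j x := by
    rw [add_zero]; rfl
  have hA := ang_hasDeriv (k := N - j.val) (m.F_mem hm j x)
  rw [← e0] at hA
  have hc := ((hA.comp (0:ℝ) hS).cos.neg).mul_const (pf (fun l => sin (m.th l x)) j.val)
  rw [e0] at hc
  refine hc.congr_deriv ?_
  simp only [Function.comp, e0]
  unfold d th
  ring

lemma T_dv (hm : m.mass = 1) (x : Euc N) : dv N m.T x = ∑ j, m.d j x := by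
  unfold dv
  exact Finset.sum_congr rfl fun j _ => m.T_partial hm j x

lemma F_first (hm : m.mass = 1) {j : Fin N} (hj : j.val = 0) (x : Euc N) :
    m.F j x = ∑ i, m.a i * m.P i j (x j) := by
  unfold F
  rw [hj, S_zero, hm, div_one]
  simp [pf_zero]

lemma T_first (hm : m.mass = 1) {j : Fin N} (hj : j.val = 0) (x : Euc N) :
    m.T x j = - cos (ang N (∑ i, m.a i * m.P i j (x j))) := by
  rw [T_apply, hj, pf_zero, mul_one]
  unfold th
  rw [m.F_first hm hj, hj, Nat.sub_zero]

lemma T_first_fderiv (hm : m.mass = 1) {j : Fin N} (hj : j.val = 0) (x v : Euc N) :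
    fderiv ℝ (fun y => m.T y j) x v = m.d j x * v j := by
  have hd : DifferentiableAt ℝ (fun y => m.T y j) x :=
    (coord_contDiff (m.T_C hm) j).differentiable one_ne_zero x
  rw [← clm_sum_single, Finset.sum_eq_single j]
  · rw [m.T_partial hm, mul_comm]
  · intro l _ hl
    have h1 := hd.hasFDerivAt.hasLineDerivAt (EuclideanSpace.single l 1)
    have h2 : HasLineDerivAt ℝ (fun y => m.T y j) 0 x (EuclideanSpace.single l 1) := by
      unfold HasLineDerivAt
      have : (fun t : ℝ => m.T (x + t • EuclideanSpace.single l (1:ℝ)) j) = fun _ => m.T x j := by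
        funext t
        rw [m.T_first hm hj, m.T_first hm hj]
        have : (x + t • EuclideanSpace.single l (1:ℝ)) j = x j := by simp [hl.symm]
        rw [this]
      rw [this]
      exact hasDerivAt_const _ _
    rw [h1.unique h2, mul_zero]
  · simp

end Mix


lemma fatou_real {α : Type*} [MeasurableSpace α] {μ : Measure α} {f : ℕ → α → ℝ} {g : α → ℝ}
    (hg : AEStronglyMeasurable g μ) (hf : ∀ n, Integrable (f n) μ) (hpos : ∀ n, ∀ᵐ x ∂μ, 0 ≤ f n x)
    (hae : ∀ᵐ x ∂μ, Tendsto (fun n => f n x) atTop (𝓝 (g x))) {B : ℕ → ℝ} {b : ℝ}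
    (hB : ∀ n, ∫ x, f n x ∂μ ≤ B n) (hb : Tendsto B atTop (𝓝 b)) :
    Integrable g μ ∧ ∫ x, g x ∂μ ≤ b := by
  have hg0 : ∀ᵐ x ∂μ, 0 ≤ g x := by
    filter_upwards [hae, ae_all_iff.2 hpos] with x hx hp
    exact ge_of_tendsto' hx hp
  have key : ∫⁻ x, ENNReal.ofReal (g x) ∂μ ≤ ENNReal.ofReal b := by
    calc ∫⁻ x, ENNReal.ofReal (g x) ∂μ
        ≤ ∫⁻ x, liminf (fun n => ENNReal.ofReal (f n x)) atTop ∂μ := by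
          refine lintegral_mono_ae ?_
          filter_upwards [hae] with x hx
          exact (((ENNReal.continuous_ofReal.tendsto _).comp hx).liminf_eq).symm.le
      _ ≤ liminf (fun n => ∫⁻ x, ENNReal.ofReal (f n x) ∂μ) atTop :=
          lintegral_liminf_le' fun n => (hf n).1.aemeasurable.ennreal_ofReal
      _ ≤ liminf (fun n => ENNReal.ofReal (B n)) atTop := by
          refine liminf_le_liminf (Eventually.of_forall fun n => ?_)
          rw [← ofReal_integral_eq_lintegral_ofReal (hf n) (hpos n)]
          exact ENNReal.ofReal_le_ofReal (hB n)
      _ = ENNReal.ofReal b := ((ENNReal.continuous_ofReal.tendsto _).comp hb).liminf_eq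
  have hb0 : 0 ≤ b := ge_of_tendsto' hb fun n => (integral_nonneg_of_ae (hpos n)).trans (hB n)
  have hi : Integrable g μ := by
    refine ⟨hg, ?_⟩
    rw [hasFiniteIntegral_iff_ofReal hg0]
    exact key.trans_lt ENNReal.ofReal_lt_top
  refine ⟨hi, ?_⟩
  rw [← ofReal_integral_eq_lintegral_ofReal hi hg0] at key
  exact (ENNReal.ofReal_le_ofReal_iff hb0).1 key

lemma amgm {N : ℕ} (hN : 0 < N) {z : Fin N → ℝ} (hz : ∀ j, 0 ≤ z j) :
    N * (∏ j, z j) ^ ((1:ℝ) / N) ≤ ∑ j, z j := by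
  have hN' : (0:ℝ) < N := by exact_mod_cast hN
  have h := Real.geom_mean_le_arith_mean_weighted Finset.univ (fun _ : Fin N => (1:ℝ)/N) z
    (fun _ _ => by positivity) (by simp; field_simp) (fun j _ => hz j)
  rw [Real.finsetProd_rpow _ _ (fun j _ => hz j), ← Finset.mul_sum] at h
  calc N * (∏ j, z j) ^ ((1:ℝ) / N) ≤ N * (1 / N * ∑ j, z j) := by gcongr
    _ = ∑ j, z j := by field_simp

lemma amgm_deficit {N : ℕ} (hN : 0 < N) {z : Fin N → ℝ} (hz : ∀ j, 0 ≤ z j) (i : Fin N) :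
    (√(z i) - √((∏ j, z j) ^ ((1:ℝ) / N))) ^ 2 ≤ ∑ j, z j - N * (∏ j, z j) ^ ((1:ℝ) / N) := by
  set g := (∏ j, z j) ^ ((1:ℝ) / N) with hg
  have hg0 : 0 ≤ g := rpow_nonneg (Finset.prod_nonneg fun j _ => hz j) _
  have h1 := amgm hN (z := fun j => √(z j)) fun j => Real.sqrt_nonneg _
  have h2 : (∏ j, √(z j)) ^ ((1:ℝ) / N) = √g := by
    rw [hg, Real.sqrt_eq_rpow, ← Real.rpow_mul (Finset.prod_nonneg fun j _ => hz j), mul_comm,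
      Real.rpow_mul (Finset.prod_nonneg fun j _ => hz j),
      ← Real.finsetProd_rpow _ _ (fun j _ => hz j)]
    simp_rw [Real.sqrt_eq_rpow]
  rw [h2] at h1
  have h3 : (√(z i) - √g) ^ 2 ≤ ∑ j, (√(z j) - √g) ^ 2 :=
    Finset.single_le_sum (f := fun j => (√(z j) - √g) ^ 2) (fun j _ => sq_nonneg _)
      (Finset.mem_univ i)
  have h4 : ∑ j, (√(z j) - √g) ^ 2 = ∑ j, z j - 2 * √g * ∑ j, √(z j) + N * g := by
    rw [Finset.mul_sum, ← Finset.sum_sub_distrib]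
    have : (N:ℝ) * g = ∑ j : Fin N, g := by simp
    rw [this, ← Finset.sum_add_distrib]
    refine Finset.sum_congr rfl fun j _ => ?_
    rw [sub_sq, Real.sq_sqrt (hz j), Real.sq_sqrt hg0]
    ring
  have h5 : √g * (N * √g) ≤ √g * ∑ j, √(z j) := mul_le_mul_of_nonneg_left h1 (Real.sqrt_nonneg _)
  have h6 : √g * (N * √g) = N * g := by
    rw [mul_left_comm, Real.mul_self_sqrt hg0]
  linarith

/-- cutoff -/
lemma exists_cutoff (N : ℕ) : ∃ (η : ℕ → Euc N → ℝ) (C : ℝ), 0 ≤ C ∧ (∀ n, ContDiff ℝ 1 (η n)) ∧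
    (∀ n, HasCompactSupport (η n)) ∧ (∀ n x, 0 ≤ η n x ∧ η n x ≤ 1) ∧
    (∀ x, Tendsto (fun n => η n x) atTop (𝓝 1)) ∧
    (∀ n x, ‖fderiv ℝ (η n) x‖ ≤ C / ((n:ℝ) + 1)) := by
  let χ : ContDiffBump (0 : Euc N) := ⟨1, 2, one_pos, one_lt_two⟩
  have hχ : ContDiff ℝ 1 χ := χ.contDiff
  obtain ⟨C, hC⟩ := (hχ.continuous_fderiv one_ne_zero).bounded_above_of_compact_support
    (χ.hasCompactSupport.fderiv ℝ)
  have hC0 : 0 ≤ C := (norm_nonneg _).trans (hC 0)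
  have hlin : ∀ n : ℕ, ContDiff ℝ 1 (fun x : Euc N => (1 / ((n:ℝ) + 1)) • x) := fun n => by fun_prop
  refine ⟨fun n x => χ ((1 / ((n:ℝ) + 1)) • x), C, hC0, fun n => hχ.comp (hlin n), fun n => ?_,
    fun n x => ⟨χ.nonneg, χ.le_one⟩, fun x => ?_, fun n x => ?_⟩
  · exact χ.hasCompactSupport.comp_smul (by positivity)
  · have h1 : Tendsto (fun n : ℕ => (1 / ((n:ℝ) + 1)) • x) atTop (𝓝 ((0:ℝ) • x)) :=
      tendsto_one_div_add_atTop_nhds_zero_nat.smul_const x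
    have h2 := (hχ.continuous.tendsto ((0:ℝ) • x)).comp h1
    have h3 : χ ((0:ℝ) • x) = 1 := by
      rw [zero_smul]
      exact χ.one_of_mem_closedBall (by simp [χ])
    rw [h3] at h2
    exact h2
  · have h1 : fderiv ℝ (fun x => χ ((1 / ((n:ℝ) + 1)) • x)) x
        = (1 / ((n:ℝ) + 1)) • fderiv ℝ χ ((1 / ((n:ℝ) + 1)) • x) := by
      exact fderiv_comp_smul _ 
    rw [h1, norm_smul, Real.norm_of_nonneg (by positivity), div_mul_eq_mul_div, one_mul]
    gcongr
    exact hC _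

lemma field_ineq {N : ℕ} {u : Euc N → ℝ} (hu : MemBV N u) (hpos : ∀ᵐ x, 0 ≤ u x)
    {T : Euc N → Euc N} (hT : ContDiff ℝ 1 T) (hT1 : ∀ x, ‖T x‖ ≤ 1) (hd : ∀ x, 0 ≤ dv N T x) :
    Integrable (fun x => u x * dv N T x) ∧ ∫ x, u x * dv N T x ≤ tv N u := by
  obtain ⟨η, C, hC, h1, h2, h3, h4, h5⟩ := exists_cutoff N
  have hc : ∀ n, Integrable (fun x => u x * (η n x * dv N T x)) := by
    intro n
    have c : Continuous (fun x => η n x * dv N T x) := (h1 n).continuous.mul (dv_continuous hT)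
    obtain ⟨K, hK⟩ := c.bounded_above_of_compact_support (h2 n).mul_right
    exact hu.1.mul_bdd (c := K) c.aestronglyMeasurable (ae_of_all _ hK)
  have hc2 : ∀ n, Integrable (fun x => u x * fderiv ℝ (η n) x (T x)) := by
    intro n
    refine hu.1.mul_bdd (c := C / ((n:ℝ) + 1)) ?_ (ae_of_all _ fun x => ?_)
    · exact (((h1 n).continuous_fderiv one_ne_zero).clm_apply hT.continuous).aestronglyMeasurable
    · refine (ContinuousLinearMap.le_opNorm _ _).trans ?_
      exact (mul_le_of_le_one_right (norm_nonneg _) (hT1 x)).trans (h5 n x)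
  refine fatou_real (f := fun n x => u x * (η n x * dv N T x))
    (B := fun n => tv N u + C * (1 / ((n:ℝ) + 1)) * ∫ x, |u x|) ?_ hc ?_ ?_ ?_ ?_
  · exact hu.1.1.mul (dv_continuous hT).aestronglyMeasurable
  · intro n
    filter_upwards [hpos] with x hx
    exact mul_nonneg hx (mul_nonneg (h3 n x).1 (hd x))
  · refine ae_of_all _ fun x => ?_
    simpa using ((h4 x).mul_const (dv N T x)).const_mul (u x)
  · intro n
    have adm : Adm N (fun x => η n x • T x) := by
      refine ⟨(h1 n).smul hT, ?_, fun x => ?_⟩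
      · refine HasCompactSupport.intro (h2 n) fun x hx => ?_
        simp [image_eq_zero_of_notMem_tsupport hx]
      · rw [norm_smul, Real.norm_of_nonneg (h3 n x).1]
        exact mul_le_one₀ (h3 n x).2 (norm_nonneg _) (hT1 x)
    have key := tv_ge hu adm
    have e : (fun x => u x * dv N (fun y => η n y • T y) x)
        = fun x => u x * (η n x * dv N T x) + u x * fderiv ℝ (η n) x (T x) := by
      funext x
      rw [dv_smul hT (h1 n)]; ring
    rw [e, integral_add (hc n) (hc2 n)] at key
    have h6 : |∫ x, u x * fderiv ℝ (η n) x (T x)| ≤ C * (1 / ((n:ℝ) + 1)) * ∫ x, |u x| := by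
      refine (abs_integral_le_integral_abs).trans ?_
      rw [← integral_const_mul]
      refine integral_mono (hc2 n).abs (hu.1.abs.const_mul _) fun x => ?_
      simp only
      rw [abs_mul, mul_comm]
      refine mul_le_mul_of_nonneg_right ?_ (abs_nonneg _)
      rw [← Real.norm_eq_abs]
      refine (ContinuousLinearMap.le_opNorm _ _).trans ?_
      refine (mul_le_of_le_one_right (norm_nonneg _) (hT1 x)).trans ((h5 n x).trans (le_of_eq ?_))
      ring
    have h7 := neg_abs_le (∫ x, u x * fderiv ℝ (η n) x (T x))
    linarith
  · have : Tendsto (fun n : ℕ => tv N u + C * (1 / ((n:ℝ) + 1)) * ∫ x, |u x|) atTop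
        (𝓝 (tv N u + C * 0 * ∫ x, |u x|)) :=
      tendsto_const_nhds.add ((tendsto_one_div_add_atTop_nhds_zero_nat.const_mul C).mul_const _)
    simpa using this

lemma mix_ineq {N : ℕ} {u : Euc N → ℝ} (hu : MemBV N u) (hpos : ∀ᵐ x, 0 ≤ u x)
    (m : Mix N) (hm : m.mass = 1) :
    Integrable (fun x => u x * ∑ j, m.d j x) ∧ ∫ x, u x * ∑ j, m.d j x ≤ tv N u := by
  have h := field_ineq hu hpos (m.T_C hm) m.T_norm (fun x => by
    rw [m.T_dv hm]; exact Finset.sum_nonneg fun j _ => (m.d_pos hm j x).le)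
  simpa only [m.T_dv hm] using h

lemma Mix.dens_pos {N : ℕ} (m : Mix N) (hm : m.mass = 1) (x : Euc N) : 0 < m.dens x :=
  m.wsum_pos hm fun i => Finset.prod_pos fun j _ => m.hp i j _

lemma Mix.dens_cont {N : ℕ} (m : Mix N) : Continuous m.dens := by
  unfold Mix.dens
  exact continuous_finsetSum _ fun i _ => continuous_const.mul
    (continuous_finsetProd _ fun j _ => (m.pderivC i j).continuous)

lemma mix_ineq' {N : ℕ} (hN : 0 < N) {u : Euc N → ℝ} (hu : MemBV N u) (hpos : ∀ᵐ x, 0 ≤ u x)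
    (m : Mix N) (hm : m.mass = 1) :
    Integrable (fun x => u x * (N * (om N * m.dens x) ^ ((1:ℝ)/N))) ∧
    ∫ x, u x * (N * (om N * m.dens x) ^ ((1:ℝ)/N)) ≤ tv N u := by
  have h := mix_ineq hu hpos m hm
  have hle : ∀ x, N * (om N * m.dens x) ^ ((1:ℝ)/N) ≤ ∑ j, m.d j x := by
    intro x
    rw [← m.d_prod hm]
    exact amgm hN fun j => (m.d_pos hm j x).le
  have hnn : ∀ x, 0 ≤ N * (om N * m.dens x) ^ ((1:ℝ)/N) := by
    intro x
    have := om_pos N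
    have := m.dens_pos hm x
    positivity
  have hi : Integrable (fun x => u x * (N * (om N * m.dens x) ^ ((1:ℝ)/N))) := by
    refine h.1.mono ?_ ?_
    · refine hu.1.1.mul (Continuous.aestronglyMeasurable ?_)
      refine continuous_const.mul ((continuous_const.mul m.dens_cont).rpow_const fun x => ?_)
      right; positivity
    · filter_upwards [hpos] with x hx
      rw [Real.norm_of_nonneg (mul_nonneg hx (hnn x)),
        Real.norm_of_nonneg (mul_nonneg hx ((hnn x).trans (hle x)))]
      exact mul_le_mul_of_nonneg_left (hle x) hx
  refine ⟨hi, le_trans (integral_mono_ae hi h.1 ?_) h.2⟩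
  filter_upwards [hpos] with x hx
  exact mul_le_mul_of_nonneg_left (hle x) hx


lemma euc_prod_integral {N : ℕ} (f : Fin N → ℝ → ℝ) :
    ∫ x : Euc N, ∏ j, f j (x j) = ∏ j, ∫ t, f j t := by
  rw [← integral_fintype_prod_volume_eq_prod]
  exact (EuclideanSpace.volume_preserving_symm_measurableEquiv_toLp (Fin N)).integral_comp'
    (fun x : Fin N → ℝ => ∏ j, f j (x j))

lemma euc_prod_integrable {N : ℕ} {f : Fin N → ℝ → ℝ} (h : ∀ j, Integrable (f j)) :
    Integrable (fun x : Euc N => ∏ j, f j (x j)) := by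
  have := Integrable.fintype_prod (μ := fun _ : Fin N => (volume : Measure ℝ)) h
  exact (EuclideanSpace.volume_preserving_symm_measurableEquiv_toLp (Fin N)).integrable_comp_of_integrable
    this

lemma cdf_integrable {P : ℝ → ℝ} (hP : ContDiff ℝ 2 P) (hp : ∀ x, 0 < deriv P x)
    (h0 : Tendsto P atBot (𝓝 0)) (h1 : Tendsto P atTop (𝓝 1)) : Integrable (deriv P) := by
  have hd : ∀ x, HasDerivAt P (deriv P x) x := fun x =>
    ((hP.differentiable two_ne_zero) x).hasDerivAt
  have hc : Continuous (deriv P) := hP.continuous_deriv (by norm_num)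
  refine integrable_of_intervalIntegral_norm_tendsto (μ := volume) (l := atTop) (f := deriv P)
    (a := fun x : ℝ => -x) (b := id) 1 (fun i => (hc.integrableOn_Icc).mono_set Set.Ioc_subset_Icc_self)
    tendsto_neg_atTop_atBot tendsto_id ?_
  have : ∀ x : ℝ, ∫ t in (-x)..(id x), ‖deriv P t‖ = P x - P (-x) := by
    intro x
    simp_rw [Real.norm_of_nonneg (hp _).le]
    exact intervalIntegral.integral_eq_sub_of_hasDerivAt (fun t _ => hd t) (hc.intervalIntegrable _ _)
  simp_rw [this]
  simpa using h1.sub (h0.comp tendsto_neg_atTop_atBot)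

lemma cdf_integral {P : ℝ → ℝ} (hP : ContDiff ℝ 2 P) (hp : ∀ x, 0 < deriv P x)
    (h0 : Tendsto P atBot (𝓝 0)) (h1 : Tendsto P atTop (𝓝 1)) : ∫ t, deriv P t = 1 := by
  have hd : ∀ x, HasDerivAt P (deriv P x) x := fun x =>
    ((hP.differentiable two_ne_zero) x).hasDerivAt
  rw [integral_of_hasDerivAt_of_tendsto hd (cdf_integrable hP hp h0 h1) h0 h1]
  norm_num

lemma cdf_integral_Iic {P : ℝ → ℝ} (hP : ContDiff ℝ 2 P) (hp : ∀ x, 0 < deriv P x)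
    (h0 : Tendsto P atBot (𝓝 0)) (h1 : Tendsto P atTop (𝓝 1)) (t : ℝ) :
    ∫ s in Set.Iic t, deriv P s = P t := by
  have hd : ∀ x, HasDerivAt P (deriv P x) x := fun x =>
    ((hP.differentiable two_ne_zero) x).hasDerivAt
  rw [integral_Iic_of_hasDerivAt_of_tendsto' (fun x _ => hd x)
    (cdf_integrable hP hp h0 h1).integrableOn h0]
  norm_num

namespace Mix

variable {N : ℕ} (m : Mix N)

lemma prod_int (i : m.ι) (j0 : Fin N) {φ : ℝ → ℝ} (hφ : Measurable φ) {C : ℝ} (hC : ∀ t, |φ t| ≤ C) :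
    Integrable (fun x : Euc N => φ (x j0) * ∏ j, deriv (m.P i j) (x j)) ∧
    ∫ x : Euc N, φ (x j0) * ∏ j, deriv (m.P i j) (x j) = ∫ t, φ t * deriv (m.P i j0) t := by
  classical
  have hI : ∀ j, Integrable (deriv (m.P i j)) := fun j =>
    cdf_integrable (m.hP i j) (m.hp i j) (m.h0 i j) (m.h1 i j)
  let f : Fin N → ℝ → ℝ := fun j t => (if j = j0 then φ t else 1) * deriv (m.P i j) t
  have e : ∀ x : Euc N, φ (x j0) * ∏ j, deriv (m.P i j) (x j) = ∏ j, f j (x j) := by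
    intro x
    simp only [f, Finset.prod_mul_distrib]
    rw [Finset.prod_ite_eq' Finset.univ j0 (fun j => φ (x j))]
    simp
  have hf : ∀ j, Integrable (f j) := by
    intro j
    by_cases h : j = j0
    · simp only [f, h, if_true]
      exact (hI j0).bdd_mul (c := C) hφ.aestronglyMeasurable (ae_of_all _ hC)
    · simpa [f, h] using hI j
  simp_rw [e]
  refine ⟨euc_prod_integrable hf, ?_⟩
  rw [euc_prod_integral, Finset.prod_eq_single j0]
  · simp [f]
  · intro j _ hj
    simp only [f, hj, if_false, one_mul]
    exact cdf_integral (m.hP i j) (m.hp i j) (m.h0 i j) (m.h1 i j)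
  · simp

lemma dens_int (j0 : Fin N) {φ : ℝ → ℝ} (hφ : Measurable φ) {C : ℝ} (hC : ∀ t, |φ t| ≤ C) :
    Integrable (fun x : Euc N => φ (x j0) * m.dens x) ∧
    ∫ x : Euc N, φ (x j0) * m.dens x = ∑ i, m.a i * ∫ t, φ t * deriv (m.P i j0) t := by
  have e : ∀ x : Euc N, φ (x j0) * m.dens x
      = ∑ i, m.a i * (φ (x j0) * ∏ j, deriv (m.P i j) (x j)) := by
    intro x
    rw [dens, Finset.mul_sum]
    exact Finset.sum_congr rfl fun i _ => by ring
  simp_rw [e]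
  have h := fun i => (m.prod_int i j0 hφ hC)
  refine ⟨integrable_finsetSum _ fun i _ => (h i).1.const_mul _, ?_⟩
  rw [integral_finsetSum _ fun i _ => (h i).1.const_mul _]
  simp_rw [integral_const_mul, (h _).2]

lemma dens_integrable (hN : 0 < N) : Integrable m.dens := by
  simpa using (m.dens_int ⟨0, hN⟩ (φ := fun _ => 1) measurable_const (C := 1) (by simp)).1

lemma dens_integral (hN : 0 < N) : ∫ x, m.dens x = m.mass := by
  have h := (m.dens_int ⟨0, hN⟩ (φ := fun _ => 1) measurable_const (C := 1) (by simp)).2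
  simp only [one_mul] at h
  rw [h, mass]
  refine Finset.sum_congr rfl fun i _ => ?_
  rw [cdf_integral (m.hP i _) (m.hp i _) (m.h0 i _) (m.h1 i _), mul_one]

lemma dens_cdf (j0 : Fin N) (t : ℝ) :
    ∫ x : Euc N, (Set.Iic t).indicator (fun _ => (1:ℝ)) (x j0) * m.dens x = ∑ i, m.a i * m.P i j0 t := by
  rw [(m.dens_int j0 (φ := (Set.Iic t).indicator (fun _ => (1:ℝ)))
    (measurable_const.indicator measurableSet_Iic) (C := 1) ?_).2]
  · refine Finset.sum_congr rfl fun i _ => ?_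
    rw [← cdf_integral_Iic (m.hP i _) (m.hp i _) (m.h0 i _) (m.h1 i _) t,
      ← integral_indicator measurableSet_Iic]
    congr 2
    funext s
    by_cases h : s ∈ Set.Iic t <;> simp [h]
  · intro s
    by_cases h : s ∈ Set.Iic t <;> simp [h]

lemma dens_T_zero (hm : m.mass = 1) {j0 : Fin N} (hj : j0.val = 0) :
    Integrable (fun x : Euc N => m.T x j0 * m.dens x) ∧ ∫ x : Euc N, m.T x j0 * m.dens x = 0 := by
  set F : ℝ → ℝ := fun t => ∑ i, m.a i * m.P i j0 t with hF
  have hFd : ∀ t, HasDerivAt F (∑ i, m.a i * deriv (m.P i j0) t) t := fun t =>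
    HasDerivAt.fun_sum fun i _ =>
      ((((m.hP i j0).differentiable two_ne_zero) t).hasDerivAt.const_mul _)
  have hFc : Continuous F := continuous_iff_continuousAt.2 fun t => (hFd t).continuousAt
  have hF01 : ∀ t, F t ∈ Set.Ioo (0:ℝ) 1 := by
    intro t
    have hw : ∃ i, 0 < m.a i := by
      by_contra hcon
      push Not at hcon
      have : m.mass ≤ 0 := Finset.sum_nonpos fun i _ => hcon i
      linarith
    obtain ⟨i0, hi0⟩ := hw
    constructor
    · exact Finset.sum_pos' (fun i _ => mul_nonneg (m.ha i) (m.P_mem i j0 t).1.le)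
        ⟨i0, Finset.mem_univ _, mul_pos hi0 (m.P_mem i0 j0 t).1⟩
    · rw [← hm]
      refine Finset.sum_lt_sum (fun i _ => mul_le_of_le_one_right (m.ha i) (m.P_mem i j0 t).2.le)
        ⟨i0, Finset.mem_univ _, mul_lt_of_lt_one_right hi0 (m.P_mem i0 j0 t).2⟩
  have hφc : Continuous (fun t => -cos (ang N (F t))) := by
    exact (Real.continuous_cos.comp ((ang_continuous N).comp hFc)).neg
  have key := m.dens_int j0 (φ := fun t => -cos (ang N (F t))) hφc.measurable (C := 1)
    (fun t => by rw [abs_neg]; exact Real.abs_cos_le_one _)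
  have e : ∀ x : Euc N, m.T x j0 = -cos (ang N (F (x j0))) := fun x => m.T_first hm hj x
  simp_rw [e]
  refine ⟨key.1, ?_⟩
  rw [key.2]
  have hI : ∀ i, Integrable (fun t => m.a i * (-cos (ang N (F t)) * deriv (m.P i j0) t)) := fun i =>
    ((cdf_integrable (m.hP i j0) (m.hp i j0) (m.h0 i j0) (m.h1 i j0)).bdd_mul (c := 1)
      hφc.aestronglyMeasurable (ae_of_all _ fun t => by
        rw [norm_neg]; exact Real.abs_cos_le_one _)).const_mul _
  simp_rw [← integral_const_mul]
  rw [← integral_finsetSum _ fun i _ => hI i]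
  have hw := wal_pos N
  have hd : ∀ t, HasDerivAt (fun t => -(sin (ang N (F t)) ^ (N+1) / ((N+1) * wal N)))
      (∑ i, m.a i * (-cos (ang N (F t)) * deriv (m.P i j0) t)) t := by
    intro t
    have h1 := ((ang_hasDeriv (k := N) (hF01 t)).comp t (hFd t)).sin
    have h2 := ((h1.pow (N+1)).div_const ((N+1) * wal N)).neg
    have hs := sin_ang_pos (k := N) (hF01 t)
    refine h2.congr_deriv ?_
    have : ∑ i, m.a i * (-cos (ang N (F t)) * deriv (m.P i j0) t)
      = -cos (ang N (F t)) * ∑ i, m.a i * deriv (m.P i j0) t := by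
      rw [Finset.mul_sum]; exact Finset.sum_congr rfl fun i _ => by ring
    rw [this]
    simp only [Function.comp, Nat.add_sub_cancel]
    push_cast
    field_simp
  have lim0 : Tendsto F atBot (𝓝 0) := by
    have := tendsto_finsetSum (Finset.univ : Finset m.ι) fun i _ => (m.h0 i j0).const_mul (m.a i)
    simpa using this
  have lim1 : Tendsto F atTop (𝓝 1) := by
    have := tendsto_finsetSum (Finset.univ : Finset m.ι) fun i _ => (m.h1 i j0).const_mul (m.a i)
    simp only [mul_one] at this
    rwa [show ∑ i, m.a i = 1 from hm] at this
  have a0 : sin (ang N 0) = 0 := by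
    have : ang N 0 = 0 := (angH_mono N).injOn (ang_mem N 0) ⟨le_rfl, pi_pos.le⟩
      ((angH_ang ⟨le_rfl, zero_le_one⟩).trans (angH_zero N).symm)
    rw [this, sin_zero]
  have a1 : sin (ang N 1) = 0 := by
    have : ang N 1 = π := (angH_mono N).injOn (ang_mem N 1) ⟨pi_pos.le, le_rfl⟩
      ((angH_ang ⟨zero_le_one, le_rfl⟩).trans (angH_pi N).symm)
    rw [this, sin_pi]
  have hc : Continuous (fun y => -(sin (ang N y) ^ (N+1) / ((N+1) * wal N))) :=
    (((continuous_sin.comp (ang_continuous N)).pow (N+1)).div_const _).neg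
  rw [integral_of_hasDerivAt_of_tendsto hd (integrable_finsetSum _ fun i _ => hI i)
    ((hc.tendsto 0).comp lim0) ((hc.tendsto 1).comp lim1)]
  simp [a0, a1]

end Mix


/-- softplus -/
def sp (x : ℝ) : ℝ := log (1 + exp x)

lemma sp_contDiff : ContDiff ℝ 2 sp := by
  unfold sp
  refine ContDiff.log (by fun_prop) fun x => by positivity

lemma sp_hasDeriv (x : ℝ) : HasDerivAt sp (sigmoid x) x := by
  have h : HasDerivAt (fun x => 1 + exp x) (exp x) x := (Real.hasDerivAt_exp x).const_add 1
  have h2 := h.log (by positivity)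
  refine h2.congr_deriv ?_
  rw [sigmoid_def, Real.exp_neg]
  field_simp
  ring

lemma sp_atBot : Tendsto sp atBot (𝓝 0) := by
  have h : Tendsto (fun x => 1 + exp x) atBot (𝓝 (1 + 0)) := Real.tendsto_exp_atBot.const_add 1
  have := h.log (by norm_num)
  rw [add_zero, Real.log_one] at this
  exact this

lemma sp_neg (x : ℝ) : sp x = x + sp (-x) := by
  unfold sp
  have : 1 + exp x = exp x * (1 + exp (-x)) := by
    rw [mul_add, ← Real.exp_add]; simp [add_comm]
  rw [this, Real.log_mul (by positivity) (by positivity), Real.log_exp]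

/-- smooth cdf approximating uniform distribution on `[a,b)` -/
def ucdf (a b n x : ℝ) : ℝ := (sp (n^2 * (x - a) + n) - sp (n^2 * (x - b) + n)) / (n^2 * (b - a))

lemma ucdf_contDiff (a b n : ℝ) : ContDiff ℝ 2 (ucdf a b n) := by
  unfold ucdf
  have h : ∀ c : ℝ, ContDiff ℝ 2 (fun x : ℝ => sp (n^2 * (x - c) + n)) := fun c =>
    sp_contDiff.comp (by fun_prop)
  exact ((h a).sub (h b)).div_const _

lemma ucdf_deriv {a b n : ℝ} (hn : 0 < n) (x : ℝ) : deriv (ucdf a b n) x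
    = (sigmoid (n^2 * (x - a) + n) - sigmoid (n^2 * (x - b) + n)) / (b - a) := by
  have h : ∀ c : ℝ, HasDerivAt (fun x : ℝ => sp (n^2 * (x - c) + n))
      (sigmoid (n^2 * (x - c) + n) * n^2) x := fun c => by
    have h1 : HasDerivAt (fun x : ℝ => n^2 * (x - c) + n) (n^2) x := by
      simpa using (((hasDerivAt_id x).sub_const c).const_mul (n^2)).add_const n
    exact (sp_hasDeriv _).comp x h1
  have := (((h a).sub (h b)).div_const (n^2 * (b - a))).deriv
  refine Eq.trans this ?_
  rw [← sub_mul, mul_comm (n^2) (b - a), mul_div_mul_right _ _ (by positivity)]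

lemma ucdf_deriv_pos {a b n : ℝ} (hn : 0 < n) (hab : a < b) (x : ℝ) : 0 < deriv (ucdf a b n) x := by
  rw [ucdf_deriv hn]
  refine div_pos (sub_pos.2 (sigmoid_lt ?_)) (sub_pos.2 hab)
  have : 0 < n^2 := by positivity
  nlinarith

lemma ucdf_atBot {a b n : ℝ} (hn : 0 < n) : Tendsto (ucdf a b n) atBot (𝓝 0) := by
  have h : ∀ c : ℝ, Tendsto (fun x : ℝ => sp (n^2 * (x - c) + n)) atBot (𝓝 0) := fun c => by
    refine sp_atBot.comp (tendsto_atBot_add_const_right _ _ ?_)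
    exact (tendsto_atBot_add_const_right _ (-c) tendsto_id).const_mul_atBot (by positivity)
  have := ((h a).sub (h b)).div_const (n^2 * (b - a))
  rw [sub_zero, zero_div] at this
  exact this

lemma ucdf_atTop {a b n : ℝ} (hn : 0 < n) (hab : a < b) : Tendsto (ucdf a b n) atTop (𝓝 1) := by
  have h : ∀ c : ℝ, Tendsto (fun x : ℝ => sp (-(n^2 * (x - c) + n))) atTop (𝓝 0) := fun c => by
    refine sp_atBot.comp (tendsto_neg_atTop_atBot.comp (tendsto_atTop_add_const_right _ _ ?_))
    exact (tendsto_atTop_add_const_right _ (-c) tendsto_id).const_mul_atTop (by positivity)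
  have := (((h a).sub (h b)).div_const (n^2 * (b - a))).const_add 1
  have hne : n^2 * (b - a) ≠ 0 := (mul_pos (by positivity) (sub_pos.2 hab)).ne'
  simp only [sub_zero, zero_div, add_zero] at this
  refine this.congr fun x => ?_
  unfold ucdf
  rw [sp_neg (n^2 * (x - a) + n), sp_neg (n^2 * (x - b) + n), eq_div_iff hne, add_mul,
    div_mul_cancel₀ _ hne]
  ring

lemma sig_lim (c x : ℝ) : Tendsto (fun n : ℕ => sigmoid (((n:ℝ)+1)^2 * (x - c) + ((n:ℝ)+1))) atTop
    (𝓝 (if c ≤ x then 1 else 0)) := by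
  have hn : Tendsto (fun n : ℕ => (n:ℝ)+1) atTop atTop :=
    tendsto_atTop_add_const_right _ _ tendsto_natCast_atTop_atTop
  have e : ∀ n : ℕ, ((n:ℝ)+1)^2 * (x - c) + ((n:ℝ)+1) = ((n:ℝ)+1) * (((n:ℝ)+1) * (x - c) + 1) :=
    fun n => by ring
  simp_rw [e]
  split_ifs with h
  · refine tendsto_sigmoid_atTop.comp (tendsto_atTop_mono (fun n => ?_) hn)
    refine le_mul_of_one_le_right (by positivity) ?_
    have : 0 ≤ ((n:ℝ)+1) * (x - c) := mul_nonneg (by positivity) (sub_nonneg.2 h)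
    linarith
  · refine tendsto_sigmoid_atBot.comp (hn.atTop_mul_atBot₀ ?_)
    exact tendsto_atBot_add_const_right _ _ (hn.atTop_mul_const_of_neg (by linarith))

lemma ucdf_lim {a b : ℝ} (hab : a < b) (x : ℝ) :
    Tendsto (fun n : ℕ => deriv (ucdf a b ((n:ℝ)+1)) x) atTop
      (𝓝 ((Set.Ico a b).indicator (fun _ => (b - a)⁻¹) x)) := by
  have h := ((sig_lim a x).sub (sig_lim b x)).div_const (b - a)
  have e : ((if a ≤ x then 1 else 0) - (if b ≤ x then 1 else 0)) / (b - a)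
      = (Set.Ico a b).indicator (fun _ => (b - a)⁻¹) x := by
    by_cases h1 : a ≤ x
    · by_cases h2 : b ≤ x
      · simp [h1, h2]
      · simp [h1, not_le.1 h2, h2]
    · simp [h1, show ¬ b ≤ x by intro h; linarith]
  rw [e] at h
  refine h.congr fun n => ?_
  rw [ucdf_deriv (by positivity)]

/-- mixture of smoothed boxes -/
def gridMix (N : ℕ) (n : ℕ) (F : Finset (Fin N → ℤ)) (w : (Fin N → ℤ) → ℝ) (hw : ∀ k, 0 ≤ w k)
    (s : ℕ) : Mix N where
  ι := F
  fin := inferInstance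
  a := fun k => w k * ∏ _j : Fin N, (1 / ((n:ℝ)+1))
  P := fun k j => ucdf ((k.1 j : ℝ) / ((n:ℝ)+1)) (((k.1 j : ℝ) + 1) / ((n:ℝ)+1)) ((s:ℝ)+1)
  ha := fun k => mul_nonneg (hw _) (Finset.prod_nonneg fun _ _ => by positivity)
  hP := fun _ _ => ucdf_contDiff _ _ _
  hp := fun _ _ x => ucdf_deriv_pos (by positivity) (by gcongr; linarith) x
  h0 := fun _ _ => ucdf_atBot (by positivity)
  h1 := fun _ _ => ucdf_atTop (by positivity) (by gcongr; linarith)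

lemma mem_cell (n : ℕ) (x : ℝ) (k : ℤ) :
    x ∈ Set.Ico ((k:ℝ) / ((n:ℝ)+1)) (((k:ℝ)+1) / ((n:ℝ)+1)) ↔ ⌊((n:ℝ)+1) * x⌋ = k := by
  have hn : (0:ℝ) < (n:ℝ)+1 := by positivity
  rw [Int.floor_eq_iff, Set.mem_Ico, div_le_iff₀ hn, lt_div_iff₀ hn, mul_comm]

/-- step function -/
def stepF (N : ℕ) (n : ℕ) (F : Finset (Fin N → ℤ)) (w : (Fin N → ℤ) → ℝ) (x : Euc N) : ℝ :=
  ∑ k ∈ F, w k * ∏ j, (Set.Ico ((k j:ℝ) / ((n:ℝ)+1)) (((k j:ℝ)+1) / ((n:ℝ)+1))).indicator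
    (fun _ => (1:ℝ)) (x j)

lemma stepF_integrable (N n : ℕ) (F : Finset (Fin N → ℤ)) (w : (Fin N → ℤ) → ℝ) :
    Integrable (stepF N n F w) := by
  refine integrable_finsetSum _ fun k _ => Integrable.const_mul ?_ _
  refine euc_prod_integrable (f := fun j => (Set.Ico ((k j:ℝ) / ((n:ℝ)+1))
    (((k j:ℝ)+1) / ((n:ℝ)+1))).indicator (fun _ => (1:ℝ))) fun j => ?_
  exact (integrable_indicator_iff measurableSet_Ico).2 (integrableOn_const (by simp))

lemma stepF_integral (N n : ℕ) (F : Finset (Fin N → ℤ)) (w : (Fin N → ℤ) → ℝ) :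
    ∫ x, stepF N n F w x = ∑ k ∈ F, w k * ∏ _j : Fin N, (1 / ((n:ℝ)+1)) := by
  unfold stepF
  have hI : ∀ k : Fin N → ℤ, Integrable (fun x : Euc N => ∏ j, (Set.Ico ((k j:ℝ) / ((n:ℝ)+1))
      (((k j:ℝ)+1) / ((n:ℝ)+1))).indicator (fun _ => (1:ℝ)) (x j)) := fun k => by
    refine euc_prod_integrable (f := fun j => (Set.Ico ((k j:ℝ) / ((n:ℝ)+1))
      (((k j:ℝ)+1) / ((n:ℝ)+1))).indicator (fun _ => (1:ℝ))) fun j => ?_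
    exact (integrable_indicator_iff measurableSet_Ico).2 (integrableOn_const (by simp))
  rw [integral_finsetSum _ fun k _ => (hI k).const_mul _]
  refine Finset.sum_congr rfl fun k _ => ?_
  rw [integral_const_mul, euc_prod_integral (fun j => (Set.Ico ((k j:ℝ) / ((n:ℝ)+1))
      (((k j:ℝ)+1) / ((n:ℝ)+1))).indicator (fun _ => (1:ℝ)))]
  congr 1
  refine Finset.prod_congr rfl fun j _ => ?_
  rw [integral_indicator measurableSet_Ico]
  have : (k j:ℝ) / ((n:ℝ)+1) ≤ ((k j:ℝ)+1) / ((n:ℝ)+1) := by gcongr; linarith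
  simp [this]
  ring

lemma gridMix_mass (N n : ℕ) (F : Finset (Fin N → ℤ)) (w : (Fin N → ℤ) → ℝ) (hw : ∀ k, 0 ≤ w k)
    (s : ℕ) : (gridMix N n F w hw s).mass = ∫ x, stepF N n F w x := by
  rw [stepF_integral]
  unfold Mix.mass gridMix
  exact Finset.sum_coe_sort F (fun k => w k * ∏ _j : Fin N, (1 / ((n:ℝ)+1)))

lemma gridMix_lim (N n : ℕ) (F : Finset (Fin N → ℤ)) (w : (Fin N → ℤ) → ℝ) (hw : ∀ k, 0 ≤ w k)
    (x : Euc N) : Tendsto (fun s => (gridMix N n F w hw s).dens x) atTop (𝓝 (stepF N n F w x)) := by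
  have e : ∀ s, (gridMix N n F w hw s).dens x = ∑ k ∈ F, (w k * ∏ _j : Fin N, (1 / ((n:ℝ)+1))) *
      ∏ j, deriv (ucdf ((k j : ℝ) / ((n:ℝ)+1)) (((k j : ℝ) + 1) / ((n:ℝ)+1)) ((s:ℝ)+1)) (x j) := by
    intro s
    unfold Mix.dens gridMix
    exact Finset.sum_coe_sort F (fun k => (w k * ∏ _j : Fin N, (1 / ((n:ℝ)+1))) *
      ∏ j, deriv (ucdf ((k j : ℝ) / ((n:ℝ)+1)) (((k j : ℝ) + 1) / ((n:ℝ)+1)) ((s:ℝ)+1)) (x j))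
  simp_rw [e]
  unfold stepF
  refine tendsto_finsetSum _ fun k _ => ?_
  have h := tendsto_finsetProd (Finset.univ : Finset (Fin N)) fun j _ =>
    ucdf_lim (a := (k j : ℝ) / ((n:ℝ)+1)) (b := ((k j : ℝ) + 1) / ((n:ℝ)+1))
      (by gcongr; linarith) (x j)
  have h2 := h.const_mul (w k * ∏ _j : Fin N, (1 / ((n:ℝ)+1)))
  convert h2 using 2
  rw [mul_assoc, ← Finset.prod_mul_distrib]
  congr 1
  refine Finset.prod_congr rfl fun j _ => ?_
  by_cases h : x j ∈ Set.Ico ((k j:ℝ) / ((n:ℝ)+1)) (((k j:ℝ)+1) / ((n:ℝ)+1))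
  · rw [Set.indicator_of_mem h, Set.indicator_of_mem h]
    field_simp
    ring
  · rw [Set.indicator_of_notMem h, Set.indicator_of_notMem h, mul_zero]

lemma gridMix_L1 {N : ℕ} (hN : 0 < N) (n : ℕ) (F : Finset (Fin N → ℤ)) (w : (Fin N → ℤ) → ℝ)
    (hw : ∀ k, 0 ≤ w k) {ε : ℝ} (hε : 0 < ε) :
    ∃ m : Mix N, ∫ x, |m.dens x - stepF N n F w x| < ε := by
  have h := l1_conv (f := fun s => (gridMix N n F w hw s).dens) (g := stepF N n F w)
    (fun s => Mix.dens_integrable _ hN) (stepF_integrable N n F w)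
    (ae_of_all _ (gridMix_lim N n F w hw)) (fun s => by
      have h0 : ∀ x, 0 ≤ stepF N n F w x := fun x => Finset.sum_nonneg fun k _ =>
        mul_nonneg (hw k) (Finset.prod_nonneg fun j _ => Set.indicator_nonneg (by simp) _)
      have h1 : ∀ x, 0 ≤ (gridMix N n F w hw s).dens x := fun x => Finset.sum_nonneg fun k _ =>
        mul_nonneg (Mix.ha _ k) (Finset.prod_nonneg fun j _ => (Mix.hp _ k j _).le)
      simp_rw [abs_of_nonneg (h0 _), abs_of_nonneg (h1 _)]
      rw [Mix.dens_integral _ hN, gridMix_mass])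
  obtain ⟨s, hs⟩ := (h.eventually (gt_mem_nhds hε)).exists
  exact ⟨_, hs⟩


/-- grid point below `x` -/
def gpt (N n : ℕ) (x : Euc N) : Euc N := WithLp.toLp 2 fun j => (⌊((n:ℝ)+1) * x j⌋ : ℝ) / ((n:ℝ)+1)

lemma gpt_coord (n : ℕ) (t : ℝ) : |(⌊((n:ℝ)+1) * t⌋ : ℝ) / ((n:ℝ)+1) - t| ≤ 1 / ((n:ℝ)+1) := by
  have hn : (0:ℝ) < (n:ℝ)+1 := by positivity
  have e : (⌊((n:ℝ)+1) * t⌋ : ℝ) / ((n:ℝ)+1) - t = (⌊((n:ℝ)+1) * t⌋ - ((n:ℝ)+1) * t) / ((n:ℝ)+1) := by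
    field_simp
  rw [e, abs_div, abs_of_pos hn]
  gcongr
  rw [abs_le]
  constructor
  · linarith [Int.lt_floor_add_one (((n:ℝ)+1) * t)]
  · linarith [Int.floor_le (((n:ℝ)+1) * t)]

lemma gpt_lim {N : ℕ} (x : Euc N) : Tendsto (fun n => gpt N n x) atTop (𝓝 x) := by
  have h : Tendsto (fun (n : ℕ) (j : Fin N) => (⌊((n:ℝ)+1) * x j⌋ : ℝ) / ((n:ℝ)+1)) atTop
      (𝓝 (fun j => x j)) := by
    rw [tendsto_pi_nhds]
    intro j
    rw [tendsto_iff_dist_tendsto_zero]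
    exact squeeze_zero (fun _ => dist_nonneg) (fun n => gpt_coord n (x j))
      tendsto_one_div_add_atTop_nhds_zero_nat
  exact ((PiLp.continuous_toLp 2 (fun _ : Fin N => ℝ)).tendsto _).comp h

lemma stepF_eq {N : ℕ} (n : ℕ) {g : Euc N → ℝ} {R : ℝ} (hR : ∀ x, R < ‖x‖ → g x = 0) :
    ∃ F : Finset (Fin N → ℤ), ∀ x, stepF N n F
      (fun k => g (WithLp.toLp 2 fun j => (k j : ℝ) / ((n:ℝ)+1))) x = g (gpt N n x) := by
  classical
  have hn : (0:ℝ) < (n:ℝ)+1 := by positivity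
  let M : ℤ := ⌈((n:ℝ)+1) * R⌉
  refine ⟨Fintype.piFinset fun _ => Finset.Icc (-M) M, fun x => ?_⟩
  let k0 : Fin N → ℤ := fun j => ⌊((n:ℝ)+1) * x j⌋
  have hk : ∀ k : Fin N → ℤ, k ≠ k0 → ∏ j, (Set.Ico ((k j:ℝ) / ((n:ℝ)+1))
      (((k j:ℝ)+1) / ((n:ℝ)+1))).indicator (fun _ => (1:ℝ)) (x j) = 0 := by
    intro k hk
    obtain ⟨j, hj⟩ := Function.ne_iff.1 hk
    refine Finset.prod_eq_zero (Finset.mem_univ j) (Set.indicator_of_notMem ?_ _)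
    rw [mem_cell]
    exact fun h => hj h.symm
  unfold stepF
  rw [Finset.sum_eq_single k0]
  · have : ∏ j, (Set.Ico ((k0 j:ℝ) / ((n:ℝ)+1))
      (((k0 j:ℝ)+1) / ((n:ℝ)+1))).indicator (fun _ => (1:ℝ)) (x j) = 1 := by
      refine Finset.prod_eq_one fun j _ => Set.indicator_of_mem ?_ _
      rw [mem_cell]
    rw [this, mul_one]
    rfl
  · intro k _ hne
    rw [hk k hne, mul_zero]
  · intro hnot
    have : g (WithLp.toLp 2 fun j => (k0 j : ℝ) / ((n:ℝ)+1)) = 0 := by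
      apply hR
      by_contra hcon
      push Not at hcon
      apply hnot
      rw [Fintype.mem_piFinset]
      intro j
      have h1 := (PiLp.norm_apply_le (WithLp.toLp 2 fun j => (k0 j : ℝ) / ((n:ℝ)+1)) j).trans hcon
      simp only [Real.norm_eq_abs, abs_div, abs_of_pos hn] at h1
      rw [div_le_iff₀ hn, mul_comm] at h1
      have h2 : |(k0 j : ℝ)| ≤ (M:ℝ) := h1.trans (Int.le_ceil _)
      rw [abs_le] at h2
      rw [Finset.mem_Icc]
      exact ⟨by exact_mod_cast h2.1, by exact_mod_cast h2.2⟩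
    simp only [this, zero_mul]

lemma step_L1 {N : ℕ} {g : Euc N → ℝ} (hc : Continuous g) (hs : HasCompactSupport g) {ε : ℝ}
    (hε : 0 < ε) : ∃ (n : ℕ) (F : Finset (Fin N → ℤ)), ∫ x, |stepF N n F
      (fun k => g (WithLp.toLp 2 fun j => (k j : ℝ) / ((n:ℝ)+1))) x - g x| < ε := by
  obtain ⟨R, hR0, hR⟩ := hs.exists_pos_le_norm
  obtain ⟨C, hC⟩ := hc.bounded_above_of_compact_support hs
  have hC0 : 0 ≤ C := (norm_nonneg _).trans (hC 0)
  have hR' : ∀ x, R < ‖x‖ → g x = 0 := fun x hx => hR x hx.le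
  choose F hF using fun n => stepF_eq n hR'
  have hlim : Tendsto (fun n => ∫ x, |stepF N n (F n)
      (fun k => g (WithLp.toLp 2 fun j => (k j : ℝ) / ((n:ℝ)+1))) x - g x|) atTop
      (𝓝 (∫ _x : Euc N, (0:ℝ))) := by
    have hgi : Integrable g := hc.integrable_of_hasCompactSupport hs
    let bd : Euc N → ℝ := fun x => C * ∏ j, (Set.Icc (-(R+1)) (R+1)).indicator (fun _ => (1:ℝ)) (x j)
    have hbd : Integrable bd := by
      refine Integrable.const_mul ?_ _
      refine euc_prod_integrable (f := fun _ => (Set.Icc (-(R+1)) (R+1)).indicator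
        (fun _ => (1:ℝ))) fun j => ?_
      exact (integrable_indicator_iff measurableSet_Icc).2 (integrableOn_const (by simp))
    refine tendsto_integral_of_dominated_convergence (fun x => bd x + |g x|) ?_
      (hbd.add hgi.abs) ?_ ?_
    · intro n
      exact ((stepF_integrable _ _ _ _).sub hgi).abs.1
    · intro n
      refine ae_of_all _ fun x => ?_
      rw [hF n, Real.norm_eq_abs, abs_abs]
      refine (abs_sub _ _).trans (add_le_add ?_ le_rfl)
      by_cases h : g (gpt N n x) = 0
      · rw [h, abs_zero]
        exact mul_nonneg hC0 (Finset.prod_nonneg fun j _ => Set.indicator_nonneg (by simp) _)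
      · have h1 : ‖gpt N n x‖ ≤ R := by
          by_contra hcon
          exact h (hR' _ (not_le.1 hcon))
        have : ∏ j, (Set.Icc (-(R+1)) (R+1)).indicator (fun _ => (1:ℝ)) (x j) = 1 := by
          refine Finset.prod_eq_one fun j _ => Set.indicator_of_mem ?_ _
          have h2 := (PiLp.norm_apply_le (gpt N n x) j).trans h1
          have h3 := gpt_coord n (x j)
          have h4 : 1 / ((n:ℝ)+1) ≤ 1 := by
            rw [div_le_one (by positivity)]; linarith [Nat.cast_nonneg (α := ℝ) n]
          simp only [gpt, Real.norm_eq_abs] at h2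
          rw [abs_le] at h2 h3
          constructor <;> linarith [h2.1, h2.2, h3.1, h3.2]
        simp only [bd, this, mul_one]
        exact hC _
    · refine ae_of_all _ fun x => ?_
      simp_rw [hF]
      have := (((hc.tendsto x).comp (gpt_lim x)).sub_const (g x)).abs
      simpa using this
  rw [integral_zero] at hlim
  obtain ⟨n, hn⟩ := (hlim.eventually (gt_mem_nhds hε)).exists
  exact ⟨n, F n, hn⟩

lemma l1_tri {α : Type*} [MeasurableSpace α] {μ : Measure α} {f g h : α → ℝ} (hf : Integrable f μ)
    (hg : Integrable g μ) (hh : Integrable h μ) :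
    ∫ x, |f x - h x| ∂μ ≤ ∫ x, |f x - g x| ∂μ + ∫ x, |g x - h x| ∂μ := by
  have i1 : Integrable (fun x => |f x - g x|) μ := (hf.sub hg).abs
  have i2 : Integrable (fun x => |g x - h x|) μ := (hg.sub hh).abs
  rw [← integral_add i1 i2]
  exact integral_mono (hf.sub hh).abs (i1.add i2) fun x => abs_sub_le _ _ _

lemma mix_approx {N : ℕ} (hN : 0 < N) {h : Euc N → ℝ} (hi : Integrable h) (h0 : ∀ᵐ x, 0 ≤ h x)
    {ε : ℝ} (hε : 0 < ε) : ∃ m : Mix N, ∫ x, |m.dens x - h x| < ε := by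
  obtain ⟨g, hgs, hg1, hgc, hgi⟩ := hi.exists_hasCompactSupport_integral_sub_le
    (show 0 < ε / 4 by positivity)
  let g' : Euc N → ℝ := fun x => max (g x) 0
  have hc' : Continuous g' := hgc.max continuous_const
  have hs' : HasCompactSupport g' := hgs.comp_left (g := fun t => max t 0) (by simp)
  have hi' : Integrable g' := hc'.integrable_of_hasCompactSupport hs'
  have e1 : ∫ x, |g' x - h x| ≤ ε / 4 := by
    refine le_trans (integral_mono_ae (hi'.sub hi).abs (hi.sub hgi).norm ?_) hg1
    filter_upwards [h0] with x hx
    simp only [g', Real.norm_eq_abs]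
    have := abs_max_sub_max_le_abs (g x) (h x) 0
    rw [max_eq_left hx] at this
    rw [Pi.sub_apply, abs_sub_comm (h x)]
    exact this
  obtain ⟨n, F, hF⟩ := step_L1 hc' hs' (show 0 < ε / 4 by positivity)
  obtain ⟨m, hm⟩ := gridMix_L1 hN n F (fun k => g' (WithLp.toLp 2 fun j => (k j : ℝ) / ((n:ℝ)+1)))
    (fun k => le_max_right _ _) (show 0 < ε / 4 by positivity)
  refine ⟨m, ?_⟩
  have t1 := l1_tri (m.dens_integrable hN) (stepF_integrable N n F
    (fun k => g' (WithLp.toLp 2 fun j => (k j : ℝ) / ((n:ℝ)+1)))) hi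
  have t2 := l1_tri (stepF_integrable N n F
    (fun k => g' (WithLp.toLp 2 fun j => (k j : ℝ) / ((n:ℝ)+1)))) hi' hi
  linarith

/-- rescaled mixture -/
def Mix.scale {N : ℕ} (m : Mix N) (c : ℝ) (hc : 0 ≤ c) : Mix N :=
  { m with a := fun i => c * m.a i, ha := fun i => mul_nonneg hc (m.ha i) }

lemma Mix.scale_dens {N : ℕ} (m : Mix N) (c : ℝ) (hc : 0 ≤ c) (x : Euc N) :
    (m.scale c hc).dens x = c * m.dens x := by
  unfold Mix.dens
  rw [Finset.mul_sum]
  exact Finset.sum_congr rfl fun i _ => by rw [← mul_assoc]; rfl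

lemma Mix.scale_mass {N : ℕ} (m : Mix N) (c : ℝ) (hc : 0 ≤ c) :
    (m.scale c hc).mass = c * m.mass := by
  unfold Mix.mass
  rw [Finset.mul_sum]
  rfl

lemma Mix.dens_nonneg {N : ℕ} (m : Mix N) (x : Euc N) : 0 ≤ m.dens x :=
  Finset.sum_nonneg fun k _ => mul_nonneg (m.ha k) (Finset.prod_nonneg fun j _ => (m.hp k j _).le)

lemma mix_approx1 {N : ℕ} (hN : 0 < N) {h : Euc N → ℝ} (hi : Integrable h) (h0 : ∀ᵐ x, 0 ≤ h x)
    (h1 : ∫ x, h x = 1) {ε : ℝ} (hε : 0 < ε) :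
    ∃ m : Mix N, m.mass = 1 ∧ ∫ x, |m.dens x - h x| < ε := by
  obtain ⟨m, hm⟩ := mix_approx hN hi h0 (show 0 < min (ε/2) (1/2) by positivity)
  have hm1 : ∫ x, |m.dens x - h x| < ε/2 := hm.trans_le (min_le_left _ _)
  have hm2 : ∫ x, |m.dens x - h x| < 1/2 := hm.trans_le (min_le_right _ _)
  have hd := m.dens_integrable hN
  have e1 : |m.mass - 1| ≤ ∫ x, |m.dens x - h x| := by
    rw [← m.dens_integral hN, ← h1, ← integral_sub hd hi]
    exact abs_integral_le_integral_abs
  have hpos : 0 < m.mass := by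
    have := abs_le.1 (e1.trans hm2.le)
    linarith [this.1]
  refine ⟨m.scale m.mass⁻¹ (by positivity), ?_, ?_⟩
  · rw [Mix.scale_mass]; field_simp
  · have t1 := l1_tri ((m.scale m.mass⁻¹ (by positivity)).dens_integrable hN) hd hi
    have e2 : ∫ x, |(m.scale m.mass⁻¹ (by positivity)).dens x - m.dens x| = |m.mass - 1| := by
      have : ∀ x, |(m.scale m.mass⁻¹ (by positivity)).dens x - m.dens x|
          = |m.mass⁻¹ - 1| * m.dens x := by
        intro x
        rw [Mix.scale_dens, ← abs_of_nonneg (m.dens_nonneg x), ← abs_mul,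
          abs_of_nonneg (m.dens_nonneg x)]
        congr 1; ring
      simp_rw [this]
      rw [integral_const_mul, m.dens_integral hN]
      nth_rewrite 2 [← abs_of_pos hpos]
      rw [← abs_mul, sub_mul, inv_mul_cancel₀ hpos.ne', one_mul, abs_sub_comm]
    linarith

lemma mix_dense {N : ℕ} (hN : 0 < N) {h : Euc N → ℝ} (hi : Integrable h) (h0 : ∀ᵐ x, 0 ≤ h x)
    (h1 : ∫ x, h x = 1) : ∃ m : ℕ → Mix N, (∀ n, (m n).mass = 1) ∧
      (∀ᵐ x, Tendsto (fun n => (m n).dens x) atTop (𝓝 (h x))) ∧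
      Tendsto (fun n => ∫ x, |(m n).dens x - h x|) atTop (𝓝 0) := by
  choose m hm1 hm2 using fun n : ℕ => mix_approx1 hN hi h0 h1 (show 0 < 1 / ((n:ℝ) + 1) by positivity)
  have hlim : Tendsto (fun n => ∫ x, |(m n).dens x - h x|) atTop (𝓝 0) :=
    squeeze_zero (fun n => integral_nonneg fun x => abs_nonneg _) (fun n => (hm2 n).le)
      tendsto_one_div_add_atTop_nhds_zero_nat
  have hmeas : TendstoInMeasure volume (fun n => (m n).dens) atTop h := by
    refine tendstoInMeasure_of_tendsto_eLpNorm (p := 1) one_ne_zero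
      (fun n => ((m n).dens_integrable hN).1) hi.1 ?_
    have : ∀ n, eLpNorm ((m n).dens - h) 1 volume = ENNReal.ofReal (∫ x, |(m n).dens x - h x|) := by
      intro n
      have i1 : Integrable (fun x => |(m n).dens x - h x|) := (((m n).dens_integrable hN).sub hi).abs
      rw [eLpNorm_one_eq_lintegral_enorm, ofReal_integral_eq_lintegral_ofReal
        i1 (ae_of_all _ fun x => abs_nonneg _)]
      refine lintegral_congr fun x => ?_
      rw [← ofReal_norm]
      rfl
    simp_rw [this]
    have := (ENNReal.continuous_ofReal.tendsto 0).comp hlim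
    rw [ENNReal.ofReal_zero] at this
    exact this
  obtain ⟨ns, hns, hae⟩ := hmeas.exists_seq_tendsto_ae
  exact ⟨fun n => m (ns n), fun n => hm1 _, hae, hlim.comp hns.tendsto_atTop⟩


/-- critical exponent -/
def pp (N : ℕ) : ℝ := (N:ℝ) / ((N:ℝ) - 1)

/-- isoperimetric constant -/
def C0 (N : ℕ) : ℝ := N * om N ^ ((1:ℝ) / N)

lemma pp_gt {N : ℕ} (hN : 2 ≤ N) : 1 < pp N := by
  have : (2:ℝ) ≤ N := by exact_mod_cast hN
  unfold pp
  rw [lt_div_iff₀ (by linarith)]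
  linarith

lemma pp_inv {N : ℕ} (hN : 2 ≤ N) : 1 / pp N = 1 - 1 / (N:ℝ) := by
  have : (2:ℝ) ≤ N := by exact_mod_cast hN
  have h1 : (N:ℝ) - 1 ≠ 0 := by linarith
  unfold pp
  field_simp

lemma pp_eq {N : ℕ} (hN : 2 ≤ N) : pp N * (1 / (N:ℝ)) = pp N - 1 := by
  have : (2:ℝ) ≤ N := by exact_mod_cast hN
  have h1 : (N:ℝ) - 1 ≠ 0 := by linarith
  unfold pp
  field_simp
  ring

lemma C0_pos {N : ℕ} (hN : 2 ≤ N) : 0 < C0 N := by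
  have : (0:ℝ) < N := by exact_mod_cast (by omega : 0 < N)
  have := om_pos N
  unfold C0
  positivity

lemma sob_h {N : ℕ} (hN : 0 < N) {u h : Euc N → ℝ} (hu : MemBV N u) (hpos : ∀ᵐ x, 0 ≤ u x)
    (hi : Integrable h) (h0 : ∀ᵐ x, 0 ≤ h x) (h1 : ∫ x, h x = 1) :
    Integrable (fun x => u x * (N * (om N * h x) ^ ((1:ℝ) / N))) ∧
      ∫ x, u x * (N * (om N * h x) ^ ((1:ℝ) / N)) ≤ tv N u := by
  obtain ⟨m, hm, hae, -⟩ := mix_dense hN hi h0 h1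
  have hcont : Continuous (fun t : ℝ => (N * (om N * t) ^ ((1:ℝ) / N))) := by
    refine continuous_const.mul (Continuous.rpow_const (by fun_prop) fun t => Or.inr (by positivity))
  refine fatou_real (f := fun n x => u x * (N * (om N * (m n).dens x) ^ ((1:ℝ) / N)))
    (B := fun _ => tv N u) ?_ (fun n => (mix_ineq' hN hu hpos (m n) (hm n)).1) ?_ ?_
    (fun n => (mix_ineq' hN hu hpos (m n) (hm n)).2) tendsto_const_nhds
  · exact hu.1.1.mul (hcont.comp_aestronglyMeasurable hi.1)
  · intro n
    filter_upwards [hpos] with x hx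
    have := om_pos N
    have := (m n).dens_nonneg x
    positivity
  · filter_upwards [hae] with x hx
    exact ((hcont.tendsto _).comp hx).const_mul (u x)

lemma sobolev_trunc {N : ℕ} (hN : 2 ≤ N) {u : Euc N → ℝ} (hu : MemBV N u) (hpos : ∀ᵐ x, 0 ≤ u x)
    {M : ℝ} (hM : 0 < M) : Integrable (fun x => (min |u x| M) ^ pp N) ∧
      ∫ x, (min |u x| M) ^ pp N ≤ (tv N u / C0 N) ^ pp N := by
  have hp := pp_gt hN
  have hC := C0_pos hN
  have hN0 : 0 < N := by omega
  have htv := tv_nonneg hu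
  set v : Euc N → ℝ := fun x => (min |u x| M) ^ pp N with hv
  have hmin : ∀ x, 0 ≤ min |u x| M := fun x => le_min (abs_nonneg _) hM.le
  have hv0 : ∀ x, 0 ≤ v x := fun x => rpow_nonneg (hmin x) _
  have hvi : Integrable v := by
    refine (hu.1.abs.const_mul (M ^ (pp N - 1))).mono' ?_ (ae_of_all _ fun x => ?_)
    · have hc : Continuous (fun t : ℝ => (min |t| M) ^ pp N) :=
        Continuous.rpow_const (by fun_prop) fun t => Or.inr (by linarith)
      exact hc.comp_aestronglyMeasurable hu.1.1
    · rw [Real.norm_of_nonneg (hv0 x)]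
      simp only [hv]
      have : (min |u x| M) ^ pp N = (min |u x| M) ^ (pp N - 1) * min |u x| M := by
        rw [← Real.rpow_add_one' (hmin x) (by linarith)]; congr 1; ring
      rw [this]
      exact mul_le_mul (Real.rpow_le_rpow (hmin x) (min_le_right _ _) (by linarith))
        (min_le_left _ _) (hmin x) (by positivity)
  refine ⟨hvi, ?_⟩
  rcases (integral_nonneg (μ := volume) (f := v) hv0).eq_or_lt with hZ | hZ
  · rw [← hZ]; positivity
  set Z := ∫ x, v x with hZdef
  have key := sob_h hN0 hu hpos (hvi.div_const Z) (ae_of_all _ fun x => div_nonneg (hv0 x) hZ.le)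
    (by rw [integral_div, div_self hZ.ne'])
  have hom := om_pos N
  have hle : ∫ x, (C0 N * Z ^ (-((1:ℝ)/N))) * v x ≤ tv N u := by
    refine (integral_mono_ae (hvi.const_mul _) key.1 ?_).trans key.2
    filter_upwards [hpos] with x hx
    have e1 : (om N * (v x / Z)) ^ ((1:ℝ)/N) = om N ^ ((1:ℝ)/N) * (min |u x| M) ^ (pp N - 1) *
        Z ^ (-((1:ℝ)/N)) := by
      rw [Real.mul_rpow hom.le (div_nonneg (hv0 x) hZ.le), Real.div_rpow (hv0 x) hZ.le,
        Real.rpow_neg hZ.le]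
      simp only [hv]
      rw [← Real.rpow_mul (hmin x), pp_eq hN]
      ring
    have e2 : v x = (min |u x| M) ^ (pp N - 1) * min |u x| M := by
      rw [← Real.rpow_add_one' (hmin x) (by linarith)]; simp only [hv]; congr 1; ring
    rw [e1, e2]
    have h1 : min |u x| M ≤ u x := (min_le_left _ _).trans (abs_of_nonneg hx).le
    have h2 : 0 ≤ (C0 N * Z ^ (-((1:ℝ)/N))) * (min |u x| M) ^ (pp N - 1) := by
      have := hmin x
      positivity
    have h3 := mul_le_mul_of_nonneg_left h1 h2
    unfold C0 at h3 ⊢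
    nlinarith [h3]
  rw [integral_const_mul, ← hZdef, mul_assoc, ← Real.rpow_add_one hZ.ne'] at hle
  have e3 : -((1:ℝ)/N) + 1 = 1 / pp N := by rw [pp_inv hN]; ring
  rw [e3] at hle
  have h4 : Z ^ (1 / pp N) ≤ tv N u / C0 N := by
    rw [le_div_iff₀ hC]; linarith
  calc Z = (Z ^ (1 / pp N)) ^ pp N := by
        rw [← Real.rpow_mul hZ.le, one_div, inv_mul_cancel₀ (by linarith), Real.rpow_one]
    _ ≤ _ := Real.rpow_le_rpow (by positivity) h4 (by linarith)

lemma sobolev_pos {N : ℕ} (hN : 2 ≤ N) {u : Euc N → ℝ} (hu : MemBV N u) (hpos : ∀ᵐ x, 0 ≤ u x) :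
    Integrable (fun x => |u x| ^ pp N) ∧ ∫ x, |u x| ^ pp N ≤ (tv N u / C0 N) ^ pp N := by
  have hp := pp_gt hN
  have hM : ∀ n : ℕ, (0:ℝ) < (n:ℝ) + 1 := fun n => by positivity
  have hc : Continuous (fun t : ℝ => |t| ^ pp N) :=
    Continuous.rpow_const (by fun_prop) fun t => Or.inr (by linarith)
  refine fatou_real (f := fun (n : ℕ) x => (min |u x| ((n:ℝ)+1)) ^ pp N)
    (B := fun _ => (tv N u / C0 N) ^ pp N) (hc.comp_aestronglyMeasurable hu.1.1)
    (fun n => (sobolev_trunc hN hu hpos (hM n)).1)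
    (fun n => ae_of_all _ fun x => rpow_nonneg (le_min (abs_nonneg _) (hM n).le) _) ?_
    (fun n => (sobolev_trunc hN hu hpos (hM n)).2) tendsto_const_nhds
  refine ae_of_all _ fun x => tendsto_const_nhds.congr' ?_
  obtain ⟨n0, hn0⟩ := exists_nat_ge |u x|
  filter_upwards [eventually_ge_atTop n0] with n hn
  have : (n0:ℝ) ≤ n := by exact_mod_cast hn
  rw [min_eq_left (by linarith)]

lemma abs_bv {N : ℕ} {u : Euc N → ℝ} (hu : MemBV N u) :
    MemBV N (fun x => |u x|) ∧ tv N (fun x => |u x|) ≤ tv N u := by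
  refine memBV_of hu.1.abs fun ψ hψ => ?_
  let G : ℕ → ℝ → ℝ := fun n s => √(s^2 + (1/((n:ℝ)+1))^2) - 1/((n:ℝ)+1)
  have hpos : ∀ (n : ℕ) (s : ℝ), 0 < s^2 + (1/((n:ℝ)+1))^2 := fun n s => by positivity
  have hG : ∀ n, ContDiff ℝ 2 (G n) := fun n => by
    refine ContDiff.sub ?_ contDiff_const
    exact ContDiff.sqrt (by fun_prop) fun s => (hpos n s).ne'
  have hd : ∀ n s, |deriv (G n) s| + |deriv (fun _ : ℝ => (0:ℝ)) s| ≤ 1 := fun n s => by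
    have h1 : HasDerivAt (fun s : ℝ => s^2 + (1/((n:ℝ)+1))^2) (2*s) s := by
      simpa using (hasDerivAt_pow 2 s).add_const ((1/((n:ℝ)+1))^2)
    have h2 := (h1.sqrt (hpos n s).ne').sub_const (1/((n:ℝ)+1))
    have h3 : 0 < 2 * √(s^2 + (1/((n:ℝ)+1))^2) := mul_pos two_pos (Real.sqrt_pos.2 (hpos n s))
    rw [h2.deriv, deriv_const, abs_zero, add_zero, abs_div, abs_of_pos h3,
      div_le_one h3, abs_mul, abs_two]
    refine mul_le_mul_of_nonneg_left ?_ zero_le_two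
    exact Real.abs_le_sqrt (by nlinarith [sq_nonneg (1/((n:ℝ)+1))])
  have h0 : ∀ n, G n 0 = 0 := fun n => by
    simp only [G]
    rw [zero_pow two_ne_zero, zero_add, Real.sqrt_sq (by positivity), sub_self]
  have hle : ∀ n s, |G n s| ≤ |s| := fun n s => by
    simp only [G]
    have hb : (0:ℝ) < 1/((n:ℝ)+1) := by positivity
    set b := 1/((n:ℝ)+1)
    rw [abs_of_nonneg]
    · rw [sub_le_iff_le_add, Real.sqrt_le_left (by positivity)]
      nlinarith [sq_abs s, abs_nonneg s]
    · rw [sub_nonneg]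
      exact Real.le_sqrt_of_sq_le (by nlinarith [sq_nonneg s])
  have key : ∀ n, ∫ x, G n (u x) * dv N ψ x ≤ tv N u := fun n => by
    have h := comp_pair hu (hG n) (contDiff_const (c := (0:ℝ))) (hd n) (h0 n) rfl
    have := tv_ge h.1 hψ
    have h3 := tv_nonneg h.2.1
    linarith [h.2.2]
  obtain ⟨K, hK0, hK⟩ := dv_bdd hψ.1 hψ.2.1
  have hlim : Tendsto (fun n => ∫ x, G n (u x) * dv N ψ x) atTop (𝓝 (∫ x, |u x| * dv N ψ x)) := by
    refine tendsto_integral_of_dominated_convergence (fun x => |u x| * K) ?_ (hu.1.abs.mul_const _) ?_ ?_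
    · intro n
      exact ((hG n).continuous.comp_aestronglyMeasurable hu.1.1).mul
        (dv_continuous hψ.1).aestronglyMeasurable
    · intro n
      refine ae_of_all _ fun x => ?_
      rw [norm_mul]
      exact mul_le_mul (hle n _) (hK x) (norm_nonneg _) (abs_nonneg _)
    · refine ae_of_all _ fun x => Tendsto.mul_const _ ?_
      have h1 : Tendsto (fun n : ℕ => 1/((n:ℝ)+1)) atTop (𝓝 0) := tendsto_one_div_add_atTop_nhds_zero_nat
      have hc : Continuous (fun b : ℝ => √((u x)^2 + b^2) - b) := by fun_prop
      have := (hc.tendsto 0).comp h1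
      simp only [zero_pow two_ne_zero, add_zero, Real.sqrt_sq_eq_abs, sub_zero] at this
      exact this
  exact le_of_tendsto' hlim key

lemma sobolev {N : ℕ} (hN : 2 ≤ N) {u : Euc N → ℝ} (hu : MemBV N u) :
    Integrable (fun x => |u x| ^ pp N) ∧ C0 N * (∫ x, |u x| ^ pp N) ^ (1 / pp N) ≤ tv N u := by
  have h := abs_bv hu
  have hp := pp_gt hN
  have hC := C0_pos hN
  have h2 := sobolev_pos hN h.1 (ae_of_all _ fun x => abs_nonneg _)
  simp only [abs_abs] at h2
  refine ⟨h2.1, ?_⟩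
  have h0 : 0 ≤ tv N (fun x => |u x|) / C0 N := div_nonneg (tv_nonneg h.1) hC.le
  have h3 := Real.rpow_le_rpow (integral_nonneg fun x => by positivity) h2.2
    (show 0 ≤ 1 / pp N by positivity)
  rw [← Real.rpow_mul h0, mul_one_div_cancel (by linarith), Real.rpow_one, le_div_iff₀ hC] at h3
  linarith [h.2]

lemma tvset_congr {N : ℕ} {u v : Euc N → ℝ} (h : u =ᵐ[volume] v) : TVSet N u = TVSet N v := by
  ext r
  constructor
  · rintro ⟨ψ, h1, h2, h3, rfl⟩
    refine ⟨ψ, h1, h2, h3, integral_congr_ae ?_⟩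
    filter_upwards [h] with x hx
    rw [hx]
  · rintro ⟨ψ, h1, h2, h3, rfl⟩
    refine ⟨ψ, h1, h2, h3, integral_congr_ae ?_⟩
    filter_upwards [h] with x hx
    rw [hx]

lemma tv_congr {N : ℕ} {u v : Euc N → ℝ} (h : u =ᵐ[volume] v) : tv N u = tv N v := by
  unfold tv
  rw [tvset_congr h]

lemma memBV_congr {N : ℕ} {u v : Euc N → ℝ} (h : u =ᵐ[volume] v) (hu : MemBV N u) : MemBV N v :=
  ⟨hu.1.congr h, by rw [← tvset_congr h]; exact hu.2⟩


lemma jensen_aux {α : Type*} [MeasurableSpace α] {ν : Measure α} [IsProbabilityMeasure ν] {m : α → ℝ}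
    (hm : AEStronglyMeasurable m ν) (h01 : ∀ᵐ x ∂ν, 0 ≤ m x ∧ m x ≤ 1) {p : ℝ} (hp : 1 < p) :
    (∃ c, ∀ᵐ x ∂ν, m x = c) ∨ ∫ x, m x ∂ν < (∫ x, m x ^ p ∂ν) ^ (1 / p) := by
  have hi : Integrable m ν := by
    refine (integrable_const (1:ℝ)).mono' hm ?_
    filter_upwards [h01] with x hx
    rw [Real.norm_of_nonneg hx.1]; exact hx.2
  have hc : Continuous (fun t : ℝ => t ^ p) :=
    continuous_id.rpow_const fun t => Or.inr (by linarith)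
  have hi2 : Integrable ((fun t : ℝ => t ^ p) ∘ m) ν := by
    refine (integrable_const (1:ℝ)).mono' (hc.comp_aestronglyMeasurable hm) ?_
    filter_upwards [h01] with x hx
    simp only [Function.comp]
    rw [Real.norm_of_nonneg (rpow_nonneg hx.1 _)]; exact Real.rpow_le_one hx.1 hx.2 (by linarith)
  rcases (strictConvexOn_rpow hp).ae_eq_const_or_map_average_lt hc.continuousOn isClosed_Ici
    (h01.mono fun x hx => hx.1) hi hi2 with h | h
  · left
    exact ⟨_, h⟩
  · right
    simp only [average_eq_integral] at h
    have h0 : 0 ≤ ∫ x, m x ∂ν := integral_nonneg_of_ae (h01.mono fun x hx => hx.1)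
    have := Real.rpow_lt_rpow (rpow_nonneg h0 p) h (show 0 < 1 / p by positivity)
    rwa [← Real.rpow_mul h0, mul_one_div_cancel (by linarith), Real.rpow_one] at this

lemma jensen_le {α : Type*} [MeasurableSpace α] {ν : Measure α} [IsProbabilityMeasure ν] {m : α → ℝ}
    (hm : AEStronglyMeasurable m ν) (h01 : ∀ᵐ x ∂ν, 0 ≤ m x ∧ m x ≤ 1) {p : ℝ} (hp : 1 < p) :
    ∫ x, m x ∂ν ≤ (∫ x, m x ^ p ∂ν) ^ (1 / p) := by
  rcases jensen_aux hm h01 hp with ⟨c, hc⟩ | h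
  · have h1 : ∫ x, m x ∂ν = c := by
      rw [integral_congr_ae hc]; simp
    have h2 : ∫ x, m x ^ p ∂ν = c ^ p := by
      rw [integral_congr_ae (g := fun _ => c ^ p) (hc.mono fun x hx => by simp only [hx])]; simp
    obtain ⟨x, hx1, hx2⟩ := (hc.and h01).exists
    have hc0 : 0 ≤ c := hx1 ▸ hx2.1
    rw [h1, h2, ← Real.rpow_mul hc0, mul_one_div_cancel (by linarith), Real.rpow_one]
  · exact h.le

lemma jensen_const {α : Type*} [MeasurableSpace α] {ν : Measure α} [IsProbabilityMeasure ν] {m : α → ℝ}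
    (hm : AEStronglyMeasurable m ν) (h01 : ∀ᵐ x ∂ν, 0 ≤ m x ∧ m x ≤ 1) {p : ℝ} (hp : 1 < p)
    (h : (∫ x, m x ^ p ∂ν) ^ (1 / p) + (∫ x, (1 - m x) ^ p ∂ν) ^ (1 / p) ≤ 1) :
    ∃ c, ∀ᵐ x ∂ν, m x = c := by
  have hi : Integrable m ν := by
    refine (integrable_const (1:ℝ)).mono' hm ?_
    filter_upwards [h01] with x hx
    rw [Real.norm_of_nonneg hx.1]; exact hx.2
  rcases jensen_aux hm h01 hp with h1 | h1
  · exact h1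
  · exfalso
    have h2 := jensen_le (m := fun x => 1 - m x) (aestronglyMeasurable_const.sub hm)
      (h01.mono fun x hx => ⟨by linarith [hx.2], by linarith [hx.1]⟩) hp
    rw [integral_sub (integrable_const _) hi] at h2
    simp at h2
    simp only [one_div] at h h1
    linarith

lemma weighted_const {α : Type*} [MeasurableSpace α] {μ : Measure α} {w m : α → ℝ}
    (hw : Integrable w μ) (hw0 : ∀ x, 0 ≤ w x)
    (hm : AEStronglyMeasurable m μ) (h01 : ∀ x, 0 ≤ m x ∧ m x ≤ 1) {p : ℝ} (hp : 1 < p)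
    (h : (∫ x, m x ^ p * w x ∂μ) ^ (1 / p) + (∫ x, (1 - m x) ^ p * w x ∂μ) ^ (1 / p)
      ≤ (∫ x, w x ∂μ) ^ (1 / p)) :
    ∃ c, ∀ᵐ x ∂μ, w x ≠ 0 → m x = c := by
  rcases (integral_nonneg (μ := μ) (f := w) hw0).eq_or_lt with hZ | hZ
  · refine ⟨0, ?_⟩
    have := (integral_eq_zero_iff_of_nonneg hw0 hw).1 hZ.symm
    filter_upwards [this] with x hx h
    exact absurd hx h
  set Z := ∫ x, w x ∂μ with hZd
  have hmeas : AEMeasurable (fun x => ENNReal.ofReal (w x / Z)) μ :=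
    (hw.1.aemeasurable.div_const Z).ennreal_ofReal
  set ν := μ.withDensity fun x => ENNReal.ofReal (w x / Z) with hν
  have hprob : IsProbabilityMeasure ν := by
    refine ⟨?_⟩
    rw [hν, withDensity_apply _ MeasurableSet.univ, Measure.restrict_univ,
      ← ofReal_integral_eq_lintegral_ofReal (hw.div_const Z)
        (ae_of_all _ fun x => div_nonneg (hw0 x) hZ.le), integral_div, ← hZd, div_self hZ.ne',
      ENNReal.ofReal_one]
  have hInteg : ∀ f : α → ℝ, ∫ x, f x ∂ν = (∫ x, f x * w x ∂μ) / Z := by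
    intro f
    rw [hν, integral_withDensity_eq_integral_toReal_smul₀ hmeas (ae_of_all _ fun x => ENNReal.ofReal_lt_top),
      ← integral_div]
    refine integral_congr_ae (ae_of_all _ fun x => ?_)
    simp only [smul_eq_mul]
    rw [ENNReal.toReal_ofReal (div_nonneg (hw0 x) hZ.le)]
    ring
  have hac : ν ≪ μ := withDensity_absolutelyContinuous _ _
  obtain ⟨c, hc⟩ := jensen_const (ν := ν) (hm.mono_ac hac) (ae_of_all _ h01) hp (by
    rw [hInteg, hInteg]
    have i1 : 0 ≤ ∫ x, m x ^ p * w x ∂μ := integral_nonneg fun x =>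
      mul_nonneg (rpow_nonneg (h01 x).1 _) (hw0 x)
    have i2 : 0 ≤ ∫ x, (1 - m x) ^ p * w x ∂μ := integral_nonneg fun x =>
      mul_nonneg (rpow_nonneg (by linarith [(h01 x).2]) _) (hw0 x)
    rw [Real.div_rpow i1 hZ.le, Real.div_rpow i2 hZ.le, ← add_div, div_le_one (by positivity)]
    exact h)
  refine ⟨c, ?_⟩
  rw [hν, ae_withDensity_iff' hmeas] at hc
  filter_upwards [hc] with x hx hne
  refine hx ?_
  have : 0 < w x / Z := div_pos (lt_of_le_of_ne (hw0 x) hne.symm) hZ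
  simpa using this

lemma eq_two_level {N : ℕ} (hN : 2 ≤ N) {u : Euc N → ℝ} (hu : MemBV N u)
    (heq : tv N u = C0 N * (∫ x, |u x| ^ pp N) ^ (1 / pp N)) :
    ∃ c, ∀ᵐ x, u x ≠ 0 → u x = c := by
  have hp := pp_gt hN
  have hC := C0_pos hN
  let r : ℝ → ℝ := fun s => (1 + s / (√(1 + s^2) + 1)) / 2
  have hpos : ∀ s : ℝ, 0 < 1 + s^2 := fun s => by positivity
  have hsq : ∀ s : ℝ, 0 < √(1 + s^2) := fun s => Real.sqrt_pos.2 (hpos s)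
  have hlt : ∀ s : ℝ, |s| < √(1 + s^2) := fun s => by
    rw [← Real.sqrt_sq_eq_abs]
    exact Real.sqrt_lt_sqrt (sq_nonneg s) (by linarith)
  have hr : ∀ s, 0 ≤ r s ∧ r s ≤ 1 := fun s => by
    have h1 : |s / (√(1 + s^2) + 1)| ≤ 1 := by
      rw [abs_div, abs_of_pos (by linarith [hsq s] : 0 < √(1 + s^2) + 1),
        div_le_one (by linarith [hsq s])]
      linarith [hlt s]
    rw [abs_le] at h1
    simp only [r]
    constructor <;> linarith [h1.1, h1.2]
  have hrc : Continuous r := by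
    refine (continuous_const.add (continuous_id.div (by fun_prop) fun s => ?_)).div_const _
    linarith [hsq s]
  let G : ℝ → ℝ := fun s => (s + √(1 + s^2) - 1) / 2
  let H : ℝ → ℝ := fun s => (s - (√(1 + s^2) - 1)) / 2
  have hGr : ∀ s, G s = r s * s := fun s => by
    have := Real.sq_sqrt (hpos s).le
    have := hsq s
    simp only [G, r]
    field_simp
    nlinarith
  have hHr : ∀ s, H s = (1 - r s) * s := fun s => by
    have := hGr s
    simp only [G] at this
    simp only [H]
    linarith
  have hS : ContDiff ℝ 2 (fun s : ℝ => √(1 + s^2)) := ContDiff.sqrt (by fun_prop) fun s => (hpos s).ne'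
  have hSd : ∀ s, HasDerivAt (fun s : ℝ => √(1 + s^2)) (s / √(1 + s^2)) s := fun s => by
    have h1 : HasDerivAt (fun s : ℝ => 1 + s^2) (2*s) s := by
      simpa using (hasDerivAt_pow 2 s).const_add 1
    refine (h1.sqrt (hpos s).ne').congr_deriv ?_
    rw [mul_div_mul_left _ _ two_ne_zero]
  have hG : ContDiff ℝ 2 G := ((contDiff_id.add hS).sub contDiff_const).div_const _
  have hH : ContDiff ℝ 2 H := (contDiff_id.sub (hS.sub contDiff_const)).div_const _
  have hd : ∀ s, |deriv G s| + |deriv H s| ≤ 1 := fun s => by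
    have h1 : HasDerivAt G ((1 + s / √(1 + s^2)) / 2) s :=
      (((hasDerivAt_id s).add (hSd s)).sub_const 1).div_const 2
    have h2 : HasDerivAt H ((1 - s / √(1 + s^2)) / 2) s :=
      ((hasDerivAt_id s).sub ((hSd s).sub_const 1)).div_const 2
    have h3 : |s / √(1 + s^2)| ≤ 1 := by
      rw [abs_div, abs_of_pos (hsq s), div_le_one (hsq s)]
      exact (hlt s).le
    rw [abs_le] at h3
    rw [h1.deriv, h2.deriv, abs_of_nonneg (by linarith [h3.1]), abs_of_nonneg (by linarith [h3.2])]
    linarith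
  have key := comp_pair hu hG hH hd (by simp [G]) (by simp [H])
  have s1 := (sobolev hN key.1).2
  have s2 := (sobolev hN key.2.1).2
  have su := sobolev hN hu
  have e1 : ∀ x, |G (u x)| ^ pp N = r (u x) ^ pp N * |u x| ^ pp N := fun x => by
    rw [hGr, abs_mul, abs_of_nonneg (hr _).1, Real.mul_rpow (hr _).1 (abs_nonneg _)]
  have e2 : ∀ x, |H (u x)| ^ pp N = (1 - r (u x)) ^ pp N * |u x| ^ pp N := fun x => by
    have : 0 ≤ 1 - r (u x) := by linarith [(hr (u x)).2]
    rw [hHr, abs_mul, abs_of_nonneg this, Real.mul_rpow this (abs_nonneg _)]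
  simp_rw [e1] at s1
  simp_rw [e2] at s2
  obtain ⟨c, hc⟩ := weighted_const (w := fun x => |u x| ^ pp N) (m := fun x => r (u x)) su.1
    (fun x => by positivity) (hrc.comp_aestronglyMeasurable hu.1.1) (fun x => hr _) hp (by
      have := key.2.2
      rw [heq] at this
      nlinarith)
  have hinj : StrictMono r := by
    have hd : ∀ s, HasDerivAt r ((((√(1 + s^2) + 1) - s * (s / √(1 + s^2))) /
        (√(1 + s^2) + 1)^2) / 2) s := fun s => by
      have h1 := (hasDerivAt_id s).div ((hSd s).add_const 1) (by linarith [hsq s])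
      refine ((h1.const_add 1).div_const 2).congr_deriv ?_
      simp
    refine strictMono_of_deriv_pos fun s => ?_
    rw [(hd s).deriv]
    have h1 := hsq s
    have h2 := Real.sq_sqrt (hpos s).le
    refine div_pos (div_pos ?_ (by positivity)) two_pos
    have : s * (s / √(1 + s^2)) < √(1 + s^2) := by
      rw [← mul_div_assoc, div_lt_iff₀ h1]
      nlinarith
    linarith
  by_cases hex : ∃ s, r s = c
  · obtain ⟨s, hs⟩ := hex
    refine ⟨s, ?_⟩
    filter_upwards [hc] with x hx hne
    refine hinj.injective ((hx ?_).trans hs.symm)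
    exact (rpow_pos_of_pos (abs_pos.2 hne) _).ne'
  · refine ⟨0, ?_⟩
    filter_upwards [hc] with x hx hne
    exact absurd ⟨u x, hx (rpow_pos_of_pos (abs_pos.2 hne) _).ne'⟩ hex


lemma split_tv {N : ℕ} {u g B : Euc N → ℝ} (hu : MemBV N u) (hu0 : ∀ x, 0 ≤ u x)
    (hg : ContDiff ℝ 1 g) (hg01 : ∀ x, 0 ≤ g x ∧ g x ≤ 1) (hB : ∀ x, ‖fderiv ℝ g x‖ ≤ B x)
    (hBi : Integrable (fun x => u x * B x)) :
    MemBV N (fun x => u x * g x) ∧ MemBV N (fun x => u x * (1 - g x)) ∧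
    tv N (fun x => u x * g x) + tv N (fun x => u x * (1 - g x)) ≤ tv N u + 2 * ∫ x, u x * B x := by
  have hg1 : ContDiff ℝ 1 (fun x => 1 - g x) := contDiff_const.sub hg
  have i1 : Integrable (fun x => u x * g x) :=
    hu.1.mul_bdd (c := 1) hg.continuous.aestronglyMeasurable (ae_of_all _ fun x => by
      rw [Real.norm_of_nonneg (hg01 x).1]; exact (hg01 x).2)
  have i2 : Integrable (fun x => u x * (1 - g x)) :=
    hu.1.mul_bdd (c := 1) hg1.continuous.aestronglyMeasurable (ae_of_all _ fun x => by
      rw [Real.norm_of_nonneg (by linarith [(hg01 x).2])]; linarith [(hg01 x).1])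
  have hterm : ∀ ψ : Euc N → Euc N, Adm N ψ → Integrable (fun x => u x * fderiv ℝ g x (ψ x)) ∧
      |∫ x, u x * fderiv ℝ g x (ψ x)| ≤ ∫ x, u x * B x := by
    intro ψ hψ
    have hb : ∀ x, |u x * fderiv ℝ g x (ψ x)| ≤ u x * B x := fun x => by
      rw [abs_mul, abs_of_nonneg (hu0 x)]
      refine mul_le_mul_of_nonneg_left ?_ (hu0 x)
      refine ((fderiv ℝ g x).le_opNorm (ψ x)).trans ?_
      exact (mul_le_of_le_one_right (norm_nonneg _) (hψ.2.2 x)).trans (hB x)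
    have hi : Integrable (fun x => u x * fderiv ℝ g x (ψ x)) :=
      hBi.mono' (hu.1.1.mul ((hg.continuous_fderiv one_ne_zero).clm_apply
        hψ.1.continuous).aestronglyMeasurable) (ae_of_all _ hb)
    exact ⟨hi, abs_integral_le_integral_abs.trans (integral_mono hi.abs hBi hb)⟩
  refine tv_pair i1 i2 fun ψ φ hψ hφ => ?_
  have adm : Adm N (fun x => g x • ψ x + (1 - g x) • φ x) := by
    refine ⟨(hg.smul hψ.1).add (hg1.smul hφ.1), ?_, fun x => ?_⟩
    · refine HasCompactSupport.add ?_ ?_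
      · exact hψ.2.1.smul_left (f := g)
      · exact hφ.2.1.smul_left (f := fun x => 1 - g x)
    · refine (norm_add_le _ _).trans ?_
      rw [norm_smul, norm_smul, Real.norm_of_nonneg (hg01 x).1,
        Real.norm_of_nonneg (by linarith [(hg01 x).2])]
      have h1 := mul_le_mul_of_nonneg_left (hψ.2.2 x) (hg01 x).1
      have h2 := mul_le_mul_of_nonneg_left (hφ.2.2 x) (show 0 ≤ 1 - g x by linarith [(hg01 x).2])
      linarith
  have key := tv_ge hu adm
  have e : ∀ x, u x * dv N (fun x => g x • ψ x + (1 - g x) • φ x) x =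
      ((u x * g x * dv N ψ x) + (u x * (1 - g x) * dv N φ x)) +
      (u x * fderiv ℝ g x (ψ x) - u x * fderiv ℝ g x (φ x)) := by
    intro x
    rw [dv_add (ψ := fun y => g y • ψ y) (φ := fun y => (1 - g y) • φ y) (hg.smul hψ.1) (hg1.smul hφ.1), dv_smul hψ.1 hg, dv_smul hφ.1 hg1,
      fderiv_const_sub]
    simp only [ContinuousLinearMap.neg_apply]
    ring
  simp_rw [e] at key
  have j1 := int_mul_dv hψ.1 hψ.2.1 i1
  have j2 := int_mul_dv hφ.1 hφ.2.1 i2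
  have t1 := hterm ψ hψ
  have t2 := hterm φ hφ
  have j12 : Integrable (fun x => (u x * g x * dv N ψ x) + (u x * (1 - g x) * dv N φ x)) := j1.add j2
  have j34 : Integrable (fun x => u x * fderiv ℝ g x (ψ x) - u x * fderiv ℝ g x (φ x)) := t1.1.sub t2.1
  rw [integral_add j12 j34, integral_add j1 j2, integral_sub t1.1 t2.1] at key
  have h1 := abs_le.1 t1.2
  have h2 := abs_le.1 t2.2
  linarith [h1.1, h2.2]

lemma Mix.d_first_cont {N : ℕ} (m : Mix N) (hm : m.mass = 1) {j : Fin N} (hj : j.val = 0) :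
    Continuous (m.d j) := by
  have h := (coord_contDiff (m.T_C hm) j).continuous_fderiv one_ne_zero
  have : m.d j = fun x => fderiv ℝ (fun y => m.T y j) x (EuclideanSpace.single j 1) := by
    funext x
    rw [m.T_first_fderiv hm hj]; simp
  rw [this]
  exact h.clm_apply continuous_const

lemma root_deficit {a b ε : ℝ} (ha : 0 ≤ a) (hb : 0 ≤ b) (hε : 0 < ε) :
    |a - b| ≤ (1 + 1/ε) * (√a - √b)^2 + ε * b := by
  have ha2 := Real.sq_sqrt ha
  have hb2 := Real.sq_sqrt hb
  set s := √a
  set t := √b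
  have ht : 0 ≤ t := Real.sqrt_nonneg b
  rw [← ha2, ← hb2]
  have h1 : 0 ≤ (1/ε) * (|s - t| - ε * t)^2 := by positivity
  have h2 : (1/ε) * (|s - t| - ε * t)^2 = (1/ε) * (s-t)^2 - 2 * t * |s - t| + ε * t^2 := by
    rw [sub_sq, sq_abs]; field_simp
  have h3 : |s^2 - t^2| ≤ (s-t)^2 + 2 * t * |s - t| := by
    have : s^2 - t^2 = (s-t)^2 + 2*t*(s-t) := by ring
    rw [this]
    refine (abs_add_le _ _).trans ?_
    rw [abs_of_nonneg (sq_nonneg _), abs_mul, abs_of_nonneg (by positivity : 0 ≤ 2 * t)]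
  linarith

/-- The indicator of an extremal set. -/
structure ExtSet (N : ℕ) (E : Set (Euc N)) : Prop where
  meas : MeasurableSet E
  fin : volume E ≠ ⊤
  pos : volume E ≠ 0
  bv : MemBV N (E.indicator fun _ => 1)
  eq : tv N (E.indicator fun _ => 1) ≤ C0 N * (volume E).toReal ^ (1 / pp N)

namespace ExtSet

variable {N : ℕ} {E : Set (Euc N)}

lemma V_pos (h : ExtSet N E) : 0 < (volume E).toReal := ENNReal.toReal_pos h.pos h.fin

lemma int_chi (h : ExtSet N E) : ∫ x, E.indicator (fun _ => (1:ℝ)) x = (volume E).toReal := by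
  rw [integral_indicator h.meas]
  simp [Measure.real]

/-- the constant `c` -/
def cc (N : ℕ) (E : Set (Euc N)) : ℝ := (om N / (volume E).toReal) ^ ((1:ℝ) / N)

lemma cc_pos (h : ExtSet N E) : 0 < cc N E := rpow_pos_of_pos (div_pos (om_pos N) h.V_pos) _

lemma tv_le (hN : 2 ≤ N) (h : ExtSet N E) :
    tv N (E.indicator fun _ => 1) ≤ N * (cc N E * (volume E).toReal) := by
  refine h.eq.trans (le_of_eq ?_)
  unfold C0 cc
  have hV := h.V_pos
  rw [pp_inv hN, Real.div_rpow (om_pos N).le hV.le, Real.rpow_sub hV, Real.rpow_one]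
  ring

lemma approx (hN : 2 ≤ N) (h : ExtSet N E) : ∃ m : ℕ → Mix N, (∀ n, (m n).mass = 1) ∧
    Tendsto (fun n => ∫ x, |(m n).dens x - E.indicator (fun _ => (1:ℝ)) x / (volume E).toReal|)
      atTop (𝓝 0) ∧
    ∀ j : Fin N, j.val = 0 → (∀ n, Integrable (fun x => E.indicator (fun _ => (1:ℝ)) x *
      |(m n).d j x - cc N E|)) ∧ Tendsto (fun n => ∫ x, E.indicator (fun _ => (1:ℝ)) x *
      |(m n).d j x - cc N E|) atTop (𝓝 0) := by
  have hN0 : 0 < N := by omega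
  have hNr : (0:ℝ) < N := by exact_mod_cast hN0
  have hV := h.V_pos
  have hc := h.cc_pos
  have hle := h.tv_le hN
  have hInteg := h.int_chi
  have hbv := h.bv
  set c := cc N E with hcdef
  set V := (volume E).toReal with hVdef
  set χ : Euc N → ℝ := E.indicator (fun _ => (1:ℝ)) with hχ
  have hχ0 : ∀ x, 0 ≤ χ x := fun x => Set.indicator_nonneg (by simp) x
  have hχ01 : ∀ x, χ x = 0 ∨ χ x = 1 := fun x => by
    by_cases hx : x ∈ E <;> simp [hχ, hx]
  have hχi : Integrable χ := hbv.1
  obtain ⟨m, hm, hae, hL1⟩ := mix_dense hN0 (hχi.div_const V)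
    (ae_of_all _ fun x => div_nonneg (hχ0 x) hV.le)
    (by rw [integral_div, hInteg, div_self hV.ne'])
  refine ⟨m, hm, hL1, fun j hj => ?_⟩
  let γ : ℕ → Euc N → ℝ := fun n x => (om N * (m n).dens x) ^ ((1:ℝ)/N)
  have hγ0 : ∀ n x, 0 ≤ γ n x := fun n x =>
    rpow_nonneg (mul_nonneg (om_pos N).le ((m n).dens_nonneg x)) _
  have hγ : ∀ n, Integrable (fun x => χ x * γ n x) ∧ ∫ x, χ x * γ n x ≤ c * V := by
    intro n
    have h1 := mix_ineq' hN0 hbv (ae_of_all _ hχ0) (m n) (hm n)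
    have e : ∀ x, χ x * (N * (om N * (m n).dens x) ^ ((1:ℝ)/N)) = N * (χ x * γ n x) := fun x => by
      simp only [γ]; ring
    simp_rw [e] at h1
    rw [integral_const_mul] at h1
    have i1 : Integrable (fun x => χ x * γ n x) := by
      have := h1.1.const_mul (N:ℝ)⁻¹
      simpa [← mul_assoc, inv_mul_cancel₀ hNr.ne'] using this
    exact ⟨i1, le_of_mul_le_mul_left (h1.2.trans hle) hNr⟩
  have hγlim : Tendsto (fun n => ∫ x, |χ x * γ n x - χ x * c|) atTop (𝓝 0) := by
    refine l1_conv (fun n => (hγ n).1) (hχi.mul_const c) ?_ fun n => ?_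
    · filter_upwards [hae] with x hx
      rcases hχ01 x with h0 | h1
      · simp [h0]
      · rw [h1] at hx ⊢
        have hcont : Continuous (fun t : ℝ => (om N * t) ^ ((1:ℝ) / N)) :=
          Continuous.rpow_const (by fun_prop) fun t => Or.inr (by positivity)
        have := ((hcont.tendsto _).comp hx).const_mul 1
        rw [mul_one_div] at this
        exact this
    · simp_rw [abs_of_nonneg (mul_nonneg (hχ0 _) (hγ0 n _)), abs_of_nonneg (mul_nonneg (hχ0 _) hc.le)]
      rw [integral_mul_const, hInteg, mul_comm V]
      exact (hγ n).2
  have hγlim2 : Tendsto (fun n => ∫ x, χ x * γ n x) atTop (𝓝 (c * V)) := by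
    have e : c * V = ∫ x, χ x * c := by rw [integral_mul_const, hInteg, mul_comm]
    rw [e, tendsto_iff_dist_tendsto_zero]
    refine squeeze_zero (fun _ => dist_nonneg) (fun n => ?_) hγlim
    rw [Real.dist_eq, ← integral_sub (hγ n).1 (hχi.mul_const c)]
    exact abs_integral_le_integral_abs
  have hd0 : ∀ n x, 0 ≤ (m n).d j x := fun n x => ((m n).d_pos (hm n) j x).le
  have hdi : ∀ n, Integrable (fun x => χ x * (m n).d j x) := fun n => by
    refine (mix_ineq hbv (ae_of_all _ hχ0) (m n) (hm n)).1.mono'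
      (hχi.1.mul ((m n).d_first_cont (hm n) hj).aestronglyMeasurable) (ae_of_all _ fun x => ?_)
    rw [Real.norm_of_nonneg (mul_nonneg (hχ0 x) (hd0 n x))]
    exact mul_le_mul_of_nonneg_left (Finset.single_le_sum (f := fun j => (m n).d j x)
      (fun j _ => ((m n).d_pos (hm n) j x).le) (Finset.mem_univ j)) (hχ0 x)
  let δ : ℕ → ℝ := fun n => N * (c * V) - N * ∫ x, χ x * γ n x
  have hδ : Tendsto δ atTop (𝓝 0) := by
    have := (hγlim2.const_mul (N:ℝ)).const_sub (N * (c * V))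
    rwa [sub_self] at this
  have hdγ : ∀ n, ∀ ε > 0, ∫ x, |χ x * (m n).d j x - χ x * γ n x| ≤ (1 + 1/ε) * δ n + ε * (c * V) := by
    intro n ε hε
    have hs := mix_ineq hbv (ae_of_all _ hχ0) (m n) (hm n)
    have i3 : Integrable (fun x => χ x * ∑ j, (m n).d j x - N * (χ x * γ n x)) :=
      hs.1.sub ((hγ n).1.const_mul _)
    have hpt : ∀ x, |χ x * (m n).d j x - χ x * γ n x| ≤
        (1 + 1/ε) * (χ x * ∑ j, (m n).d j x - N * (χ x * γ n x)) + ε * (χ x * γ n x) := by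
      intro x
      rw [← mul_sub, abs_mul, abs_of_nonneg (hχ0 x)]
      have h1 := root_deficit (hd0 n x) (hγ0 n x) hε
      have h2 := amgm_deficit hN0 (z := fun j => (m n).d j x) (fun j => ((m n).d_pos (hm n) j x).le) j
      rw [(m n).d_prod (hm n)] at h2
      have h3 : (1 + 1/ε) * (√((m n).d j x) - √(γ n x))^2 ≤
          (1 + 1/ε) * (∑ j, (m n).d j x - N * γ n x) :=
        mul_le_mul_of_nonneg_left h2 (by positivity)
      have h4 := mul_le_mul_of_nonneg_left (h1.trans (add_le_add_left h3 _)) (hχ0 x)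
      calc _ ≤ _ := h4
        _ = _ := by ring
    have hI : Integrable (fun x => |χ x * (m n).d j x - χ x * γ n x|) := ((hdi n).sub (hγ n).1).abs
    have h5 := integral_mono hI ((i3.const_mul (1 + 1/ε)).add ((hγ n).1.const_mul ε)) hpt
    refine h5.trans ?_
    simp only [Pi.add_apply]
    rw [integral_add (i3.const_mul (1 + 1/ε)) ((hγ n).1.const_mul ε), integral_const_mul,
      integral_const_mul, integral_sub hs.1 ((hγ n).1.const_mul _), integral_const_mul]
    have h6 := hs.2.trans hle
    have h7 := (hγ n).2
    simp only [δ]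
    gcongr
  have hdlim : Tendsto (fun n => ∫ x, |χ x * (m n).d j x - χ x * γ n x|) atTop (𝓝 0) := by
    rw [Metric.tendsto_atTop]
    intro η hη
    have hcV : 0 < c * V := by positivity
    let ε := η / (2 * (c * V))
    have hε : 0 < ε := by positivity
    have h1 : Tendsto (fun n => (1 + 1/ε) * δ n + ε * (c * V)) atTop (𝓝 ((1 + 1/ε) * 0 + ε * (c * V))) :=
      (hδ.const_mul _).add_const _
    have h2 : (1 + 1/ε) * 0 + ε * (c * V) < η := by
      simp only [ε, mul_zero, zero_add]
      have : η / (2 * (c * V)) * (c * V) = η / 2 := by field_simp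
      rw [this]; linarith
    obtain ⟨n0, hn0⟩ := eventually_atTop.1 (h1.eventually (gt_mem_nhds h2))
    refine ⟨n0, fun n hn => ?_⟩
    rw [Real.dist_eq, sub_zero, abs_of_nonneg (integral_nonneg fun x => abs_nonneg _)]
    exact (hdγ n ε hε).trans_lt (hn0 n hn)
  have he : ∀ n x, χ x * |(m n).d j x - c| = |χ x * (m n).d j x - χ x * c| := fun n x => by
    rw [← mul_sub, abs_mul, abs_of_nonneg (hχ0 x)]
  simp_rw [he]
  refine ⟨fun n => ((hdi n).sub (hχi.mul_const c)).abs, ?_⟩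
  refine squeeze_zero (fun n => integral_nonneg fun x => abs_nonneg _)
    (fun n => l1_tri (hdi n) (hγ n).1 (hχi.mul_const c)) ?_
  simpa using hdlim.add hγlim

end ExtSet


lemma abs_coord_le {N : ℕ} (v : Euc N) (j : Fin N) : |v j| ≤ ‖v‖ := by
  have := PiLp.norm_apply_le v j
  simpa using this

namespace ExtSet

variable {N : ℕ} {E : Set (Euc N)}

lemma first_coord (hN : 2 ≤ N) (h : ExtSet N E) (j : Fin N) (hj : j.val = 0) :
    IntegrableOn (fun x : Euc N => x j) E ∧
    ∀ᵐ x : Euc N, x ∈ E → |x j - (∫ y in E, y j) / (volume E).toReal| ≤ 1 / cc N E := by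
  have hN0 : 0 < N := by omega
  obtain ⟨m, hm, hL1, happ⟩ := h.approx hN
  obtain ⟨hdi, hdl⟩ := happ j hj
  have hV := h.V_pos
  have hc := h.cc_pos
  have hle := h.eq
  have hInteg := h.int_chi
  have hbv := h.bv
  have hp := pp_gt hN
  have hp0 : 0 < pp N := by linarith
  set c := cc N E with hcdef
  set V := (volume E).toReal with hVdef
  set χ : Euc N → ℝ := E.indicator (fun _ => (1:ℝ)) with hχ
  have hχ0 : ∀ x, 0 ≤ χ x := fun x => Set.indicator_nonneg (by simp) x
  have hχ01 : ∀ x, χ x = 0 ∨ χ x = 1 := fun x => by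
    by_cases hx : x ∈ E <;> simp [hχ, hx]
  have hχi : Integrable χ := hbv.1
  have hχm : Measurable χ := measurable_const.indicator h.meas
  -- limit of the first component
  let F : ℝ → ℝ := fun t => ∫ x : Euc N, (Set.Iic t).indicator (fun _ => (1:ℝ)) (x j) * (χ x / V)
  let T : Euc N → ℝ := fun x => -cos (ang N (F (x j)))
  have hind : ∀ t : ℝ, Measurable (fun x : Euc N => (Set.Iic t).indicator (fun _ => (1:ℝ)) (x j)) :=
    fun t => (measurable_const.indicator measurableSet_Iic).comp
      (by fun_prop : Continuous (fun x : Euc N => x j)).measurable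
  have hind1 : ∀ (t : ℝ) (x : Euc N), |(Set.Iic t).indicator (fun _ => (1:ℝ)) (x j)| ≤ 1 := by
    intro t x
    by_cases hx : x j ∈ Set.Iic t
    · simp [Set.indicator_of_mem hx]
    · simp [Set.indicator_of_notMem hx]
  have hFl : ∀ t, Tendsto (fun n => ∑ i, (m n).a i * (m n).P i j t) atTop (𝓝 (F t)) := by
    intro t
    rw [tendsto_iff_dist_tendsto_zero]
    refine squeeze_zero (fun _ => dist_nonneg) (fun n => ?_) hL1
    rw [← (m n).dens_cdf j t, Real.dist_eq]
    have i1 : Integrable (fun x : Euc N => (Set.Iic t).indicator (fun _ => (1:ℝ)) (x j) * (m n).dens x) :=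
      ((m n).dens_integrable hN0).bdd_mul (c := 1) (hind t).aestronglyMeasurable
        (ae_of_all _ (hind1 t))
    have i2 : Integrable (fun x : Euc N => (Set.Iic t).indicator (fun _ => (1:ℝ)) (x j) * (χ x / V)) :=
      (hχi.div_const V).bdd_mul (c := 1) (hind t).aestronglyMeasurable
        (ae_of_all _ (hind1 t))
    simp only [F]
    rw [← integral_sub i1 i2]
    refine abs_integral_le_integral_abs.trans (integral_mono (i1.sub i2).abs
      (((m n).dens_integrable hN0).sub (hχi.div_const V)).abs fun x => ?_)
    simp only []
    rw [← mul_sub, abs_mul]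
    exact mul_le_of_le_one_left (abs_nonneg _) (hind1 t x)
  have hTl : ∀ x, Tendsto (fun n => (m n).T x j) atTop (𝓝 (T x)) := by
    intro x
    have : ∀ n, (m n).T x j = -cos (ang N (∑ i, (m n).a i * (m n).P i j (x j))) := fun n =>
      (m n).T_first (hm n) hj x
    simp_rw [this]
    have hcont : Continuous (fun t => -cos (ang N t)) :=
      (continuous_cos.comp (ang_continuous N)).neg
    exact (hcont.tendsto _).comp (hFl (x j))
  have hTc : ∀ n, Continuous (fun x => (m n).T x j) := fun n =>
    (coord_contDiff ((m n).T_C (hm n)) j).continuous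
  have hTm : Measurable T := measurable_of_tendsto_metrizable (fun n => (hTc n).measurable)
    (tendsto_pi_nhds.2 hTl)
  have hT1 : ∀ x, |T x| ≤ 1 := fun x => by
    simp only [T, abs_neg]; exact abs_cos_le_one _
  have hTn1 : ∀ n x, |(m n).T x j| ≤ 1 := fun n x => (abs_coord_le _ j).trans ((m n).T_norm x)
  -- splitting
  let g : ℕ → Euc N → ℝ := fun n x => sigmoid ((m n).T x j - c * x j)
  let G : Euc N → ℝ := fun x => sigmoid (T x - c * x j)
  have hxc : Continuous (fun x : Euc N => x j) := by fun_prop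
  have hGm : Measurable G := continuous_sigmoid.measurable.comp
    (hTm.sub (measurable_const.mul hxc.measurable))
  have hgl : ∀ x, Tendsto (fun n => g n x) atTop (𝓝 (G x)) := fun x =>
    (continuous_sigmoid.tendsto _).comp ((hTl x).sub_const _)
  have hinner : ∀ n, ContDiff ℝ 1 (fun x : Euc N => (m n).T x j - c * x j) := fun n =>
    (coord_contDiff ((m n).T_C (hm n)) j).sub (contDiff_const.mul (by fun_prop))
  have hgC : ∀ n, ContDiff ℝ 1 (g n) := fun n =>
    (contDiff_sigmoid.of_le le_top).comp (hinner n)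
  have hgc : ∀ n, Continuous (g n) := fun n => (hgC n).continuous
  have hg01 : ∀ n x, 0 ≤ g n x ∧ g n x ≤ 1 := fun n x => ⟨sigmoid_nonneg _, sigmoid_le_one _⟩
  have hG01 : ∀ x, 0 ≤ G x ∧ G x ≤ 1 := fun x => ⟨sigmoid_nonneg _, sigmoid_le_one _⟩
  have hgB : ∀ n x, ‖fderiv ℝ (g n) x‖ ≤ |(m n).d j x - c| := by
    intro n x
    have d1 : DifferentiableAt ℝ (fun x : Euc N => (m n).T x j) x :=
      (coord_contDiff ((m n).T_C (hm n)) j).differentiable one_ne_zero x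
    have d2 : HasFDerivAt (fun x : Euc N => c * x j) (c • (EuclideanSpace.proj j : Euc N →L[ℝ] ℝ)) x :=
      (EuclideanSpace.proj j : Euc N →L[ℝ] ℝ).hasFDerivAt.const_mul c
    have d3 := (hasDerivAt_sigmoid ((m n).T x j - c * x j)).comp_hasFDerivAt x
      (d1.hasFDerivAt.sub d2)
    have d4 : fderiv ℝ (g n) x = _ := d3.fderiv
    rw [d4]
    refine ContinuousLinearMap.opNorm_le_bound _ (abs_nonneg _) fun v => ?_
    have hs0 := sigmoid_nonneg ((m n).T x j - c * x j)
    have hs1 := sigmoid_le_one ((m n).T x j - c * x j)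
    set s := sigmoid ((m n).T x j - c * x j)
    have e : ((s * (1 - s)) • (fderiv ℝ (fun x : Euc N => (m n).T x j) x -
        c • (EuclideanSpace.proj j : Euc N →L[ℝ] ℝ))) v = (s * (1 - s)) * (((m n).d j x - c) * v j) := by
      have e0 := (m n).T_first_fderiv (hm n) hj x v
      simp [e0]; left; ring
    rw [e, Real.norm_eq_abs, abs_mul, abs_mul ((m n).d j x - c)]
    have h1 : |s * (1 - s)| ≤ 1 := by rw [abs_le]; constructor <;> nlinarith
    have h2 := abs_coord_le v j
    have h3 : |(m n).d j x - c| * |v j| ≤ |(m n).d j x - c| * ‖v‖ :=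
      mul_le_mul_of_nonneg_left h2 (abs_nonneg _)
    exact (mul_le_of_le_one_left (by positivity) h1).trans h3
  have hlim : ∀ (φ : ℕ → Euc N → ℝ) (Φ : Euc N → ℝ), (∀ n, Continuous (φ n)) →
      (∀ n x, 0 ≤ φ n x ∧ φ n x ≤ 1) → (∀ x, Tendsto (fun n => φ n x) atTop (𝓝 (Φ x))) →
      Tendsto (fun n => ∫ x, |χ x * φ n x| ^ pp N) atTop (𝓝 (∫ x, Φ x ^ pp N * χ x)) := by
    intro φ Φ h1 h2 h3
    refine tendsto_integral_of_dominated_convergence χ (fun n => ?_) hχi (fun n => ?_) ?_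
    · exact ((hχm.mul (h1 n).measurable).abs.pow_const _).aestronglyMeasurable
    · refine ae_of_all _ fun x => ?_
      rw [Real.norm_of_nonneg (rpow_nonneg (abs_nonneg _) _)]
      rcases hχ01 x with h | h <;> rw [h]
      · simp [hp0.ne']
      · rw [one_mul]; exact rpow_le_one (abs_nonneg _) (by rw [abs_of_nonneg (h2 n x).1]; exact (h2 n x).2) hp0.le
    · refine ae_of_all _ fun x => ?_
      rcases hχ01 x with h | h <;> rw [h]
      · simp [hp0.ne']
      · simp only [one_mul, mul_one]
        have : ∀ n, |φ n x| = φ n x := fun n => abs_of_nonneg (h2 n x).1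
        simp_rw [this]
        exact (h3 x).rpow_const (Or.inr hp0.le)
  have l1 := hlim g G hgc hg01 hgl
  have l2 := hlim (fun n x => 1 - g n x) (fun x => 1 - G x) (fun n => continuous_const.sub (hgc n))
    (fun n x => ⟨by linarith [(hg01 n x).2], by linarith [(hg01 n x).1]⟩)
    (fun x => (hgl x).const_sub 1)
  have hkey : ∀ n, C0 N * (∫ x, |χ x * g n x| ^ pp N) ^ (1 / pp N) +
      C0 N * (∫ x, |χ x * (1 - g n x)| ^ pp N) ^ (1 / pp N) ≤
      C0 N * V ^ (1 / pp N) + 2 * ∫ x, χ x * |(m n).d j x - c| := by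
    intro n
    obtain ⟨b1, b2, b3⟩ := split_tv hbv hχ0 (hgC n) (hg01 n) (hgB n) (hdi n)
    have s1 := (sobolev hN b1).2
    have s2 := (sobolev hN b2).2
    linarith
  have hp1 : 0 ≤ 1 / pp N := by positivity
  have hfin := le_of_tendsto_of_tendsto'
    (((l1.rpow_const (Or.inr hp1)).const_mul (C0 N)).add ((l2.rpow_const (Or.inr hp1)).const_mul (C0 N)))
    ((hdl.const_mul 2).const_add (C0 N * V ^ (1 / pp N))) hkey
  rw [mul_zero, add_zero, ← mul_add] at hfin
  have hfin2 := le_of_mul_le_mul_left hfin (C0_pos hN)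
  rw [← hInteg] at hfin2
  obtain ⟨s, hs⟩ := weighted_const hχi hχ0 hGm.aestronglyMeasurable hG01 hp hfin2
  have hb : ∃ b, ∀ᵐ x, x ∈ E → T x - c * x j = b := by
    by_cases hex : ∃ b, sigmoid b = s
    · obtain ⟨b, hb⟩ := hex
      refine ⟨b, hs.mono fun x hx hxE => ?_⟩
      have := hx (by simp [hχ, hxE])
      rw [← hb] at this
      exact sigmoid_injective this
    · refine ⟨0, hs.mono fun x hx hxE => ?_⟩
      exact absurd ⟨_, hx (by simp [hχ, hxE])⟩ hex
  obtain ⟨b, hb⟩ := hb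
  -- mean zero
  have hTχ : Integrable (fun x => T x * (χ x / V)) :=
    (hχi.div_const V).bdd_mul (c := 1) hTm.aestronglyMeasurable (ae_of_all _ hT1)
  have hT0 : ∫ x, T x * (χ x / V) = 0 := by
    have hTnχ : ∀ n, Integrable (fun x => (m n).T x j * (χ x / V)) := fun n =>
      (hχi.div_const V).bdd_mul (c := 1) (hTc n).aestronglyMeasurable (ae_of_all _ (hTn1 n))
    have t1 : Tendsto (fun n => ∫ x, (m n).T x j * (χ x / V)) atTop (𝓝 (∫ x, T x * (χ x / V))) := by
      refine tendsto_integral_of_dominated_convergence (fun x => χ x / V)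
        (fun n => (hTnχ n).1) (hχi.div_const V) (fun n => ae_of_all _ fun x => ?_)
        (ae_of_all _ fun x => (hTl x).mul_const _)
      rw [norm_mul, Real.norm_of_nonneg (div_nonneg (hχ0 x) hV.le)]
      exact mul_le_of_le_one_left (div_nonneg (hχ0 x) hV.le) (hTn1 n x)
    have t2 : Tendsto (fun n => ∫ x, (m n).T x j * (χ x / V)) atTop (𝓝 0) := by
      rw [tendsto_zero_iff_abs_tendsto_zero]
      refine squeeze_zero (fun _ => abs_nonneg _) (fun n => ?_) hL1
      obtain ⟨z1, z2⟩ := (m n).dens_T_zero (hm n) hj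
      have e : ∫ x, (m n).T x j * (χ x / V) =
          -∫ x, ((m n).T x j * (m n).dens x - (m n).T x j * (χ x / V)) := by
        rw [integral_sub z1 (hTnχ n), z2]; ring
      simp only [Function.comp_def]
      rw [e, abs_neg]
      refine abs_integral_le_integral_abs.trans (integral_mono (z1.sub (hTnχ n)).abs
        (((m n).dens_integrable hN0).sub (hχi.div_const V)).abs fun x => ?_)
      simp only []
      rw [← mul_sub, abs_mul]
      exact mul_le_of_le_one_left (abs_nonneg _) (hTn1 n x)
    exact tendsto_nhds_unique t1 t2
  have hTE : ∫ x in E, T x = 0 := by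
    have e : ∫ x, T x * (χ x / V) = (∫ x in E, T x) / V := by
      rw [← integral_indicator h.meas, ← integral_div]
      congr 1; funext x
      by_cases hx : x ∈ E <;> simp [hχ, hx, div_eq_mul_inv]
    rw [e] at hT0
    exact (div_eq_zero_iff.1 hT0).resolve_right hV.ne'
  have : IsFiniteMeasure (volume.restrict E) := ⟨by
    rw [Measure.restrict_apply_univ]; exact h.fin.lt_top⟩
  have hTi : IntegrableOn T E :=
    Integrable.of_bound hTm.aestronglyMeasurable 1 (ae_of_all _ hT1)
  have hbE : ∀ᵐ x ∂(volume.restrict E), T x - c * x j = b := (ae_restrict_iff' h.meas).2 hb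
  have hxeq : (fun x : Euc N => x j) =ᵐ[volume.restrict E] fun x => (1/c) * (T x - b) := by
    filter_upwards [hbE] with x hx
    rw [← hx]; field_simp; ring
  have hxi : IntegrableOn (fun x : Euc N => x j) E :=
    (((hTi.sub (integrable_const b)).const_mul (1/c))).congr hxeq.symm
  refine ⟨hxi, ?_⟩
  have hmean : ∫ y in E, y j = -(b / c) * V := by
    rw [integral_congr_ae hxeq, integral_const_mul, integral_sub hTi (integrable_const b), hTE]
    simp [Measure.real]
    rw [← hVdef]; ring
  filter_upwards [hb] with x hx hxE
  have e : x j - (∫ y in E, y j) / V = (1/c) * T x := by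
    rw [hmean, ← hx hxE]; field_simp; ring
  rw [e, abs_mul, abs_of_nonneg (by positivity : 0 ≤ 1 / c)]
  exact mul_le_of_le_one_right (by positivity) (hT1 x)

end ExtSet


lemma dv_trace {N : ℕ} {ψ : Euc N → Euc N} (h : ContDiff ℝ 1 ψ) (x : Euc N) :
    dv N ψ x = LinearMap.trace ℝ (Euc N) (fderiv ℝ ψ x : Euc N →ₗ[ℝ] Euc N) := by
  rw [LinearMap.trace_eq_sum_inner _ (EuclideanSpace.basisFun (Fin N) ℝ)]
  unfold dv
  refine Finset.sum_congr rfl fun i _ => ?_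
  have d := (h.differentiable one_ne_zero x).hasFDerivAt
  have d2 : HasFDerivAt (fun y => ψ y i) ((EuclideanSpace.proj i : Euc N →L[ℝ] ℝ).comp (fderiv ℝ ψ x)) x :=
    (EuclideanSpace.proj i : Euc N →L[ℝ] ℝ).hasFDerivAt.comp x d
  rw [d2.fderiv]
  simp [EuclideanSpace.inner_single_left]

lemma dv_conj {N : ℕ} {ψ : Euc N → Euc N} (h : ContDiff ℝ 1 ψ) (A : Euc N ≃ₗᵢ[ℝ] Euc N) (x : Euc N) :
    dv N (fun y => A (ψ (A.symm y))) x = dv N ψ (A.symm x) := by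
  have hC : ContDiff ℝ 1 (fun y => A (ψ (A.symm y))) :=
    A.contDiff.comp (h.comp A.symm.contDiff)
  rw [dv_trace hC, dv_trace h]
  have d := (h.differentiable one_ne_zero (A.symm x)).hasFDerivAt
  have d2 := (A.toContinuousLinearEquiv.hasFDerivAt (x := ψ (A.symm x))).comp x
    (d.comp x (A.symm.toContinuousLinearEquiv.hasFDerivAt (x := x)))
  have d3 : fderiv ℝ (fun y => A (ψ (A.symm y))) x = _ := d2.fderiv
  rw [d3, ← LinearMap.trace_conj' (fderiv ℝ ψ (A.symm x) : Euc N →ₗ[ℝ] Euc N) A.toLinearEquiv]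
  congr 1

lemma tv_rot {N : ℕ} {u : Euc N → ℝ} (hu : MemBV N u) (A : Euc N ≃ₗᵢ[ℝ] Euc N) :
    MemBV N (fun x => u (A x)) ∧ tv N (fun x => u (A x)) ≤ tv N u := by
  have mp : MeasurePreserving A volume volume := A.measurePreserving
  have me : MeasurableEmbedding A := A.toHomeomorph.measurableEmbedding
  refine memBV_of ((mp.integrable_comp_emb me).2 hu.1) fun ψ hψ => ?_
  have adm : Adm N (fun y => A (ψ (A.symm y))) := by
    refine ⟨A.contDiff.comp (hψ.1.comp A.symm.contDiff), ?_, fun x => ?_⟩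
    · have h1 : HasCompactSupport (fun y => ψ (A.symm y)) :=
        hψ.2.1.comp_homeomorph A.symm.toHomeomorph
      exact h1.comp_left (g := A) (map_zero A)
    · rw [A.norm_map]; exact hψ.2.2 _
  have := tv_ge hu adm
  simp_rw [dv_conj hψ.1 A] at this
  rw [← mp.integral_comp me] at this
  simpa using this

namespace ExtSet

variable {N : ℕ} {E : Set (Euc N)}

lemma vol_rot (A : Euc N ≃ₗᵢ[ℝ] Euc N) (E : Set (Euc N)) : volume (A ⁻¹' E) = volume E :=
  A.measurePreserving.measure_preimage_emb A.toHomeomorph.measurableEmbedding E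

lemma rot (h : ExtSet N E) (A : Euc N ≃ₗᵢ[ℝ] Euc N) : ExtSet N (A ⁻¹' E) := by
  have e : ((A ⁻¹' E).indicator fun _ => (1:ℝ)) = fun x => E.indicator (fun _ => (1:ℝ)) (A x) := by
    funext x; by_cases hx : A x ∈ E <;> simp [hx]
  have hr := tv_rot h.bv A
  have hv := vol_rot A E
  refine ⟨A.continuous.measurable h.meas, by rw [hv]; exact h.fin, by rw [hv]; exact h.pos, ?_, ?_⟩
  · rw [e]; exact hr.1
  · rw [e, hv]; exact hr.2.trans h.eq

lemma dir (hN : 2 ≤ N) (h : ExtSet N E) (e : Euc N) (he : ‖e‖ = 1) :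
    IntegrableOn (fun x : Euc N => inner ℝ e x) E ∧
    ∀ᵐ x : Euc N, x ∈ E → |inner ℝ e x - (∫ y in E, inner ℝ e y) / (volume E).toReal| ≤ 1 / cc N E := by
  let j : Fin N := ⟨0, by omega⟩
  let e0 : Euc N := EuclideanSpace.single j 1
  have he0 : ‖e0‖ = ‖e‖ := by rw [he]; simp [e0]
  let A : Euc N ≃ₗᵢ[ℝ] Euc N := (ℝ ∙ (e0 - e))ᗮ.reflection
  have hA : A e0 = e := Submodule.reflection_sub he0
  have hin : ∀ x, inner ℝ e (A x) = x j := by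
    intro x
    rw [← hA, A.inner_map_map]
    simp [e0, EuclideanSpace.inner_single_left]
  have mp : MeasurePreserving A volume volume := A.measurePreserving
  have me : MeasurableEmbedding A := A.toHomeomorph.measurableEmbedding
  obtain ⟨h1, h2⟩ := (h.rot A).first_coord hN j rfl
  have hcc : cc N (A ⁻¹' E) = cc N E := by unfold cc; rw [vol_rot]
  rw [vol_rot, hcc] at h2
  have h3 : IntegrableOn (fun x : Euc N => inner ℝ e x) E := by
    rw [← mp.integrableOn_comp_preimage me]
    simpa [Function.comp_def, hin] using h1
  have h4 : ∫ y in A ⁻¹' E, y j = ∫ y in E, inner ℝ e y := by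
    rw [← mp.setIntegral_preimage_emb me (fun y => inner ℝ e y) E]
    simp only [hin]
  refine ⟨h3, ?_⟩
  rw [h4] at h2
  have mp' : MeasurePreserving A.symm volume volume := A.symm.measurePreserving
  have h5 := mp'.quasiMeasurePreserving.ae h2
  filter_upwards [h5] with x hx hxE
  have h6 := hx (by simpa using hxE)
  rwa [← hin, A.apply_symm_apply] at h6

lemma is_ball (hN : 2 ≤ N) (h : ExtSet N E) : ∃ x₀ : Euc N, ∃ R : ℝ, 0 < R ∧
    E =ᵐ[volume] Metric.ball x₀ R := by
  have hc := h.cc_pos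
  have hV := h.V_pos
  have hNr : (0:ℝ) < N := by exact_mod_cast (by omega : 0 < N)
  have hcoord : ∀ i : Fin N, IntegrableOn (fun x : Euc N => x i) E := fun i => by
    have := (h.dir hN (EuclideanSpace.single i 1) (by simp)).1
    simpa [EuclideanSpace.inner_single_left] using this
  let x₀ : Euc N := WithLp.toLp 2 fun i => (∫ y in E, y i) / (volume E).toReal
  have hx₀ : ∀ e : Euc N, (∫ y in E, inner ℝ e y) / (volume E).toReal = inner ℝ e x₀ := by
    intro e
    simp only [PiLp.inner_apply, RCLike.inner_apply, conj_trivial, x₀]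
    rw [integral_finsetSum _ fun i _ => (hcoord i).mul_const _, Finset.sum_div]
    refine Finset.sum_congr rfl fun i _ => ?_
    rw [integral_mul_const]; ring
  have hdir : ∀ e : Euc N, ∀ᵐ x : Euc N, x ∈ E → |inner ℝ e (x - x₀)| ≤ 1 / cc N E * ‖e‖ := by
    intro e
    by_cases he : e = 0
    · simp [he]
    have hn : 0 < ‖e‖ := norm_pos_iff.2 he
    have := (h.dir hN (‖e‖⁻¹ • e) (by rw [norm_smul, norm_inv, norm_norm, inv_mul_cancel₀ hn.ne'])).2
    filter_upwards [this] with x hx hxE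
    have h1 := hx hxE
    rw [hx₀, ← inner_sub_right, real_inner_smul_left, abs_mul, abs_of_nonneg (inv_nonneg.2 hn.le)] at h1
    rw [inv_mul_eq_div, div_le_iff₀ hn] at h1
    exact h1
  have hall : ∀ᵐ x : Euc N, ∀ n : ℕ, x ∈ E → |inner ℝ (TopologicalSpace.denseSeq (Euc N) n) (x - x₀)| ≤
      1 / cc N E * ‖TopologicalSpace.denseSeq (Euc N) n‖ := ae_all_iff.2 fun n => hdir _
  have hsub : ∀ᵐ x : Euc N, x ∈ E → x ∈ Metric.closedBall x₀ (1 / cc N E) := by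
    filter_upwards [hall] with x hx hxE
    have hcl : ∀ e : Euc N, |inner ℝ e (x - x₀)| ≤ 1 / cc N E * ‖e‖ := by
      intro e
      refine (TopologicalSpace.denseRange_denseSeq (Euc N)).induction_on e ?_ fun n => hx n hxE
      exact isClosed_le (by fun_prop) (by fun_prop)
    have h1 := hcl (x - x₀)
    rw [real_inner_self_eq_norm_sq, abs_of_nonneg (by positivity)] at h1
    rw [Metric.mem_closedBall, dist_eq_norm]
    by_cases h0 : ‖x - x₀‖ = 0
    · rw [h0]; positivity
    · have : 0 < ‖x - x₀‖ := lt_of_le_of_ne (norm_nonneg _) (Ne.symm h0)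
      rw [sq] at h1
      exact le_of_mul_le_mul_right h1 this
  have hR : 0 < 1 / cc N E := by positivity
  refine ⟨x₀, 1 / cc N E, hR, ?_⟩
  have : Nontrivial (Euc N) := by
    have : Nonempty (Fin N) := ⟨⟨0, by omega⟩⟩
    infer_instance
  have hbc : Metric.closedBall x₀ (1 / cc N E) =ᵐ[volume] Metric.ball x₀ (1 / cc N E) :=
    by
    rw [← Metric.ball_union_sphere]
    exact union_ae_eq_left_of_ae_eq_empty (ae_eq_empty.2 (Measure.addHaar_sphere _ _ _))
  refine EventuallyEq.trans ?_ hbc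
  refine ae_eq_of_ae_subset_of_measure_ge hsub ?_ h.meas.nullMeasurableSet
    (measure_closedBall_lt_top.ne)
  have e1 : volume (Metric.closedBall x₀ (1 / cc N E)) = volume E := by
    rw [Measure.addHaar_closedBall _ _ hR.le, ← ENNReal.ofReal_toReal h.fin]
    have : volume (Metric.ball (0 : Euc N) 1) = ENNReal.ofReal (om N) := by
      unfold om; rw [ENNReal.ofReal_toReal measure_ball_lt_top.ne]
    rw [this, ← ENNReal.ofReal_mul (by positivity)]
    congr 1
    have : Module.finrank ℝ (Euc N) = N := by simp
    rw [this, one_div, inv_pow]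
    unfold cc
    rw [← rpow_natCast, ← rpow_mul (div_pos (om_pos N) hV).le, one_div_mul_cancel hNr.ne', rpow_one]
    have := om_pos N
    field_simp
  exact e1.le

end ExtSet


lemma shell_bound {N : ℕ} (hN : 2 ≤ N) (x₀ : Euc N) {R δ : ℝ} (hδ : 0 < δ)
    {ψ : Euc N → Euc N} (hψ : Adm N ψ) :
    ∫ x, (1 - smoothTransition ((‖x - x₀‖ ^ 2 - R ^ 2) / δ)) * dv N ψ x ≤
      N * om N * √(R ^ 2 + δ) ^ (N - 1) := by
  have hS : ContDiff ℝ 1 smoothTransition := smoothTransition.contDiff (n := 1)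
  have hSd : ∀ t, HasDerivAt smoothTransition (deriv smoothTransition t) t := fun t =>
    (hS.differentiable one_ne_zero t).hasDerivAt
  have hS0 : ∀ t, 0 ≤ deriv smoothTransition t := fun t => smoothTransition.monotone.deriv_nonneg
  have hS1 : ∀ t, 1 < t → deriv smoothTransition t = 0 := fun t ht => by
    have : smoothTransition =ᶠ[𝓝 t] fun _ => 1 := by
      filter_upwards [lt_mem_nhds ht] with s hs
      exact smoothTransition.one_of_one_le hs.le
    rw [this.deriv_eq]; simp
  let ρ : ℝ → ℝ := fun r => deriv smoothTransition ((r ^ 2 - R ^ 2) / δ) * (2 * r / δ)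
  have hρd : ∀ r, HasDerivAt (fun r => smoothTransition ((r ^ 2 - R ^ 2) / δ)) (ρ r) r := by
    intro r
    have h1 : HasDerivAt (fun r : ℝ => (r ^ 2 - R ^ 2) / δ) (2 * r / δ) r := by
      have := (((hasDerivAt_id r).pow 2).sub_const (R ^ 2)).div_const δ
      simpa using this
    exact (hSd _).comp r h1
  have hlim : Tendsto (fun r => smoothTransition ((r ^ 2 - R ^ 2) / δ)) atTop (𝓝 1) := by
    refine tendsto_const_nhds.congr' ?_
    filter_upwards [eventually_gt_atTop (√(R^2 + δ))] with r hr
    have hr0 : 0 < r := (Real.sqrt_nonneg _).trans_lt hr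
    have := (Real.sqrt_lt' hr0).1 hr
    rw [smoothTransition.one_of_one_le]
    rw [le_div_iff₀ hδ]; linarith
  have hρ0 : ∀ r ∈ Set.Ioi (0:ℝ), 0 ≤ ρ r := fun r hr => by
    have : 0 < r := hr
    exact mul_nonneg (hS0 _) (by positivity)
  have hρi : IntegrableOn ρ (Set.Ioi 0) :=
    integrableOn_Ioi_deriv_of_nonneg' (fun r _ => hρd r) hρ0 hlim
  have hρint : ∫ r in Set.Ioi (0:ℝ), ρ r = 1 := by
    rw [integral_Ioi_of_hasDerivAt_of_nonneg' (fun r _ => hρd r) hρ0 hlim,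
      smoothTransition.zero_of_nonpos, sub_zero]
    exact div_nonpos_of_nonpos_of_nonneg (by nlinarith [sq_nonneg R]) hδ.le
  have hρle : ∀ r ∈ Set.Ioi (0:ℝ), r ^ (N - 1) * ρ r ≤ √(R ^ 2 + δ) ^ (N - 1) * ρ r := by
    intro r hr
    have hr0 : 0 < r := hr
    by_cases h : r ≤ √(R ^ 2 + δ)
    · exact mul_le_mul_of_nonneg_right (pow_le_pow_left₀ hr0.le h _) (hρ0 r hr)
    · have h2 := (Real.sqrt_lt' hr0).1 (not_le.1 h)
      have : ρ r = 0 := by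
        simp only [ρ]
        rw [hS1 _ (by rw [lt_div_iff₀ hδ]; linarith), zero_mul]
      rw [this]; simp
  have hρc : Continuous ρ := by
    have := hS.continuous_deriv le_rfl
    exact (this.comp (by fun_prop)).mul (by fun_prop)
  have hi2 : IntegrableOn (fun r => r ^ (N - 1) • ρ r) (Set.Ioi 0) := by
    refine Integrable.mono' (hρi.const_mul (√(R ^ 2 + δ) ^ (N - 1)))
      (by fun_prop) ((ae_restrict_iff' measurableSet_Ioi).2 (ae_of_all _ fun r hr => ?_))
    have hr0 : 0 < r := hr
    rw [Real.norm_of_nonneg (smul_nonneg (by positivity) (hρ0 r hr))]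
    exact hρle r hr
  have hfr : Module.finrank ℝ (Euc N) = N := by simp
  have : Nontrivial (Euc N) := by
    have : Nonempty (Fin N) := ⟨⟨0, by omega⟩⟩
    infer_instance
  have hρn : Integrable (fun x : Euc N => ρ ‖x‖) := by
    rw [integrable_fun_norm_addHaar volume (f := ρ), hfr]
    exact hi2
  have hρv : ∫ x : Euc N, ρ ‖x‖ ≤ N * om N * √(R ^ 2 + δ) ^ (N - 1) := by
    rw [integral_fun_norm_addHaar volume ρ, hfr, nsmul_eq_mul, smul_eq_mul, ← mul_assoc]
    refine mul_le_mul_of_nonneg_left ?_ (mul_nonneg (Nat.cast_nonneg _) (om_pos N).le)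
    have := setIntegral_mono_on hi2 (hρi.const_mul (√(R ^ 2 + δ) ^ (N - 1))) measurableSet_Ioi hρle
    rwa [integral_const_mul, hρint, mul_one] at this
  have hgC : ContDiff ℝ 1 (fun x : Euc N => 1 - smoothTransition ((‖x - x₀‖ ^ 2 - R ^ 2) / δ)) := by
    refine contDiff_const.sub (hS.comp ?_)
    exact (((contDiff_id.sub contDiff_const).norm_sq ℝ).sub contDiff_const).div_const δ
  rw [dv_ibp hψ.1 hψ.2.1 hgC]
  refine (neg_le_abs _).trans (abs_integral_le_integral_abs.trans ?_)
  have hb : ∀ x, |fderiv ℝ (fun x : Euc N => 1 - smoothTransition ((‖x - x₀‖ ^ 2 - R ^ 2) / δ)) x (ψ x)|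
      ≤ ρ ‖x - x₀‖ := by
    intro x
    have d1 : HasFDerivAt (fun x : Euc N => ‖x - x₀‖ ^ 2)
        (2 • (innerSL ℝ (x - x₀)).comp (ContinuousLinearMap.id ℝ (Euc N))) x :=
      ((hasFDerivAt_id x).sub_const x₀).norm_sq
    have d2 : HasFDerivAt (fun x : Euc N => (‖x - x₀‖ ^ 2 - R ^ 2) / δ)
        (δ⁻¹ • (2 • (innerSL ℝ (x - x₀)).comp (ContinuousLinearMap.id ℝ (Euc N)))) x := by
      have := (d1.sub_const (R ^ 2)).const_mul δ⁻¹
      simpa only [div_eq_inv_mul] using this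
    have d3 := ((hSd ((‖x - x₀‖ ^ 2 - R ^ 2) / δ)).comp_hasFDerivAt x d2).const_sub 1
    have d4 : fderiv ℝ (fun x : Euc N => 1 - smoothTransition ((‖x - x₀‖ ^ 2 - R ^ 2) / δ)) x = _ :=
      d3.fderiv
    rw [d4]
    have h0 := hS0 ((‖x - x₀‖ ^ 2 - R ^ 2) / δ)
    have h1 : |inner ℝ (x - x₀) (ψ x)| ≤ ‖x - x₀‖ :=
      (abs_real_inner_le_norm _ _).trans (mul_le_of_le_one_right (norm_nonneg _) (hψ.2.2 x))
    simp [ρ, abs_mul, abs_of_nonneg h0]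
    refine mul_le_mul_of_nonneg_left ?_ h0
    rw [abs_of_pos hδ, inv_mul_eq_div]
    rw [inner_sub_left] at h1
    gcongr
  have hb2 : Integrable (fun x => ρ ‖x - x₀‖) := hρn.comp_sub_right x₀
  have hI : Integrable (fun x => fderiv ℝ (fun x : Euc N => 1 - smoothTransition ((‖x - x₀‖ ^ 2 - R ^ 2) / δ)) x (ψ x)) :=
    hb2.mono' ((hgC.continuous_fderiv one_ne_zero).clm_apply hψ.1.continuous).aestronglyMeasurable
      (ae_of_all _ hb)
  refine (integral_mono hI.abs hb2 hb).trans ?_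
  rw [integral_sub_right_eq_self (fun x : Euc N => ρ ‖x‖) x₀]
  exact hρv

lemma cball_bv {N : ℕ} (hN : 2 ≤ N) (x₀ : Euc N) {R : ℝ} (hR : 0 < R) :
    MemBV N ((Metric.closedBall x₀ R).indicator fun _ => 1) ∧
    tv N ((Metric.closedBall x₀ R).indicator fun _ => 1) ≤ N * om N * R ^ (N - 1) := by
  have hInteg : Integrable ((Metric.closedBall x₀ R).indicator fun _ => (1:ℝ)) := by
    rw [integrable_indicator_iff Metric.isClosed_closedBall.measurableSet]
    exact integrableOn_const measure_closedBall_lt_top.ne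
  refine memBV_of hInteg fun ψ hψ => ?_
  have hdl : Tendsto (fun n : ℕ => 1 / ((n:ℝ) + 1)) atTop (𝓝 0) := tendsto_one_div_add_atTop_nhds_zero_nat
  have hpos : ∀ n : ℕ, (0:ℝ) < 1 / ((n:ℝ) + 1) := fun n => by positivity
  have hc := dv_continuous hψ.1
  have hlim : Tendsto (fun n : ℕ => ∫ x, (1 - smoothTransition ((‖x - x₀‖ ^ 2 - R ^ 2) / (1 / ((n:ℝ) + 1)))) * dv N ψ x)
      atTop (𝓝 (∫ x, (Metric.closedBall x₀ R).indicator (fun _ => 1) x * dv N ψ x)) := by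
    refine tendsto_integral_of_dominated_convergence (fun x => |dv N ψ x|) (fun n => ?_) ?_ (fun n => ?_) ?_
    · refine (Continuous.mul (continuous_const.sub (smoothTransition.continuous.comp ?_)) hc).aestronglyMeasurable
      fun_prop
    · exact (hc.integrable_of_hasCompactSupport (dv_hcs hψ.2.1)).abs
    · refine ae_of_all _ fun x => ?_
      rw [norm_mul, Real.norm_eq_abs (dv N ψ x)]
      refine mul_le_of_le_one_left (abs_nonneg _) ?_
      rw [Real.norm_eq_abs, abs_le]
      constructor <;> linarith [smoothTransition.nonneg ((‖x - x₀‖ ^ 2 - R ^ 2) / (1 / ((n:ℝ) + 1))),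
        smoothTransition.le_one ((‖x - x₀‖ ^ 2 - R ^ 2) / (1 / ((n:ℝ) + 1)))]
    · refine ae_of_all _ fun x => Tendsto.mul_const _ ?_
      by_cases hx : ‖x - x₀‖ ≤ R
      · have : x ∈ Metric.closedBall x₀ R := by rwa [Metric.mem_closedBall, dist_eq_norm]
        rw [Set.indicator_of_mem this]
        refine tendsto_const_nhds.congr fun n => ?_
        rw [smoothTransition.zero_of_nonpos, sub_zero]
        refine div_nonpos_of_nonpos_of_nonneg ?_ (hpos n).le
        have := pow_le_pow_left₀ (norm_nonneg _) hx 2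
        linarith
      · have : x ∉ Metric.closedBall x₀ R := by rwa [Metric.mem_closedBall, dist_eq_norm]
        rw [Set.indicator_of_notMem this]
        refine tendsto_const_nhds.congr' ?_
        have h1 := pow_lt_pow_left₀ (not_le.1 hx) hR.le two_ne_zero
        filter_upwards [hdl.eventually (gt_mem_nhds (sub_pos.2 h1))] with n hn
        rw [smoothTransition.one_of_one_le, sub_self]
        rw [le_div_iff₀ (hpos n)]; linarith
  have hlim2 : Tendsto (fun n : ℕ => N * om N * √(R ^ 2 + 1 / ((n:ℝ) + 1)) ^ (N - 1)) atTop
      (𝓝 (N * om N * √(R ^ 2 + 0) ^ (N - 1))) :=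
    (((hdl.const_add (R ^ 2)).sqrt).pow (N - 1)).const_mul _
  rw [add_zero, Real.sqrt_sq hR.le] at hlim2
  exact le_of_tendsto_of_tendsto' hlim hlim2 fun n => shell_bound hN x₀ (hpos n) hψ

lemma tv_scale {N : ℕ} {u : Euc N → ℝ} (hu : MemBV N u) (a : ℝ) :
    MemBV N (fun x => a * u x) ∧ tv N (fun x => a * u x) ≤ |a| * tv N u := by
  refine memBV_of (hu.1.const_mul a) fun ψ hψ => ?_
  simp_rw [mul_assoc]
  rw [integral_const_mul]
  have h1 := tv_ge hu hψ
  have h2 := tv_ge hu (adm_neg hψ)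
  have h3 : |∫ x, u x * dv N ψ x| ≤ tv N u := by
    have e : ∀ x, dv N (fun x => -ψ x) x = -dv N ψ x := fun x => by
      simp [dv]
    simp_rw [e, mul_neg] at h2
    rw [integral_neg] at h2
    exact abs_le.2 ⟨by linarith, h1⟩
  calc a * ∫ x, u x * dv N ψ x ≤ |a * ∫ x, u x * dv N ψ x| := le_abs_self _
    _ = |a| * |∫ x, u x * dv N ψ x| := abs_mul _ _
    _ ≤ _ := mul_le_mul_of_nonneg_left h3 (abs_nonneg a)


lemma nrmq_eq {N : ℕ} {u : Euc N → ℝ} {q : ℝ} (hq : 0 < q) (hu : Integrable u) :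
    nrmq N q u ^ q = ∫ x, |u x| ^ q := by
  unfold nrmq
  rw [toReal_eLpNorm hu.1, lpNorm_eq_integral_norm_rpow_toReal (by simpa using hq) ENNReal.ofReal_ne_top hu.1,
    ENNReal.toReal_ofReal hq.le, ← rpow_mul (integral_nonneg fun x => by positivity),
    inv_mul_cancel₀ hq.ne', rpow_one]
  simp only [Real.norm_eq_abs]

lemma nrm1_eq {N : ℕ} {u : Euc N → ℝ} (hu : Integrable u) : nrm1 N u = ∫ x, |u x| := by
  have h := nrmq_eq one_pos hu
  rw [rpow_one] at h
  simp only [rpow_one] at h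
  rw [← h]
  unfold nrm1 nrmq
  simp

lemma holder_bound {N : ℕ} {u : Euc N → ℝ} {p q θ : ℝ} (hp : 0 < p) (hq : 0 < q) (h0 : 0 ≤ θ)
    (h1 : θ ≤ 1) (he : q = (1 - θ) + θ * p)
    (hu : Integrable u) (hi : Integrable fun x => |u x| ^ p) :
    ∫ x, |u x| ^ q ≤ (∫ x, |u x|) ^ (1 - θ) * (∫ x, |u x| ^ p) ^ θ := by
  by_cases hz : u =ᵐ[volume] 0
  · have : ∫ x, |u x| ^ q = 0 := by
      rw [integral_eq_zero_of_ae]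
      filter_upwards [hz] with x hx
      simp [hx, hq.ne']
    rw [this]
    exact mul_nonneg (rpow_nonneg (integral_nonneg fun x => by positivity) _)
      (rpow_nonneg (integral_nonneg fun x => by positivity) _)
  have hP0 : ∀ r : ℝ, 0 < r → Integrable (fun x => |u x| ^ r) → 0 < ∫ x, |u x| ^ r := by
    intro r hr hri
    refine lt_of_le_of_ne (integral_nonneg fun x => by positivity) fun h => hz ?_
    have := (integral_eq_zero_iff_of_nonneg (fun x => by positivity) hri).1 h.symm
    filter_upwards [this] with x hx
    simpa [rpow_eq_zero_iff_of_nonneg, hr.ne'] using hx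
  have ha : 0 < ∫ x, |u x| := by
    have := hP0 1 one_pos (by simpa using hu.abs)
    simpa using this
  have hP := hP0 p hp hi
  set a := ∫ x, |u x|
  set P := ∫ x, |u x| ^ p
  have hpt : ∀ x, |u x| ^ q ≤ (a ^ (1 - θ) * P ^ θ) * ((1 - θ) * (|u x| / a) + θ * (|u x| ^ p / P)) := by
    intro x
    have hx := abs_nonneg (u x)
    have h := Real.geom_mean_le_arith_mean2_weighted (sub_nonneg.2 h1) h0 (div_nonneg hx ha.le)
      (div_nonneg (rpow_nonneg hx p) hP.le) (by ring)
    have e : |u x| ^ q = (a ^ (1 - θ) * P ^ θ) * ((|u x| / a) ^ (1 - θ) * (|u x| ^ p / P) ^ θ) := by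
      rw [Real.div_rpow hx ha.le, Real.div_rpow (rpow_nonneg hx p) hP.le, ← rpow_mul hx, he,
        rpow_add_of_nonneg hx (sub_nonneg.2 h1) (by positivity), mul_comm p θ]
      have := rpow_pos_of_pos ha (1 - θ)
      have := rpow_pos_of_pos hP θ
      field_simp
    rw [e]
    exact mul_le_mul_of_nonneg_left h (by positivity)
  have hI : Integrable (fun x => (a ^ (1 - θ) * P ^ θ) * ((1 - θ) * (|u x| / a) + θ * (|u x| ^ p / P))) :=
    (((hu.abs.div_const a).const_mul _).add ((hi.div_const P).const_mul _)).const_mul _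
  have h := integral_mono_of_nonneg (ae_of_all _ fun x => by positivity) hI (ae_of_all _ hpt)
  refine h.trans (le_of_eq ?_)
  rw [integral_const_mul, integral_add ((hu.abs.div_const a).const_mul _) ((hi.div_const P).const_mul _),
    integral_const_mul, integral_const_mul, integral_div, integral_div, div_self ha.ne', div_self hP.ne']
  ring

section Final

variable {N : ℕ} {q : ℝ}

/-- The sharp constant. -/
def KK (N : ℕ) (q : ℝ) : ℝ := (C0 N ^ ((q - 1) * (N:ℝ)))⁻¹

lemma KK_pos (hN : 2 ≤ N) : 0 < KK N q := inv_pos.2 (rpow_pos_of_pos (C0_pos hN) _)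

lemma theta_facts (hN : 2 ≤ N) (hq1 : 1 < q) (hq2 : q ≤ (N : ℝ) / ((N : ℝ) - 1)) :
    0 < (q - 1) * ((N:ℝ) - 1) ∧ (q - 1) * ((N:ℝ) - 1) ≤ 1 ∧
    q = (1 - (q - 1) * ((N:ℝ) - 1)) + (q - 1) * ((N:ℝ) - 1) * pp N ∧
    q - (q - 1) * N = 1 - (q - 1) * ((N:ℝ) - 1) ∧
    (q - 1) * (N:ℝ) = (q - 1) * ((N:ℝ) - 1) * pp N := by
  have h2 : (2:ℝ) ≤ N := by exact_mod_cast hN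
  have h3 : 0 < (N:ℝ) - 1 := by linarith
  have e : (q - 1) * (N:ℝ) = (q - 1) * ((N:ℝ) - 1) * pp N := by
    unfold pp; field_simp
  rw [le_div_iff₀ h3] at hq2
  refine ⟨mul_pos (by linarith) h3, by linarith, ?_, by ring, e⟩
  rw [← e]; ring

lemma P_pow (hN : 2 ≤ N) (hq1 : 1 < q) (hq2 : q ≤ (N : ℝ) / ((N : ℝ) - 1)) {P : ℝ} (hP : 0 ≤ P) :
    P ^ ((q - 1) * ((N:ℝ) - 1)) = (P ^ (1 / pp N)) ^ ((q - 1) * (N:ℝ)) := by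
  have hp := pp_gt hN
  obtain ⟨-, -, -, -, e⟩ := theta_facts hN hq1 hq2
  rw [← rpow_mul hP, e]
  congr 1
  field_simp

lemma ratio_le (hN : 2 ≤ N) (hq1 : 1 < q) (hq2 : q ≤ (N : ℝ) / ((N : ℝ) - 1)) {u : Euc N → ℝ}
    (hu : MemBV N u) : ratioQ N q u ≤ KK N q := by
  have hp := pp_gt hN
  obtain ⟨t0, t1, t2, t3, t4⟩ := theta_facts hN hq1 hq2
  obtain ⟨s1, s2⟩ := sobolev hN hu
  have hH := holder_bound (by linarith) (by linarith) t0.le t1 t2 hu.1 s1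
  have hP0 : 0 ≤ ∫ x, |u x| ^ pp N := integral_nonneg fun x => by positivity
  rw [P_pow hN hq1 hq2 hP0] at hH
  have ha0 : 0 ≤ ∫ x, |u x| := integral_nonneg fun x => by positivity
  have htv := tv_nonneg hu
  have hC := C0_pos hN
  have hs0 : 0 ≤ (q - 1) * (N:ℝ) := mul_nonneg (by linarith) (Nat.cast_nonneg _)
  unfold ratioQ
  rw [nrmq_eq (by linarith) hu.1, nrm1_eq hu.1, t3]
  refine div_le_of_le_mul₀ (by positivity) (KK_pos hN).le ?_
  refine hH.trans ?_
  have h1 : (∫ x, |u x| ^ pp N) ^ (1 / pp N) ≤ tv N u / C0 N := by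
    rw [le_div_iff₀ hC]; linarith
  have h2 := rpow_le_rpow (rpow_nonneg hP0 _) h1 hs0
  rw [Real.div_rpow htv hC.le] at h2
  calc _ ≤ (∫ x, |u x|) ^ (1 - (q - 1) * ((N:ℝ) - 1)) * (tv N u ^ ((q - 1) * (N:ℝ)) / C0 N ^ ((q - 1) * (N:ℝ))) :=
        mul_le_mul_of_nonneg_left h2 (rpow_nonneg ha0 _)
    _ = _ := by unfold KK; ring

lemma ratio_eq (hN : 2 ≤ N) (hq1 : 1 < q) (hq2 : q ≤ (N : ℝ) / ((N : ℝ) - 1)) {u : Euc N → ℝ}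
    (hu : MemBV N u) (h : ratioQ N q u = KK N q) : ¬ u =ᵐ[volume] 0 ∧
    tv N u = C0 N * (∫ x, |u x| ^ pp N) ^ (1 / pp N) := by
  have hp := pp_gt hN
  obtain ⟨t0, t1, t2, t3, t4⟩ := theta_facts hN hq1 hq2
  obtain ⟨s1, s2⟩ := sobolev hN hu
  have hH := holder_bound (by linarith) (by linarith) t0.le t1 t2 hu.1 s1
  have hP0 : 0 ≤ ∫ x, |u x| ^ pp N := integral_nonneg fun x => by positivity
  rw [P_pow hN hq1 hq2 hP0] at hH
  have ha0 : 0 ≤ ∫ x, |u x| := integral_nonneg fun x => by positivity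
  have htv := tv_nonneg hu
  have hC := C0_pos hN
  have hs0 : 0 < (q - 1) * (N:ℝ) := mul_pos (by linarith) (by exact_mod_cast (by omega : 0 < N))
  have hK := KK_pos (q := q) hN
  unfold ratioQ at h
  rw [nrmq_eq (by linarith) hu.1, nrm1_eq hu.1, t3] at h
  refine ⟨fun hz => ?_, le_antisymm ?_ s2⟩
  · have : ∫ x, |u x| ^ q = 0 := by
      rw [integral_eq_zero_of_ae]
      filter_upwards [hz] with x hx
      simp [hx, (by linarith : q ≠ 0)]
    rw [this, zero_div] at h
    exact hK.ne h
  · set a := ∫ x, |u x|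
    set A := a ^ (1 - (q - 1) * ((N:ℝ) - 1))
    set D := tv N u ^ ((q - 1) * (N:ℝ))
    have hA0 : 0 ≤ A := rpow_nonneg ha0 _
    have hAD : A * D ≠ 0 := fun h0 => by
      rw [h0, div_zero] at h; exact hK.ne h
    have hA : 0 < A := lt_of_le_of_ne hA0 (Ne.symm (left_ne_zero_of_mul hAD))
    rw [div_eq_iff hAD] at h
    rw [h] at hH
    have h1 : KK N q * D ≤ ((∫ x, |u x| ^ pp N) ^ (1 / pp N)) ^ ((q - 1) * (N:ℝ)) := by
      refine le_of_mul_le_mul_left ?_ hA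
      calc A * (KK N q * D) = KK N q * (A * D) := by ring
        _ ≤ _ := hH
    have e : KK N q * D = (tv N u / C0 N) ^ ((q - 1) * (N:ℝ)) := by
      rw [Real.div_rpow htv hC.le]; simp only [KK, D]; ring
    rw [e, Real.rpow_le_rpow_iff (by positivity) (rpow_nonneg hP0 _) hs0, div_le_iff₀ hC] at h1
    linarith

lemma indicator_pow {E : Set (Euc N)} (hE : MeasurableSet E) (lam : ℝ) {r : ℝ} (hr : 0 < r) :
    ∫ x, |E.indicator (fun _ => lam) x| ^ r = |lam| ^ r * (volume E).toReal := by
  have : (fun x => |E.indicator (fun _ => lam) x| ^ r) = E.indicator fun _ => |lam| ^ r := by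
    funext x; by_cases hx : x ∈ E <;> simp [hx, hr.ne']
  rw [this, integral_indicator hE]
  simp [Measure.real, mul_comm]

lemma vol_ball (x₀ : Euc N) {R : ℝ} (hR : 0 < R) :
    (volume (Metric.ball x₀ R)).toReal = om N * R ^ N := by
  rw [Measure.addHaar_ball_of_pos _ _ hR, ENNReal.toReal_mul, ENNReal.toReal_ofReal (by positivity)]
  simp [om, mul_comm]

lemma ball_ratio (hN : 2 ≤ N) (hq1 : 1 < q) (hq2 : q ≤ (N : ℝ) / ((N : ℝ) - 1)) {lam : ℝ}
    (hl : lam ≠ 0) (x₀ : Euc N) {R : ℝ} (hR : 0 < R) {u : Euc N → ℝ}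
    (h : u =ᵐ[volume] (Metric.ball x₀ R).indicator fun _ => lam) :
    MemBV N u ∧ ratioQ N q u = KK N q := by
  have hp := pp_gt hN
  have hN1 : (2:ℝ) ≤ N := by exact_mod_cast hN
  have : Nontrivial (Euc N) := by
    have : Nonempty (Fin N) := ⟨⟨0, by omega⟩⟩
    infer_instance
  have hbc : Metric.closedBall x₀ R =ᵐ[volume] Metric.ball x₀ R := by
    rw [← Metric.ball_union_sphere]
    exact union_ae_eq_left_of_ae_eq_empty (ae_eq_empty.2 (Measure.addHaar_sphere _ _ _))
  have e1 : (fun x => lam * (Metric.closedBall x₀ R).indicator (fun _ => (1:ℝ)) x) =ᵐ[volume] u := by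
    have h2 : (Metric.closedBall x₀ R).indicator (fun _ => (1:ℝ)) =ᵐ[volume]
      (Metric.ball x₀ R).indicator (fun _ => (1:ℝ)) := indicator_ae_eq_of_ae_eq_set hbc
    filter_upwards [h, h2] with x hx hx2
    rw [hx, hx2]
    by_cases hm : x ∈ Metric.ball x₀ R
    · simp only [Set.indicator_of_mem hm, mul_one]
    · simp only [Set.indicator_of_notMem hm, mul_zero]
  obtain ⟨b1, b2⟩ := cball_bv hN x₀ hR
  obtain ⟨c1, c2⟩ := tv_scale b1 lam
  have hu : MemBV N u := memBV_congr e1 c1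
  refine ⟨hu, le_antisymm (ratio_le hN hq1 hq2 hu) ?_⟩
  rw [tv_congr e1] at c2
  have hl0 : 0 < |lam| := abs_pos.2 hl
  have hom := om_pos N
  have hC := C0_pos hN
  set V := om N * R ^ N with hVdef
  have hV : 0 < V := by positivity
  have hpow : ∀ r : ℝ, 0 < r → ∫ x, |u x| ^ r = |lam| ^ r * V := by
    intro r hr
    rw [hVdef, ← vol_ball x₀ hR, ← indicator_pow measurableSet_ball lam hr]
    refine integral_congr_ae ?_
    filter_upwards [h] with x hx
    rw [hx]
  have ha : ∫ x, |u x| = |lam| * V := by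
    have := hpow 1 one_pos
    simpa using this
  obtain ⟨t0, t1, t2, t3, t4⟩ := theta_facts hN hq1 hq2
  have hs0 : 0 < (q - 1) * (N:ℝ) := mul_pos (by linarith) (by linarith)
  have hVp : N * om N * R ^ (N - 1) = C0 N * V ^ (1 / pp N) := by
    have hn : (R ^ N) ^ (1 - 1 / (N:ℝ)) = R ^ (N - 1) := by
      rw [← rpow_natCast, ← rpow_mul hR.le, ← rpow_natCast]
      congr 1
      rw [Nat.cast_sub (by omega)]
      field_simp
      simp
    rw [pp_inv hN, hVdef, mul_rpow hom.le (by positivity), hn]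
    unfold C0
    have : om N ^ ((1:ℝ) / N) * om N ^ (1 - 1 / (N:ℝ)) = om N := by
      rw [← rpow_add hom]; simp
    calc N * om N * R ^ (N - 1) = N * (om N ^ ((1:ℝ) / N) * om N ^ (1 - 1 / (N:ℝ))) * R ^ (N - 1) := by
          rw [this]
      _ = _ := by ring
  have htv : tv N u ≤ C0 N * (|lam| * V ^ (1 / pp N)) := by
    calc tv N u ≤ |lam| * (N * om N * R ^ (N - 1)) :=
          c2.trans (mul_le_mul_of_nonneg_left b2 hl0.le)
      _ = _ := by rw [hVp]; ring
  have htv0 : 0 < tv N u := by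
    refine lt_of_lt_of_le ?_ (sobolev hN hu).2
    rw [hpow _ (by linarith)]
    positivity
  unfold ratioQ
  rw [nrmq_eq (by linarith) hu.1, nrm1_eq hu.1, t3, ha, hpow q (by linarith)]
  have hd : 0 < (|lam| * V) ^ (1 - (q - 1) * ((N:ℝ) - 1)) := by positivity
  rw [le_div_iff₀ (mul_pos hd (rpow_pos_of_pos htv0 _))]
  have h1 : KK N q * tv N u ^ ((q - 1) * (N:ℝ)) ≤ (|lam| * V ^ (1 / pp N)) ^ ((q - 1) * (N:ℝ)) := by
    have := rpow_le_rpow htv0.le htv hs0.le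
    rw [mul_rpow hC.le (by positivity)] at this
    unfold KK
    rw [inv_mul_le_iff₀ (by positivity)]
    exact this
  calc KK N q * ((|lam| * V) ^ (1 - (q - 1) * ((N:ℝ) - 1)) * tv N u ^ ((q - 1) * (N:ℝ)))
      = (|lam| * V) ^ (1 - (q - 1) * ((N:ℝ) - 1)) * (KK N q * tv N u ^ ((q - 1) * (N:ℝ))) := by ring
    _ ≤ (|lam| * V) ^ (1 - (q - 1) * ((N:ℝ) - 1)) * (|lam| * V ^ (1 / pp N)) ^ ((q - 1) * (N:ℝ)) :=
        mul_le_mul_of_nonneg_left h1 hd.le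
    _ = |lam| ^ q * V := by
        rw [mul_rpow hl0.le hV.le, mul_rpow hl0.le (by positivity), ← P_pow hN hq1 hq2 hV.le]
        have e1 : |lam| ^ (1 - (q - 1) * ((N:ℝ) - 1)) * |lam| ^ ((q - 1) * (N:ℝ)) = |lam| ^ q := by
          rw [← rpow_add hl0]; congr 1; ring
        have e2 : V ^ (1 - (q - 1) * ((N:ℝ) - 1)) * V ^ ((q - 1) * ((N:ℝ) - 1)) = V := by
          rw [← rpow_add hV]; simp
        rw [← e1]
        nth_rewrite 3 [← e2]
        ring

lemma EqSup_eq (hN : 2 ≤ N) (hq1 : 1 < q) (hq2 : q ≤ (N : ℝ) / ((N : ℝ) - 1)) :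
    EqSup N q = KK N q := by
  obtain ⟨h1, h2⟩ := ball_ratio hN hq1 hq2 one_ne_zero (0 : Euc N) one_pos
    (EventuallyEq.refl _ ((Metric.ball (0 : Euc N) 1).indicator fun _ => (1:ℝ)))
  refine IsGreatest.csSup_eq ⟨⟨_, h1, fun h0 => ?_, h2.symm⟩, ?_⟩
  · have := congrFun h0 0
    simp at this
  · rintro r ⟨v, hv, -, rfl⟩
    exact ratio_le hN hq1 hq2 hv

lemma eq_ball (hN : 2 ≤ N) (hq1 : 1 < q) (hq2 : q ≤ (N : ℝ) / ((N : ℝ) - 1)) {u : Euc N → ℝ}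
    (hu : MemBV N u) (h : ratioQ N q u = KK N q) :
    ∃ lam : ℝ, lam ≠ 0 ∧ ∃ x₀ : Euc N, ∃ R : ℝ, 0 < R ∧
        u =ᵐ[volume] (Metric.ball x₀ R).indicator (fun _ => lam) := by
  have hp := pp_gt hN
  obtain ⟨hz, ht⟩ := ratio_eq hN hq1 hq2 hu h
  obtain ⟨c, hc⟩ := eq_two_level hN hu ht
  have hc0 : c ≠ 0 := by
    rintro rfl
    refine hz (hc.mono fun x hx => ?_)
    by_contra h0
    exact h0 (hx h0)
  let v := hu.1.1.mk u
  have hv : u =ᵐ[volume] v := hu.1.1.ae_eq_mk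
  have hvm : Measurable v := hu.1.1.stronglyMeasurable_mk.measurable
  let E : Set (Euc N) := {x | v x ≠ 0}
  have hE : MeasurableSet E := hvm (measurableSet_singleton (0:ℝ)).compl
  have hue : u =ᵐ[volume] E.indicator fun _ => c := by
    filter_upwards [hv, hc] with x hx hx2
    by_cases h0 : v x = 0
    · have : x ∉ E := fun hxE => hxE h0
      rw [Set.indicator_of_notMem this, hx, h0]
    · have : x ∈ E := h0
      rw [Set.indicator_of_mem this]
      exact hx2 (by rw [hx]; exact h0)
  have hχ : (fun x => c⁻¹ * u x) =ᵐ[volume] E.indicator fun _ => (1:ℝ) := by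
    filter_upwards [hue] with x hx
    rw [hx]
    by_cases hm : x ∈ E <;> simp [hm, hc0]
  obtain ⟨d1, d2⟩ := tv_scale hu c⁻¹
  have hbv := memBV_congr hχ d1
  rw [tv_congr hχ] at d2
  have hfin : volume E ≠ ⊤ := by
    have := (integrable_indicator_iff hE).1 hbv.1
    have h2 := (integrableOn_const_iff (C := (1:ℝ)) (by simp)).1 this
    exact (by simpa using h2 : volume E < ⊤).ne
  have hpos : volume E ≠ 0 := by
    intro h0
    refine hz (hue.trans ?_)
    have : ∀ᵐ x : Euc N, x ∉ E := measure_eq_zero_iff_ae_notMem.1 h0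
    filter_upwards [this] with x hx
    simp [hx]
  have hext : ExtSet N E := by
    refine ⟨hE, hfin, hpos, hbv, d2.trans (le_of_eq ?_)⟩
    have e : ∫ x, |u x| ^ pp N = |c| ^ pp N * (volume E).toReal := by
      rw [← indicator_pow hE c (by linarith : 0 < pp N)]
      refine integral_congr_ae ?_
      filter_upwards [hue] with x hx
      rw [hx]
    rw [ht, e, mul_rpow (by positivity) ENNReal.toReal_nonneg, ← rpow_mul (abs_nonneg c),
      mul_one_div_cancel (by linarith), rpow_one, abs_inv]
    have : 0 < |c| := abs_pos.2 hc0
    field_simp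
  obtain ⟨x₀, R, hR, hEB⟩ := hext.is_ball hN
  refine ⟨c, hc0, x₀, R, hR, hue.trans ?_⟩
  exact indicator_ae_eq_of_ae_eq_set hEB

end Final


/-- maximizers of `E_q` are exactly the (a.e.) nonzero multiples of
characteristic functions of balls. -/
theorem Eq_maximizer_characterization (N : ℕ) (hN : 2 ≤ N) (q : ℝ) (hq1 : 1 < q)
    (hq2 : q ≤ (N : ℝ) / ((N : ℝ) - 1)) (u : Euc N → ℝ) (hu : MemBV N u)
    (hne : u ≠ 0) :
    ratioQ N q u = EqSup N q ↔
      ∃ lam : ℝ, lam ≠ 0 ∧ ∃ x₀ : Euc N, ∃ R : ℝ, 0 < R ∧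
        u =ᵐ[volume] (Metric.ball x₀ R).indicator (fun _ => lam) := by
  rw [EqSup_eq hN hq1 hq2]
  constructor
  · intro h
    exact eq_ball hN hq1 hq2 hu h
  · rintro ⟨lam, hl, x₀, R, hR, h⟩
    exact (ball_ratio hN hq1 hq2 hl x₀ hR h).2
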